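/- arXiv:2006.15200 — 4 statements merged into one kernel-verified Lean document; each statement's English description precedes it below -/
import Mathlib

section
/- Fix δ ∈ (0,1). For ε > 0, let d(ε) denote the lower density, relative to the set of all primes, of the set of primes p such that p−1 has no divisor in the interval [p^{δ−ε}, p^{δ+ε}]. Then d(ε) → 1 as ε → 0⁺. -/
section Aux

open Finset

lemma count_cong (d M l : ℕ) (hl : 1 ≤ l) (h : Nat.Coprime l d) :
    |((#{m ∈ Icc 1 M | l ∣ d * m + 1} : ℕ) : ℝ) - (M : ℝ) / l| ≤ 1 := by
  obtain ⟨v, hv⟩ : ∃ v : ℕ, l ∣ d * v + 1 := by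
    refine ⟨(l - 1) * d ^ (l.totient - 1), ?_⟩
    have h0 := Nat.ModEq.pow_totient h.symm
    have h1 : d * ((l - 1) * d ^ (l.totient - 1)) = (l - 1) * d ^ l.totient := by
      have : l.totient = (l.totient - 1) + 1 := by
        have := Nat.totient_pos.2 hl
        omega
      conv_rhs => rw [this, pow_succ]
      ring
    rw [h1]
    have h2 := (h0.mul_left (l - 1)).add_right 1
    rw [mul_one, Nat.sub_add_cancel hl] at h2
    exact (Nat.modEq_zero_iff_dvd.1 (h2.trans (by simp [Nat.ModEq])))
  have hset : {m ∈ Icc 1 M | l ∣ d * m + 1} = {m ∈ Ioc 0 M | m ≡ v [MOD l]} := by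
    ext m
    simp only [mem_filter, mem_Icc, mem_Ioc]
    refine and_congr (by omega) ?_
    constructor
    · intro hm
      have : d * m + 1 ≡ d * v + 1 [MOD l] :=
        (Nat.modEq_zero_iff_dvd.2 hm).trans (Nat.modEq_zero_iff_dvd.2 hv).symm
      exact Nat.ModEq.cancel_left_of_coprime h (Nat.ModEq.add_right_cancel' 1 this)
    · intro hm
      exact Nat.modEq_zero_iff_dvd.1 (((hm.mul_left d).add_right 1).trans (Nat.modEq_zero_iff_dvd.2 hv))
  rw [hset]
  have hc := Nat.Ioc_filter_modEq_card 0 M (r := l) hl v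
  have hl' : (0 : ℚ) < l := by exact_mod_cast hl
  have key : |((#{m ∈ Ioc 0 M | m ≡ v [MOD l]} : ℕ) : ℚ) - (M : ℚ) / l| ≤ 1 := by
    have hc' : ((#{m ∈ Ioc 0 M | m ≡ v [MOD l]} : ℕ) : ℚ) =
        ((max (⌊((M:ℚ) - v) / l⌋ - ⌊(((0:ℕ):ℚ) - v) / l⌋) 0 : ℤ) : ℚ) := by
      rw [← hc]; simp
    have hm : 0 ≤ ⌊((M:ℚ) - v) / l⌋ - ⌊(((0:ℕ):ℚ) - v) / l⌋ := by
      rw [sub_nonneg]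
      apply Int.floor_le_floor
      gcongr
      simp
    rw [hc', max_eq_left hm]
    push_cast
    have a1 := Int.floor_le (((M:ℚ) - v) / l)
    have a2 := Int.lt_floor_add_one (((M:ℚ) - v) / l)
    have a3 := Int.floor_le (((0:ℚ) - v) / l)
    have a4 := Int.lt_floor_add_one (((0:ℚ) - v) / l)
    have e : (M:ℚ) / l = ((M:ℚ) - v) / l - ((0:ℚ) - v) / l := by ring
    rw [abs_le]
    constructor <;> linarith
  have := (Rat.cast_le (K := ℝ)).2 key
  push_cast at this
  exact this

/-- squarefree numbers up to `z` coprime to `d` -/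
def sqf (d z : ℕ) : Finset ℕ := {r ∈ Icc 1 z | Squarefree r ∧ Nat.Coprime r d}

noncomputable def sqS (d z : ℕ) : ℝ := ∑ r ∈ sqf d z, (1 : ℝ) / r

noncomputable def lam (d z e : ℕ) : ℝ :=
  (ArithmeticFunction.moebius e : ℝ) * e / sqS d z * ∑ r ∈ sqf d z with e ∣ r, (1 : ℝ) / r

lemma one_mem_sqf (d z : ℕ) (hz : 1 ≤ z) : 1 ∈ sqf d z := by
  simp [sqf, hz]

lemma sqS_pos (d z : ℕ) (hz : 1 ≤ z) : 0 < sqS d z := by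
  apply Finset.sum_pos
  · intro r hr
    simp only [sqf, mem_filter, mem_Icc] at hr
    have : (0:ℝ) < r := by exact_mod_cast hr.1.1
    positivity
  · exact ⟨1, one_mem_sqf d z hz⟩

lemma lam_one (d z : ℕ) (hz : 1 ≤ z) : lam d z 1 = 1 := by
  have := sqS_pos d z hz
  simp only [lam, isUnit_one, IsUnit.dvd, filter_true]
  change _ * sqS d z = 1
  simp
  field_simp

lemma lam_abs (d z e : ℕ) (hz : 1 ≤ z) : |lam d z e| ≤ e := by
  have hS := sqS_pos d z hz
  have h1 : |(ArithmeticFunction.moebius e : ℝ)| ≤ 1 := by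
    have := ArithmeticFunction.abs_moebius_le_one (n := e)
    exact_mod_cast this
  have h2 : ∑ r ∈ sqf d z with e ∣ r, (1 : ℝ) / r ≤ sqS d z := by
    apply Finset.sum_le_sum_of_subset_of_nonneg (filter_subset _ _)
    intros; positivity
  have h3 : 0 ≤ ∑ r ∈ sqf d z with e ∣ r, (1 : ℝ) / r := by positivity
  rw [lam, abs_mul, abs_div, abs_mul, abs_of_pos hS, abs_of_nonneg h3, Nat.abs_cast]
  calc _ ≤ 1 * (e:ℝ) / sqS d z * sqS d z := by gcongr
    _ = e := by field_simp

lemma moebius_inner (d z s r : ℕ) (hs : s ∈ sqf d z) (hr : r ∈ sqf d z) :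
    ∑ e ∈ sqf d z with s ∣ e ∧ e ∣ r, (ArithmeticFunction.moebius e : ℝ) =
      if r = s then (ArithmeticFunction.moebius s : ℝ) else 0 := by
  simp only [sqf, mem_filter, mem_Icc] at hs hr
  by_cases hsr : s ∣ r
  · obtain ⟨t, rfl⟩ := hsr
    have ht : t ≠ 0 := by rintro rfl; simp at hr
    have hsq := hr.2.1
    have hcop := Nat.coprime_of_squarefree_mul hsq
    have hset : {e ∈ sqf d z | s ∣ e ∧ e ∣ s * t} = t.divisors.image (fun f => s * f) := by
      ext e
      simp only [sqf, mem_filter, mem_Icc, mem_image, Nat.mem_divisors]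
      constructor
      · rintro ⟨h1, ⟨f, rfl⟩, h3⟩
        exact ⟨f, ⟨Nat.dvd_of_mul_dvd_mul_left hs.1.1 h3, ht⟩, rfl⟩
      · rintro ⟨f, ⟨hf, -⟩, rfl⟩
        have hd : s * f ∣ s * t := Nat.mul_dvd_mul_left s hf
        refine ⟨⟨⟨?_, ?_⟩, ?_, ?_⟩, ⟨f, rfl⟩, hd⟩
        · exact Nat.pos_of_dvd_of_pos hd hr.1.1
        · exact (Nat.le_of_dvd hr.1.1 hd).trans hr.1.2
        · exact hsq.squarefree_of_dvd hd
        · exact hr.2.2.coprime_dvd_left hd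
    rw [hset, Finset.sum_image (by
      intro a _ b _ hab
      exact Nat.eq_of_mul_eq_mul_left hs.1.1 hab)]
    have : ∀ f ∈ t.divisors, (ArithmeticFunction.moebius (s * f) : ℝ) =
        (ArithmeticFunction.moebius s : ℝ) * (ArithmeticFunction.moebius f : ℝ) := by
      intro f hf
      have := ArithmeticFunction.isMultiplicative_moebius.map_mul_of_coprime
        (hcop.coprime_dvd_right (Nat.dvd_of_mem_divisors hf))
      exact_mod_cast this
    rw [Finset.sum_congr rfl this, ← Finset.mul_sum]
    have h0 : ∑ f ∈ t.divisors, ArithmeticFunction.moebius f = if t = 1 then 1 else 0 := by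
      rw [← ArithmeticFunction.coe_mul_zeta_apply, ArithmeticFunction.moebius_mul_coe_zeta,
        ArithmeticFunction.one_apply]
    have h0' : ∑ f ∈ t.divisors, (ArithmeticFunction.moebius f : ℝ) = if t = 1 then 1 else 0 := by
      exact_mod_cast h0
    rw [h0']
    by_cases h1 : t = 1
    · simp [h1]
    · have : s * t ≠ s := by
        intro h; apply h1
        exact Nat.eq_of_mul_eq_mul_left hs.1.1 (by simpa using h)
      simp [h1, this]
  · rw [Finset.sum_eq_zero, if_neg]
    · rintro rfl; exact hsr dvd_rfl
    · intro e he
      simp only [mem_filter] at he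
      exact absurd (he.2.1.trans he.2.2) hsr

lemma lam_inv (d z s : ℕ) (hs : s ∈ sqf d z) :
    ∑ e ∈ sqf d z with s ∣ e, lam d z e / e =
      (ArithmeticFunction.moebius s : ℝ) / (s * sqS d z) := by
  have h1 : ∀ e ∈ {e ∈ sqf d z | s ∣ e}, lam d z e / e =
      ∑ r ∈ sqf d z, (1 / sqS d z) * ((1:ℝ) / r) *
        (if e ∣ r then (ArithmeticFunction.moebius e : ℝ) else 0) := by
    intro e he
    have he0 : (e:ℝ) ≠ 0 := by
      simp only [sqf, mem_filter, mem_Icc] at he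
      have := he.1.1.1
      positivity
    rw [lam, Finset.sum_filter, Finset.mul_sum, Finset.sum_div]
    apply Finset.sum_congr rfl
    intro r _
    split_ifs
    · field_simp
    · simp
  rw [Finset.sum_congr rfl h1, Finset.sum_comm]
  have h2 : ∀ r ∈ sqf d z, ∑ e ∈ sqf d z with s ∣ e, (1 / sqS d z) * ((1:ℝ) / r) *
        (if e ∣ r then (ArithmeticFunction.moebius e : ℝ) else 0) =
        (1 / sqS d z) * ((1:ℝ) / r) * (if r = s then (ArithmeticFunction.moebius s : ℝ) else 0) := by
    intro r hr
    rw [← Finset.mul_sum, ← moebius_inner d z s r hs hr, ← Finset.sum_filter, Finset.filter_filter]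
  rw [Finset.sum_congr rfl h2]
  simp only [mul_ite, mul_zero]
  rw [Finset.sum_ite_eq' , if_pos hs]
  field_simp

lemma quad_main (d z : ℕ) (hz : 1 ≤ z) :
    ∑ a ∈ sqf d z, ∑ b ∈ sqf d z, lam d z a * lam d z b / (Nat.lcm a b : ℝ) ≤ 1 / sqS d z := by
  have hS := sqS_pos d z hz
  have h1 : ∀ a ∈ sqf d z, ∀ b ∈ sqf d z, lam d z a * lam d z b / (Nat.lcm a b : ℝ) =
      ∑ s ∈ sqf d z, (s.totient : ℝ) * ((if s ∣ a then lam d z a / a else 0) *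
        (if s ∣ b then lam d z b / b else 0)) := by
    intro a ha b hb
    simp only [sqf, mem_filter, mem_Icc] at ha hb
    have ha0 : (a:ℝ) ≠ 0 := by have := ha.1.1; positivity
    have hb0 : (b:ℝ) ≠ 0 := by have := hb.1.1; positivity
    have hg : (Nat.gcd a b : ℝ) = ∑ s ∈ sqf d z, if s ∣ a ∧ s ∣ b then (s.totient : ℝ) else 0 := by
      rw [← Finset.sum_filter]
      have hset : {s ∈ sqf d z | s ∣ a ∧ s ∣ b} = (Nat.gcd a b).divisors := by
        ext s
        simp only [sqf, mem_filter, mem_Icc, Nat.mem_divisors, Nat.dvd_gcd_iff]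
        constructor
        · rintro ⟨_, h⟩
          exact ⟨h, (Nat.gcd_pos_of_pos_left _ ha.1.1).ne'⟩
        · rintro ⟨h, _⟩
          exact ⟨⟨⟨Nat.pos_of_dvd_of_pos h.1 ha.1.1, (Nat.le_of_dvd ha.1.1 h.1).trans ha.1.2⟩,
            ha.2.1.squarefree_of_dvd h.1, ha.2.2.coprime_dvd_left h.1⟩, h⟩
      rw [hset]
      exact_mod_cast (Nat.sum_totient (Nat.gcd a b)).symm
    have hl : (Nat.gcd a b : ℝ) * (Nat.lcm a b : ℝ) = a * b := by
      exact_mod_cast Nat.gcd_mul_lcm a b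
    have hl0 : (Nat.lcm a b : ℝ) ≠ 0 := by
      intro h; rw [h, mul_zero] at hl
      exact mul_ne_zero ha0 hb0 hl.symm
    have h2 : lam d z a * lam d z b / (Nat.lcm a b : ℝ) =
        (Nat.gcd a b : ℝ) * (lam d z a / a * (lam d z b / b)) := by
      field_simp
      linear_combination (-(lam d z a * lam d z b)) * hl
    rw [h2, hg, Finset.sum_mul]
    apply Finset.sum_congr rfl
    intro s _
    by_cases h3 : s ∣ a <;> by_cases h4 : s ∣ b <;> simp [h3, h4]
  rw [Finset.sum_congr rfl (fun a ha => Finset.sum_congr rfl (h1 a ha))]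
  have h2 : ∑ a ∈ sqf d z, ∑ b ∈ sqf d z, ∑ s ∈ sqf d z, (s.totient : ℝ) *
      ((if s ∣ a then lam d z a / a else 0) * (if s ∣ b then lam d z b / b else 0)) =
      ∑ s ∈ sqf d z, (s.totient : ℝ) * (∑ a ∈ sqf d z with s ∣ a, lam d z a / a) ^ 2 := by
    calc _ = ∑ a ∈ sqf d z, ∑ s ∈ sqf d z, ∑ b ∈ sqf d z, (s.totient : ℝ) *
      ((if s ∣ a then lam d z a / a else 0) * (if s ∣ b then lam d z b / b else 0)) := by
          apply Finset.sum_congr rfl; intro a _; rw [Finset.sum_comm]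
      _ = _ := by
        rw [Finset.sum_comm]
        apply Finset.sum_congr rfl; intro s _
        rw [Finset.sum_filter, sq, Finset.sum_mul_sum, Finset.mul_sum]
        apply Finset.sum_congr rfl; intro a _
        rw [Finset.mul_sum]
  rw [h2]
  calc _ ≤ ∑ s ∈ sqf d z, (1 / (sqS d z)^2) * ((1:ℝ) / s) := by
        apply Finset.sum_le_sum
        intro s hs
        rw [lam_inv d z s hs]
        have hs1 : 1 ≤ s := by simp only [sqf, mem_filter, mem_Icc] at hs; exact hs.1.1
        have hs0 : (0:ℝ) < s := by positivity
        have hmu : (ArithmeticFunction.moebius s : ℝ)^2 ≤ 1 := by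
          have := ArithmeticFunction.abs_moebius_le_one (n := s)
          rw [sq_le_one_iff_abs_le_one]
          exact_mod_cast this
        have ht : (s.totient : ℝ) ≤ s := by exact_mod_cast Nat.totient_le s
        rw [div_pow, mul_pow]
        calc (s.totient : ℝ) * ((ArithmeticFunction.moebius s : ℝ)^2 / ((s:ℝ)^2 * sqS d z ^2))
            ≤ (s : ℝ) * (1 / ((s:ℝ)^2 * sqS d z ^2)) := by gcongr
          _ = _ := by field_simp
    _ = 1 / sqS d z := by
        rw [← Finset.mul_sum]
        change _ * sqS d z = _
        field_simp

lemma selberg (d M z : ℕ) (hz : 1 ≤ z) :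
    ((#{m ∈ Icc 1 M | ∀ e ∈ sqf d z, e ∣ d * m + 1 → e = 1} : ℕ) : ℝ)
      ≤ M / sqS d z + (z:ℝ)^4 := by
  have hS := sqS_pos d z hz
  have step1 : ((#{m ∈ Icc 1 M | ∀ e ∈ sqf d z, e ∣ d * m + 1 → e = 1} : ℕ) : ℝ) ≤
      ∑ m ∈ Icc 1 M, (∑ e ∈ sqf d z, if e ∣ d * m + 1 then lam d z e else 0)^2 := by
    rw [Finset.card_eq_sum_ones, Nat.cast_sum, Finset.sum_filter]
    apply Finset.sum_le_sum
    intro m _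
    split_ifs with h
    · have : (∑ e ∈ sqf d z, if e ∣ d * m + 1 then lam d z e else 0) = 1 := by
        rw [Finset.sum_eq_single_of_mem 1 (one_mem_sqf d z hz)]
        · simp [lam_one d z hz]
        · intro b hb hb1
          rw [if_neg]
          intro hd; exact hb1 (h b hb hd)
      rw [this]; simp
    · positivity
  have step2 : ∑ m ∈ Icc 1 M, (∑ e ∈ sqf d z, if e ∣ d * m + 1 then lam d z e else 0)^2 =
      ∑ a ∈ sqf d z, ∑ b ∈ sqf d z, lam d z a * lam d z b *
        ((#{m ∈ Icc 1 M | Nat.lcm a b ∣ d * m + 1} : ℕ) : ℝ) := by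
    have : ∀ m ∈ Icc 1 M, (∑ e ∈ sqf d z, if e ∣ d * m + 1 then lam d z e else 0)^2 =
        ∑ a ∈ sqf d z, ∑ b ∈ sqf d z, lam d z a * lam d z b *
          (if Nat.lcm a b ∣ d * m + 1 then (1:ℝ) else 0) := by
      intro m _
      rw [sq, Finset.sum_mul_sum]
      refine Finset.sum_congr rfl fun a _ => Finset.sum_congr rfl fun b _ => ?_
      by_cases h3 : a ∣ d * m + 1 <;> by_cases h4 : b ∣ d * m + 1 <;>
        simp [h3, h4, Nat.lcm_dvd_iff]
    rw [Finset.sum_congr rfl this, Finset.sum_comm]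
    refine Finset.sum_congr rfl fun a _ => ?_
    rw [Finset.sum_comm]
    refine Finset.sum_congr rfl fun b _ => ?_
    rw [← Finset.mul_sum, Finset.sum_boole]
  have step3 : ∑ a ∈ sqf d z, ∑ b ∈ sqf d z, lam d z a * lam d z b *
        ((#{m ∈ Icc 1 M | Nat.lcm a b ∣ d * m + 1} : ℕ) : ℝ) ≤
      ∑ a ∈ sqf d z, ∑ b ∈ sqf d z, (M * (lam d z a * lam d z b / (Nat.lcm a b : ℝ)) + a * b) := by
    refine Finset.sum_le_sum fun a ha => Finset.sum_le_sum fun b hb => ?_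
    simp only [sqf, mem_filter, mem_Icc] at ha hb
    have hl1 : 1 ≤ Nat.lcm a b := Nat.lcm_pos ha.1.1 hb.1.1
    have hcop : Nat.Coprime (Nat.lcm a b) d :=
      (Nat.Coprime.mul_left ha.2.2 hb.2.2).coprime_dvd_left (Nat.lcm_dvd_mul a b)
    have hc := count_cong d M _ hl1 hcop
    set c := ((#{m ∈ Icc 1 M | Nat.lcm a b ∣ d * m + 1} : ℕ) : ℝ)
    have e : lam d z a * lam d z b * c = M * (lam d z a * lam d z b / (Nat.lcm a b : ℝ)) +
        lam d z a * lam d z b * (c - M / (Nat.lcm a b : ℝ)) := by ring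
    rw [e]
    refine add_le_add le_rfl ?_
    refine (le_abs_self _).trans ?_
    rw [abs_mul, abs_mul]
    calc _ ≤ (a:ℝ) * b * 1 := by
          gcongr
          · exact lam_abs d z a hz
          · exact lam_abs d z b hz
      _ = _ := by ring
  have step4 : ∑ a ∈ sqf d z, ∑ b ∈ sqf d z, ((a:ℝ) * b) ≤ (z:ℝ)^4 := by
    rw [← Finset.sum_mul_sum]
    have : ∑ a ∈ sqf d z, (a:ℝ) ≤ (z:ℝ)^2 := by
      calc ∑ a ∈ sqf d z, (a:ℝ) ≤ ∑ a ∈ Icc 1 z, (a:ℝ) :=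
            Finset.sum_le_sum_of_subset_of_nonneg (filter_subset _ _) (fun _ _ _ => by positivity)
        _ ≤ ∑ a ∈ Icc 1 z, (z:ℝ) := by
            apply Finset.sum_le_sum
            intro a ha
            exact_mod_cast (mem_Icc.1 ha).2
        _ = _ := by simp [sq]
    calc _ ≤ (z:ℝ)^2 * (z:ℝ)^2 := by gcongr
      _ = _ := by ring
  have step5 := quad_main d z hz
  calc _ ≤ _ := step1
    _ = _ := step2
    _ ≤ _ := step3
    _ = M * ∑ a ∈ sqf d z, ∑ b ∈ sqf d z, (lam d z a * lam d z b / (Nat.lcm a b : ℝ)) +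
        ∑ a ∈ sqf d z, ∑ b ∈ sqf d z, ((a:ℝ) * b) := by
      simp only [Finset.sum_add_distrib, Finset.mul_sum]
    _ ≤ M * (1 / sqS d z) + (z:ℝ)^4 := by gcongr
    _ = _ := by ring

lemma sum_le_sum_of_surj {α β : Type*} (A : Finset α) (B : Finset β) (f : α → ℝ)
    (F : β → ℝ) (g : β → α) (hF : ∀ y ∈ B, 0 ≤ F y)
    (h : ∀ m ∈ A, ∃ y ∈ B, g y = m ∧ f m ≤ F y) : ∑ m ∈ A, f m ≤ ∑ y ∈ B, F y := by
  classical
  rcases A.eq_empty_or_nonempty with rfl | ⟨a0, ha0⟩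
  · simpa using Finset.sum_nonneg hF
  haveI : Nonempty β := ⟨(h a0 ha0).choose⟩
  choose! y hyB hyg hyf using h
  calc ∑ m ∈ A, f m ≤ ∑ m ∈ A, F (y m) := Finset.sum_le_sum hyf
    _ = ∑ b ∈ A.image y, F b := by
        rw [Finset.sum_image]
        intro a ha b hb hab
        rw [← hyg a ha, ← hyg b hb, hab]
    _ ≤ _ := by
        apply Finset.sum_le_sum_of_subset_of_nonneg
        · intro b hb
          obtain ⟨a, ha, rfl⟩ := Finset.mem_image.1 hb
          exact hyB a ha
        · intro b hb _; exact hF b hb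

lemma sum_inv_sq_le (n : ℕ) : ∑ k ∈ Icc 1 n, (1:ℝ) / (k:ℝ)^2 ≤ 2 := by
  have : ∀ n : ℕ, ∑ k ∈ Icc 1 (n+1), (1:ℝ) / (k:ℝ)^2 ≤ 2 - 1 / ((n:ℝ)+1) := by
    intro n
    induction n with
    | zero => simp; norm_num
    | succ n ih =>
      rw [Finset.sum_Icc_succ_top (by omega)]
      push_cast
      have h1 : (1:ℝ) / ((n:ℝ)+1+1)^2 ≤ 1 / ((n:ℝ)+1) - 1/((n:ℝ)+1+1) := by
        rw [div_sub_div _ _ (by positivity) (by positivity), div_le_div_iff₀ (by positivity) (by positivity)]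
        nlinarith [(Nat.cast_nonneg n : (0:ℝ) ≤ n)]
      linarith
  rcases n with _ | n
  · simp
  · refine (this n).trans ?_
    have : (0:ℝ) ≤ 1 / ((n:ℝ)+1) := by positivity
    linarith

lemma log_le_harm (z : ℕ) (hz : 1 ≤ z) : Real.log z ≤ ∑ m ∈ Icc 1 z, (1:ℝ) / m := by
  have h := log_add_one_le_harmonic z
  have h2 : ((harmonic z : ℚ) : ℝ) = ∑ m ∈ Icc 1 z, (1:ℝ) / m := by
    rw [harmonic_eq_sum_Icc]; push_cast; simp
  rw [← h2]
  refine le_trans (Real.log_le_log (by positivity) ?_) h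
  push_cast; linarith

lemma sqS_ge (d z : ℕ) (hd : 1 ≤ d) (hz : 1 ≤ z)
    (hs : ∑ q ∈ d.primeFactors, (1:ℝ) / q ≤ 1 / 2) : Real.log z / 4 ≤ sqS d z := by
  set H := ∑ m ∈ Icc 1 z, (1:ℝ) / m with hH
  have hH0 : 0 ≤ H := by positivity
  have hlog := log_le_harm z hz
  have a1 : H ≤ ∑ m ∈ Icc 1 z with Nat.Coprime m d, (1:ℝ) / m +
      ∑ q ∈ d.primeFactors, ∑ m ∈ Icc 1 z with q ∣ m, (1:ℝ) / m := by
    rw [hH, ← Finset.sum_filter_add_sum_filter_not (Icc 1 z) (fun m => Nat.Coprime m d)]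
    gcongr
    rw [Finset.sum_sigma']
    apply sum_le_sum_of_surj _ _ _ _ (fun y => y.2)
    · intro y _; positivity
    · intro m hm
      simp only [mem_filter, mem_Icc] at hm
      obtain ⟨q, hq, h1, h2⟩ := Nat.Prime.not_coprime_iff_dvd.1 hm.2
      refine ⟨⟨q, m⟩, ?_, rfl, le_rfl⟩
      simp only [mem_sigma, Nat.mem_primeFactors, mem_filter, mem_Icc]
      exact ⟨⟨hq, h2, by omega⟩, hm.1, h1⟩
  have a2 : ∀ q ∈ d.primeFactors, ∑ m ∈ Icc 1 z with q ∣ m, (1:ℝ) / m ≤ (1:ℝ) / q * H := by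
    intro q hq
    have hq1 : 1 ≤ q := (Nat.prime_of_mem_primeFactors hq).one_le
    rw [hH, Finset.mul_sum]
    apply sum_le_sum_of_surj _ _ _ _ (fun y => q * y)
    · intro y _; positivity
    · intro m hm
      simp only [mem_filter, mem_Icc] at hm
      obtain ⟨k, rfl⟩ := hm.2
      have hk : 1 ≤ k := by
        rcases Nat.eq_zero_or_pos k with h | h
        · simp [h] at hm
        · exact h
      refine ⟨k, ?_, rfl, ?_⟩
      · simp only [mem_Icc]
        refine ⟨hk, le_trans ?_ hm.1.2⟩
        exact Nat.le_mul_of_pos_left k hq1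
      · push_cast
        rw [one_div_mul_one_div]
  have a3 : ∑ q ∈ d.primeFactors, ∑ m ∈ Icc 1 z with q ∣ m, (1:ℝ) / m ≤ 1/2 * H := by
    refine (Finset.sum_le_sum a2).trans ?_
    rw [← Finset.sum_mul]
    gcongr
  have a4 : ∑ m ∈ Icc 1 z with Nat.Coprime m d, (1:ℝ) / m ≤ sqS d z * 2 := by
    calc _ ≤ sqS d z * ∑ k ∈ Icc 1 z, (1:ℝ) / (k:ℝ)^2 := by
          rw [sqS, Finset.sum_mul_sum, ← Finset.sum_product']
          apply sum_le_sum_of_surj _ _ _ _ (fun y => y.2 ^ 2 * y.1)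
          · intro y _; positivity
          · intro m hm
            simp only [mem_filter, mem_Icc] at hm
            obtain ⟨a, b, hab, hsq⟩ := Nat.sq_mul_squarefree m
            have hb : 1 ≤ b := by
              rcases Nat.eq_zero_or_pos b with h | h
              · subst h; simp at hab; omega
              · exact h
            have ha : 1 ≤ a := by
              rcases Nat.eq_zero_or_pos a with h | h
              · subst h; simp at hab; omega
              · exact h
            refine ⟨(a, b), ?_, hab, ?_⟩
            · simp only [mem_product, sqf, mem_filter, mem_Icc]
              have h1 : a ≤ m := by rw [← hab]; exact Nat.le_mul_of_pos_left a (by positivity)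
              have h2 : b ≤ m := by
                rw [← hab]
                calc b ≤ b^2 := Nat.le_self_pow (by norm_num) b
                  _ ≤ _ := Nat.le_mul_of_pos_right _ ha
              exact ⟨⟨⟨ha, by omega⟩, hsq, hm.2.coprime_dvd_left ⟨b^2, by rw [← hab]; ring⟩⟩, hb, by omega⟩
            · rw [← hab]; push_cast
              rw [one_div_mul_one_div, mul_comm]
      _ ≤ _ := by
          have := sqS_pos d z hz
          gcongr
          exact sum_inv_sq_le z
  linarith

/-- number of primes `p ≤ N` with `d ∣ p - 1` -/
def cnt (N d : ℕ) : ℕ := #{p ∈ Icc 1 N | p.Prime ∧ d ∣ p - 1}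

lemma cnt_le_sieve (N d z : ℕ) (hd : 1 ≤ d) (hz : 1 ≤ z) :
    (cnt N d : ℝ) ≤ ((N:ℝ) / d) / sqS d z + (z:ℝ)^4 + z := by
  have h1 : cnt N d ≤ #({m ∈ Icc 1 (N / d) | ∀ e ∈ sqf d z, e ∣ d * m + 1 → e = 1} ∪ Icc 1 z) := by
    apply Finset.card_le_card_of_injOn (fun p => (p - 1) / d)
    · intro p hp
      simp only [coe_filter, mem_Icc, Set.mem_ofPred_eq] at hp
      obtain ⟨⟨hp1, hpN⟩, hpp, m, hm⟩ := hp
      have hp2 := hpp.two_le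
      have hm1 : 1 ≤ m := by
        rcases Nat.eq_zero_or_pos m with h | h
        · subst h; simp at hm; omega
        · exact h
      have e : (p - 1) / d = m := by rw [hm]; exact Nat.mul_div_cancel_left m hd
      have e2 : d * m + 1 = p := by omega
      simp only [coe_union, coe_filter, mem_Icc, Set.mem_union, Set.mem_ofPred_eq, coe_Icc, Set.mem_Icc]
      rw [e]
      by_cases hmz : m ≤ z
      · right; exact ⟨hm1, hmz⟩
      · left
        refine ⟨⟨hm1, ?_⟩, ?_⟩
        · rw [Nat.le_div_iff_mul_le hd]; rw [mul_comm]; omega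
        · intro e he hed
          rw [e2] at hed
          rcases (Nat.dvd_prime hpp).1 hed with h | h
          · exact h
          · exfalso
            simp only [sqf, mem_filter, mem_Icc] at he
            have : m ≤ d * m := Nat.le_mul_of_pos_left m hd
            omega
    · intro p hp q hq hpq
      simp only [coe_filter, mem_Icc, Set.mem_ofPred_eq] at hp hq
      have e1 := Nat.div_mul_cancel hp.2.2
      have e2 := Nat.div_mul_cancel hq.2.2
      simp only at hpq
      rw [hpq] at e1
      have := hp.2.1.two_le
      have := hq.2.1.two_le
      omega
  have h2 : (cnt N d : ℝ) ≤
      (#{m ∈ Icc 1 (N / d) | ∀ e ∈ sqf d z, e ∣ d * m + 1 → e = 1} : ℝ) + z := by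
    have := h1.trans (Finset.card_union_le _ _)
    rw [Nat.card_Icc] at this
    exact_mod_cast this
  have h3 := selberg d (N / d) z hz
  have h4 : (((N / d : ℕ) : ℝ)) / sqS d z ≤ ((N:ℝ) / d) / sqS d z := by
    have := sqS_pos d z hz
    gcongr
    exact Nat.cast_div_le
  linarith

lemma brun_titchmarsh (c : ℝ) (hc : 0 < c) : ∃ C : ℝ, 0 < C ∧ ∀ᶠ N : ℕ in Filter.atTop,
    ∀ d : ℕ, 1 ≤ d → (d:ℝ) ≤ (N:ℝ) ^ (1 - c) → ∑ q ∈ d.primeFactors, (1:ℝ) / q ≤ 1 / 2 →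
      (cnt N d : ℝ) ≤ C * (N / Real.log N) * (1 / d) := by
  refine ⟨64 / c + 2, by positivity, ?_⟩
  have t1 : Filter.Tendsto (fun N : ℕ => Real.log (N:ℝ)) Filter.atTop Filter.atTop :=
    Real.tendsto_log_atTop.comp tendsto_natCast_atTop_atTop
  have t2 : ∀ᶠ N : ℕ in Filter.atTop, Real.log (N:ℝ) ≤ (N:ℝ)^(c/2) := by
    have := (isLittleO_log_rpow_atTop (r := c/2) (by positivity)).bound (c := 1) one_pos
    have := tendsto_natCast_atTop_atTop (R := ℝ) |>.eventually this
    filter_upwards [this, t1.eventually_ge_atTop 0] with N hN h0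
    rw [Real.norm_eq_abs, Real.norm_eq_abs, one_mul, abs_of_nonneg h0, abs_of_nonneg (by positivity)] at hN
    exact hN
  filter_upwards [t1.eventually_ge_atTop 1, t1.eventually_ge_atTop (16 * Real.log 2 / c), t2,
    Filter.eventually_ge_atTop 1] with N hX1 hX hN2 hN1 d hd hdN hs
  set X := Real.log (N:ℝ) with hXdef
  have hN0 : (0:ℝ) < N := by exact_mod_cast hN1
  have hd0 : (0:ℝ) < d := by exact_mod_cast hd
  set Y := (N:ℝ) / d with hY
  have hYc : (N:ℝ)^c ≤ Y := by
    rw [hY, le_div_iff₀ hd0]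
    calc (N:ℝ)^c * d ≤ (N:ℝ)^c * (N:ℝ)^(1-c) := by gcongr
      _ = N := by rw [← Real.rpow_add hN0]; simp
  have hNc1 : 1 ≤ (N:ℝ)^c := Real.one_le_rpow (by exact_mod_cast hN1) hc.le
  have hY1 : 1 ≤ Y := hNc1.trans hYc
  have hY0 : 0 < Y := by linarith
  have hlogY : c * X ≤ Real.log Y := by
    rw [hXdef, ← Real.log_rpow hN0]
    exact Real.log_le_log (by positivity) hYc
  set u := Y ^ ((1:ℝ)/8) with hu
  have hu1 : 1 ≤ u := Real.one_le_rpow hY1 (by norm_num)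
  set z := ⌊u⌋₊ with hz
  have hz1 : 1 ≤ z := Nat.le_floor (by simpa using hu1)
  have hzu : (z:ℝ) ≤ u := Nat.floor_le (by linarith)
  have hz2 : u / 2 ≤ z := by
    have := Nat.lt_floor_add_one u
    have : (1:ℝ) ≤ z := by exact_mod_cast hz1
    linarith
  have hlogz : c / 16 * X ≤ Real.log z := by
    have : Real.log (u/2) ≤ Real.log z := Real.log_le_log (by positivity) hz2
    rw [Real.log_div (by positivity) (by norm_num), hu, Real.log_rpow hY0] at this
    have h2 : Real.log 2 ≤ c / 16 * X := by
      rw [div_le_iff₀ hc] at hX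
      linarith
    linarith
  have hS := sqS_ge d z hd hz1 hs
  have hS2 : c / 64 * X ≤ sqS d z := by linarith
  have hmain := cnt_le_sieve N d z hd hz1
  have b1 : Y / sqS d z ≤ 64 / c * (Y / X) := by
    calc Y / sqS d z ≤ Y / (c/64*X) := by gcongr
      _ = _ := by field_simp
  have hz4 : (z:ℝ)^4 ≤ Y^((1:ℝ)/2) := by
    calc (z:ℝ)^4 ≤ u^4 := by gcongr
      _ = _ := by
        rw [hu, ← Real.rpow_natCast, ← Real.rpow_mul hY0.le]; norm_num
  have hzz : (z:ℝ) ≤ (z:ℝ)^4 := by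
    exact_mod_cast Nat.le_self_pow (by norm_num) z
  have b2 : Y^((1:ℝ)/2) ≤ Y / X := by
    rw [le_div_iff₀ (by linarith)]
    calc Y^((1:ℝ)/2) * X ≤ Y^((1:ℝ)/2) * Y^((1:ℝ)/2) := by
          gcongr
          refine hN2.trans ?_
          calc (N:ℝ)^(c/2) = ((N:ℝ)^c)^((1:ℝ)/2) := by rw [← Real.rpow_mul hN0.le]; congr 1; ring
            _ ≤ _ := by gcongr
      _ = Y := by rw [← Real.rpow_add hY0]; norm_num
  have e : (64 / c + 2) * (N / X) * (1 / d) = 64 / c * (Y/X) + 2 * (Y/X) := by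
    rw [hY]; field_simp
  rw [e]
  linarith

lemma short_one (Q : Finset ℕ) (s : ℝ)
    (hQ : ∀ q ∈ Q, q.Prime ∧ s ≤ Real.log q ∧ Real.log q < s + 1) :
    ∑ q ∈ Q, Real.log q / q ≤ 4 := by
  have h1 : ∑ q ∈ Q, Real.log q / q ≤ Real.exp (-s) * ∑ q ∈ Q, Real.log q := by
    rw [Finset.mul_sum]
    apply Finset.sum_le_sum
    intro q hq
    obtain ⟨hp, h1, h2⟩ := hQ q hq
    have hq0 : (0:ℝ) < q := by exact_mod_cast hp.pos
    have hlog : 0 ≤ Real.log q := Real.log_natCast_nonneg q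
    have : Real.exp s ≤ q := by rwa [← Real.le_log_iff_exp_le hq0]
    rw [div_eq_mul_inv, mul_comm, Real.exp_neg]
    gcongr
  have h2 : ∑ q ∈ Q, Real.log q ≤ Chebyshev.theta (Real.exp (s+1)) := by
    rw [Chebyshev.theta_eq_sum_Icc]
    apply Finset.sum_le_sum_of_subset_of_nonneg
    · intro q hq
      obtain ⟨hp, h1, h2⟩ := hQ q hq
      have hq0 : (0:ℝ) < q := by exact_mod_cast hp.pos
      simp only [mem_filter, mem_Icc]
      refine ⟨⟨by omega, Nat.le_floor ?_⟩, hp⟩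
      rw [← Real.log_le_iff_le_exp hq0]; exact h2.le
    · intro q _ _; exact Real.log_natCast_nonneg q
  have h3 := Chebyshev.theta_le_log4_mul_x (Real.exp_pos (s+1)).le
  have h4 : Real.log 4 = 2 * Real.log 2 := by
    rw [show (4:ℝ) = 2^2 by norm_num, Real.log_pow]; norm_num
  calc _ ≤ Real.exp (-s) * (Real.log 4 * Real.exp (s+1)) := by
        refine h1.trans ?_
        gcongr
        exact h2.trans h3
    _ = Real.log 4 * Real.exp 1 := by
        rw [mul_left_comm, ← Real.exp_add]; congr 2; ring
    _ ≤ 4 := by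
        have := Real.exp_one_lt_d9
        have := Real.log_two_lt_d9
        have := Real.log_two_gt_d9
        have := Real.exp_pos 1
        rw [h4]; nlinarith

lemma short_nat (n : ℕ) : ∀ (Q : Finset ℕ) (s : ℝ),
    (∀ q ∈ Q, q.Prime ∧ s ≤ Real.log q ∧ Real.log q < s + n) →
    ∑ q ∈ Q, Real.log q / q ≤ 4 * n := by
  induction n with
  | zero =>
    intro Q s hQ
    have : Q = ∅ := by
      apply Finset.eq_empty_of_forall_notMem
      intro q hq
      obtain ⟨_, h1, h2⟩ := hQ q hq
      simp at h2; linarith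
    simp [this]
  | succ n ih =>
    intro Q s hQ
    rw [← Finset.sum_filter_add_sum_filter_not Q (fun q : ℕ => Real.log q < s + 1)]
    have h1 : ∑ q ∈ Q.filter (fun q : ℕ => Real.log q < s + 1), Real.log q / q ≤ 4 := by
      apply short_one _ s
      intro q hq
      rw [mem_filter] at hq
      exact ⟨(hQ q hq.1).1, (hQ q hq.1).2.1, hq.2⟩
    have h2 : ∑ q ∈ Q.filter (fun q : ℕ => ¬ Real.log q < s + 1), Real.log q / q ≤ 4 * n := by
      apply ih _ (s+1)
      intro q hq
      rw [mem_filter] at hq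
      obtain ⟨a, b, c⟩ := hQ q hq.1
      push_cast at c
      exact ⟨a, by linarith [hq.2], by linarith⟩
    push_cast
    linarith

lemma short_interval (Q : Finset ℕ) (s h : ℝ) (hh : 0 ≤ h)
    (hQ : ∀ q ∈ Q, q.Prime ∧ s ≤ Real.log q ∧ Real.log q ≤ s + h) :
    ∑ q ∈ Q, Real.log q / q ≤ 4 * (h + 1) := by
  have := short_nat (⌊h⌋₊ + 1) Q s (by
    intro q hq
    obtain ⟨a, b, c⟩ := hQ q hq
    refine ⟨a, b, ?_⟩
    have := Nat.lt_floor_add_one h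
    push_cast; linarith)
  have h2 := Nat.floor_le hh
  push_cast at this
  linarith

lemma mertens_one (n : ℕ) (hn : 1 ≤ n) :
    ∑ q ∈ Icc 0 n, (if q.Prime then Real.log q / q else 0) ≤ Real.log n + Real.log 4 := by
  rw [← Finset.sum_filter]
  set Q := {q ∈ Icc 0 n | q.Prime} with hQ
  have hn0 : (0:ℝ) < n := by exact_mod_cast hn
  have hdvd : ∏ q ∈ Q, q ^ (n / q) ∣ n.factorial := by
    apply Finset.prod_dvd_of_isRelPrime
    · intro a ha b hb hab
      have ha' := (mem_filter.1 ha).2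
      have hb' := (mem_filter.1 hb).2
      have := (Nat.coprime_primes ha' hb').2 hab
      exact (Nat.coprime_iff_isRelPrime.1 (this.pow _ _))
    · intro q hq
      have hp := (mem_filter.1 hq).2
      have h1 : q ^ (n / q) ∣ (q * (n / q)).factorial := by
        rw [hp.pow_dvd_factorial_iff (Nat.lt_succ_self _)]
        rw [← Nat.factorization_factorial hp (Nat.lt_succ_self _), Nat.factorization_factorial_mul hp]
        omega
      exact h1.trans (Nat.factorial_dvd_factorial (Nat.mul_div_le n q))
  have h1 : ∑ q ∈ Q, ((n / q : ℕ):ℝ) * Real.log q ≤ n * Real.log n := by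
    have h2 : ((∏ q ∈ Q, q ^ (n / q) : ℕ) : ℝ) ≤ (n:ℝ)^n := by
      have := (Nat.le_of_dvd (Nat.factorial_pos n) hdvd).trans (Nat.factorial_le_pow n)
      exact_mod_cast this
    have hpos : (0:ℝ) < ((∏ q ∈ Q, q ^ (n / q) : ℕ) : ℝ) := by
      have : 0 < ∏ q ∈ Q, q ^ (n / q) := by
        apply Finset.prod_pos
        intro q hq
        have hp := (mem_filter.1 hq).2.pos
        positivity
      exact_mod_cast this
    have h3 := Real.log_le_log hpos h2
    rw [Real.log_pow] at h3
    push_cast at h3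
    rw [Real.log_prod] at h3
    · simpa [Real.log_pow] using h3
    · intro q hq
      have hp := (mem_filter.1 hq).2.pos
      positivity
  have hth : ∑ q ∈ Q, Real.log q ≤ Real.log 4 * n := by
    have := Chebyshev.theta_le_log4_mul_x hn0.le
    rw [Chebyshev.theta_eq_sum_Icc, Nat.floor_natCast] at this
    exact this
  have h2 : n * ∑ q ∈ Q, Real.log q / q ≤ n * Real.log n + Real.log 4 * n := by
    have : n * ∑ q ∈ Q, Real.log q / q ≤
        ∑ q ∈ Q, ((n / q : ℕ):ℝ) * Real.log q + ∑ q ∈ Q, Real.log q := by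
      rw [Finset.mul_sum, ← Finset.sum_add_distrib]
      apply Finset.sum_le_sum
      intro q hq
      have hp := (mem_filter.1 hq).2.pos
      have hlog : 0 ≤ Real.log q := Real.log_natCast_nonneg q
      have : (n:ℝ) / q ≤ ((n / q : ℕ):ℝ) + 1 := by
        rw [← Nat.floor_div_eq_div (K := ℝ)]
        exact (Nat.lt_floor_add_one _).le
      calc (n:ℝ) * (Real.log q / q) = (n / q) * Real.log q := by ring
        _ ≤ (((n / q : ℕ):ℝ) + 1) * Real.log q := by gcongr
        _ = _ := by ring
    linarith
  have : n * ∑ q ∈ Q, Real.log q / q ≤ n * (Real.log n + Real.log 4) := by linarith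
  exact le_of_mul_le_mul_left this hn0

lemma mertens_two (a b : ℝ) (ha : 2 ≤ a) (hab : a ≤ b) :
    ∑ q ∈ Ioc ⌊a⌋₊ ⌊b⌋₊ with q.Prime, (1:ℝ) / q ≤ Real.log (Real.log b / Real.log a) + 3 := by
  set c : ℕ → ℝ := fun q => if q.Prime then Real.log q / q else 0 with hc
  have hc0 : ∀ k, 0 ≤ c k := by
    intro k; simp only [hc]; split_ifs
    · exact div_nonneg (Real.log_natCast_nonneg k) (by positivity)
    · exact le_rfl
  have hloga : 0 < Real.log a := Real.log_pos (by linarith)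
  have hlogt : ∀ t ∈ Set.Icc a b, 0 < Real.log t := fun t ht => Real.log_pos (by linarith [ht.1])
  have hder : ∀ t ∈ Set.Icc a b, HasDerivAt (fun t => (Real.log t)⁻¹) (-(t⁻¹) / Real.log t ^ 2) t := by
    intro t ht
    exact (Real.hasDerivAt_log (by linarith [ht.1])).inv (hlogt t ht).ne'
  have hcont : ContinuousOn (fun t : ℝ => -(t⁻¹) / Real.log t ^ 2) (Set.Icc a b) := by
    apply ContinuousOn.div
    · apply ContinuousOn.neg
      exact continuousOn_inv₀.mono (fun t ht => by simp; linarith [ht.1])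
    · apply ContinuousOn.pow
      exact Real.continuousOn_log.mono (fun t ht => by simp; linarith [ht.1])
    · intro t ht; exact pow_ne_zero _ (hlogt t ht).ne'
  have hIntg : MeasureTheory.IntegrableOn (deriv (fun t => (Real.log t)⁻¹)) (Set.Icc a b)
      MeasureTheory.volume := by
    refine (hcont.integrableOn_Icc).congr_fun ?_ measurableSet_Icc
    intro t ht; exact (hder t ht).deriv.symm
  have key := sum_mul_eq_sub_sub_integral_mul c (f := fun t => (Real.log t)⁻¹) (by linarith : 0 ≤ a) hab
    (fun t ht => (hder t ht).differentiableAt) hIntg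
  have hlhs : ∑ q ∈ Ioc ⌊a⌋₊ ⌊b⌋₊ with q.Prime, (1:ℝ) / q =
      ∑ k ∈ Ioc ⌊a⌋₊ ⌊b⌋₊, (Real.log (k:ℝ))⁻¹ * c k := by
    rw [Finset.sum_filter]
    apply Finset.sum_congr rfl
    intro k _
    simp only [hc]
    split_ifs with hk
    · have : Real.log k ≠ 0 := (Real.log_pos (by exact_mod_cast hk.one_lt)).ne'
      have : (k:ℝ) ≠ 0 := by exact_mod_cast hk.ne_zero
      field_simp
    · simp
  have hS : ∀ t : ℝ, 2 ≤ t → ∑ k ∈ Icc 0 ⌊t⌋₊, c k ≤ Real.log t + Real.log 4 := by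
    intro t ht
    have h1 : 1 ≤ ⌊t⌋₊ := Nat.le_floor (by push_cast; linarith)
    refine (mertens_one ⌊t⌋₊ h1).trans ?_
    gcongr
    · exact Nat.floor_le (by linarith)
  have hS0 : ∀ t : ℝ, 0 ≤ ∑ k ∈ Icc 0 ⌊t⌋₊, c k := fun t => Finset.sum_nonneg fun k _ => hc0 k
  -- the integral
  set g : ℝ → ℝ := fun t => t⁻¹ / Real.log t + Real.log 4 * (t⁻¹ / Real.log t ^ 2) with hg
  have hgc : ContinuousOn g (Set.Icc a b) := by
    apply ContinuousOn.add
    · apply ContinuousOn.div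
      · exact continuousOn_inv₀.mono (fun t ht => by simp; linarith [ht.1])
      · exact Real.continuousOn_log.mono (fun t ht => by simp; linarith [ht.1])
      · intro t ht; exact (hlogt t ht).ne'
    · apply ContinuousOn.mul continuousOn_const
      apply ContinuousOn.div
      · exact continuousOn_inv₀.mono (fun t ht => by simp; linarith [ht.1])
      · apply ContinuousOn.pow
        exact Real.continuousOn_log.mono (fun t ht => by simp; linarith [ht.1])
      · intro t ht; exact pow_ne_zero _ (hlogt t ht).ne'
  have hI : - ∫ (t : ℝ) in Set.Ioc a b, deriv (fun t => (Real.log t)⁻¹) t * ∑ k ∈ Icc 0 ⌊t⌋₊, c k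
      ≤ ∫ (t : ℝ) in Set.Ioc a b, g t := by
    rw [← MeasureTheory.integral_neg]
    apply MeasureTheory.integral_mono_of_nonneg
    · refine (MeasureTheory.ae_restrict_iff' measurableSet_Ioc).2 (Filter.Eventually.of_forall ?_)
      intro t ht
      have ht' : t ∈ Set.Icc a b := ⟨ht.1.le, ht.2⟩
      have := hlogt t ht'
      have ht0 : 0 < t := by linarith [ht.1]
      simp only [Pi.zero_apply]
      rw [(hder t ht').deriv, ← neg_mul, neg_div, neg_neg]
      have := hS0 t
      positivity
    · exact hgc.integrableOn_Icc.mono_set Set.Ioc_subset_Icc_self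
    · refine (MeasureTheory.ae_restrict_iff' measurableSet_Ioc).2 (Filter.Eventually.of_forall ?_)
      intro t ht
      have ht' : t ∈ Set.Icc a b := ⟨ht.1.le, ht.2⟩
      have h1 := hlogt t ht'
      have ht0 : 0 < t := by linarith [ht.1]
      simp only [hg]
      rw [(hder t ht').deriv, ← neg_mul, neg_div, neg_neg]
      calc t⁻¹ / Real.log t ^ 2 * ∑ k ∈ Icc 0 ⌊t⌋₊, c k
          ≤ t⁻¹ / Real.log t ^ 2 * (Real.log t + Real.log 4) := by
            gcongr
            exact hS t (by linarith [ht.1])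
        _ = _ := by field_simp
  have hFTC : ∫ (t : ℝ) in Set.Ioc a b, g t =
      (Real.log (Real.log b) - Real.log 4 * (Real.log b)⁻¹) -
      (Real.log (Real.log a) - Real.log 4 * (Real.log a)⁻¹) := by
    rw [← intervalIntegral.integral_of_le hab]
    apply intervalIntegral.integral_eq_sub_of_hasDerivAt (f := fun t => Real.log (Real.log t) - Real.log 4 * (Real.log t)⁻¹)
    · intro t ht
      rw [Set.uIcc_of_le hab] at ht
      have h1 := (Real.hasDerivAt_log (by linarith [ht.1] : t ≠ 0)).log (hlogt t ht).ne'
      have h2 := (hder t ht).const_mul (Real.log 4)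
      refine (h1.sub h2).congr_deriv ?_
      simp only [hg]; ring
    · rw [intervalIntegrable_iff_integrableOn_Ioc_of_le hab]
      exact hgc.integrableOn_Icc.mono_set Set.Ioc_subset_Icc_self
  have hlogb : Real.log a ≤ Real.log b := Real.log_le_log (by linarith) hab
  have hlogb0 : 0 < Real.log b := by linarith
  rw [hlhs, key, Real.log_div hlogb0.ne' hloga.ne']
  have h1 : (Real.log b)⁻¹ * ∑ k ∈ Icc 0 ⌊b⌋₊, c k ≤ 1 + Real.log 4 * (Real.log b)⁻¹ := by
    calc _ ≤ (Real.log b)⁻¹ * (Real.log b + Real.log 4) := by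
          gcongr; exact hS b (by linarith)
      _ = _ := by field_simp
  have h2 : 0 ≤ (Real.log a)⁻¹ * ∑ k ∈ Icc 0 ⌊a⌋₊, c k := mul_nonneg (by positivity) (hS0 a)
  have h3 : Real.log 4 * (Real.log a)⁻¹ ≤ 2 := by
    have h4 : Real.log 4 = 2 * Real.log 2 := by
      rw [show (4:ℝ) = 2^2 by norm_num, Real.log_pow]; norm_num
    have : Real.log 2 ≤ Real.log a := Real.log_le_log (by norm_num) ha
    rw [← div_eq_mul_inv, div_le_iff₀ hloga]; linarith
  linarith

/-- primes up to `N` -/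
def PR (N : ℕ) : Finset ℕ := {p ∈ Icc 1 N | p.Prime}

open Classical in
/-- primes in `(w, N]` -/
noncomputable def Pw (w : ℝ) (N : ℕ) : Finset ℕ := {q ∈ Icc 1 N | q.Prime ∧ w < q}

/-- the rough prime factors -/
noncomputable def Fp (w : ℝ) (N n : ℕ) : Finset ℕ := {q ∈ Pw w N | q ∣ n}

/-- log of the smooth part -/
noncomputable def Lsm (w : ℝ) (n : ℕ) : ℝ :=
  ∑ q ∈ Icc 1 ⌊w⌋₊ with q.Prime, (n.factorization q : ℝ) * Real.log q

def sqbad (w : ℝ) (n : ℕ) : Prop := ∃ s : ℕ, w < s ∧ s ^ 2 ∣ n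

def BTH (C c : ℝ) (N : ℕ) : Prop := ∀ d : ℕ, 1 ≤ d → (d:ℝ) ≤ (N:ℝ) ^ (1 - c) →
  ∑ q ∈ d.primeFactors, (1:ℝ) / q ≤ 1 / 2 → (cnt N d : ℝ) ≤ C * (N / Real.log N) * (1 / d)

lemma mem_PR {N p : ℕ} : p ∈ PR N ↔ p.Prime ∧ p ≤ N := by
  simp only [PR, mem_filter, mem_Icc]
  constructor
  · rintro ⟨⟨_, h⟩, h2⟩; exact ⟨h2, h⟩
  · rintro ⟨h1, h2⟩; exact ⟨⟨h1.one_le, h2⟩, h1⟩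

lemma mem_Pw {w : ℝ} {N q : ℕ} : q ∈ Pw w N ↔ q.Prime ∧ q ≤ N ∧ w < q := by
  simp only [Pw, mem_filter, mem_Icc]
  constructor
  · rintro ⟨⟨_, h⟩, h2, h3⟩; exact ⟨h2, h, h3⟩
  · rintro ⟨h1, h2, h3⟩; exact ⟨⟨h1.one_le, h2⟩, h1, h3⟩

lemma cnt_eq (N d : ℕ) : cnt N d = #{p ∈ PR N | d ∣ p - 1} := by
  rw [cnt, PR, Finset.filter_filter]

open Classical in
lemma sqbad_count (N : ℕ) (w : ℝ) (hw : 1 ≤ w) :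
    ((#{p ∈ PR N | sqbad w (p - 1)} : ℕ) : ℝ) ≤ 2 * N / w := by
  set k := ⌊w⌋₊ with hk
  have hk1 : 1 ≤ k := Nat.le_floor (by simpa using hw)
  have hk2 : w / 2 ≤ k := by
    have := Nat.lt_floor_add_one w
    have : (1:ℝ) ≤ k := by exact_mod_cast hk1
    linarith
  have hk0 : (0:ℝ) < k := by exact_mod_cast hk1
  have h1 : {p ∈ PR N | sqbad w (p - 1)} ⊆
      (Ioc k N).biUnion (fun s => ({n ∈ Ioc 0 N | s ^ 2 ∣ n}).image (fun n => n + 1)) := by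
    intro p hp
    simp only [mem_filter, mem_PR] at hp
    obtain ⟨⟨hpp, hpN⟩, s, hs, hd⟩ := hp
    have := hpp.two_le
    simp only [mem_biUnion, mem_image, mem_filter, mem_Ioc]
    refine ⟨s, ⟨(Nat.floor_lt (by linarith)).2 hs, ?_⟩, p - 1, ⟨⟨by omega, by omega⟩, hd⟩, by omega⟩
    have h1 := Nat.le_of_dvd (by omega) hd
    have h2 : s ≤ s^2 := Nat.le_self_pow (by norm_num) s
    omega
  have h2 : (#{p ∈ PR N | sqbad w (p - 1)}) ≤ ∑ s ∈ Ioc k N, N / s^2 := by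
    refine (Finset.card_le_card h1).trans (Finset.card_biUnion_le.trans ?_)
    apply Finset.sum_le_sum
    intro s _
    refine Finset.card_image_le.trans ?_
    rw [Nat.Ioc_filter_dvd_card_eq_div]
  have h3 : ((∑ s ∈ Ioc k N, N / s^2 : ℕ) : ℝ) ≤ N * ∑ s ∈ Ioc k N, ((s:ℝ)^2)⁻¹ := by
    push_cast
    rw [Finset.mul_sum]
    apply Finset.sum_le_sum
    intro s _
    rw [← div_eq_mul_inv]
    exact_mod_cast (Nat.cast_div_le (α := ℝ) (m := N) (n := s^2))
  have h4 : ∑ s ∈ Ioc k N, ((s:ℝ)^2)⁻¹ ≤ 2 / w := by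
    by_cases hkN : k ≤ N
    · have := sum_Ioc_inv_sq_le_sub (α := ℝ) (by omega : k ≠ 0) hkN
      refine this.trans ?_
      have hN : (0:ℝ) ≤ (N:ℝ)⁻¹ := by positivity
      have : (k:ℝ)⁻¹ ≤ 2 / w := by
        rw [inv_eq_one_div, div_le_div_iff₀ hk0 (by linarith)]
        linarith
      linarith
    · rw [Finset.Ioc_eq_empty (by omega)]
      simp; positivity
  calc _ ≤ ((∑ s ∈ Ioc k N, N / s^2 : ℕ) : ℝ) := by exact_mod_cast h2
    _ ≤ _ := h3
    _ ≤ N * (2 / w) := by gcongr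
    _ = _ := by ring

lemma geom_bound (q : ℕ) (hq : 2 ≤ q) (N : ℕ) : ∑ i ∈ Icc 1 N, (1:ℝ) / (q:ℝ)^i ≤ 2 / q := by
  have hq2 : (2:ℝ) ≤ q := by exact_mod_cast hq
  have hq1 : (0:ℝ) < q - 1 := by linarith
  have : ∀ n : ℕ, ∑ i ∈ Icc 1 n, (1:ℝ) / (q:ℝ)^i = (1 - 1 / (q:ℝ)^n) / (q - 1) := by
    intro n
    induction n with
    | zero => simp
    | succ n ih =>
      rw [Finset.sum_Icc_succ_top (by omega), ih]
      field_simp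
      ring
  rw [this, div_le_div_iff₀ hq1 (by linarith)]
  have : (0:ℝ) ≤ 1 / (q:ℝ)^N := by positivity
  nlinarith

open Classical in
lemma smooth_sum (N : ℕ) (C c β ε : ℝ) (hC : 0 < C) (hc : c ≤ 1/2) (hBT : BTH C c N) (hN : 2 ≤ N)
    (hβ : β ≤ 1/2) (hβ0 : 0 < β) (hX : 1 ≤ β * Real.log N) (hε : ε ≤ 1/6) :
    ∑ p ∈ PR N with ¬ sqbad ((N:ℝ)^ε) (p - 1), Lsm ((N:ℝ)^β) (p - 1) ≤ 16 * C * β * N := by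
  have hN1 : (1:ℝ) ≤ N := by exact_mod_cast (by omega : 1 ≤ N)
  have hN0 : (0:ℝ) < N := by linarith
  set X := Real.log N with hXd
  have hX0 : 0 < X := by
    by_contra h
    push Not at h
    nlinarith
  set u := (N:ℝ)^β with hu
  set w := (N:ℝ)^ε with hw
  set Gd := {p ∈ PR N | ¬ sqbad w (p - 1)} with hGd
  have hhalf : (N:ℝ)^((1:ℝ)/2) ≤ (N:ℝ)^(1-c) := Real.rpow_le_rpow_of_exponent_le hN1 (by linarith)
  have key : ∀ q ∈ {q ∈ Icc 1 ⌊u⌋₊ | q.Prime}, ∀ i ∈ Icc 1 N,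
      ((#{p ∈ Gd | q ^ i ∣ p - 1} : ℕ) : ℝ) ≤ C * (N / X) * (1 / (q:ℝ)^i) := by
    intro q hq i hi
    simp only [mem_filter, mem_Icc] at hq hi
    by_cases hs : ((q ^ i : ℕ) : ℝ) ≤ (N:ℝ)^((1:ℝ)/2)
    · have h1 := hBT (q^i) (Nat.one_le_pow _ _ hq.2.pos) (hs.trans hhalf) (by
        rw [Nat.primeFactors_prime_pow (by omega) hq.2]
        simp only [sum_singleton]
        have : (2:ℝ) ≤ q := by exact_mod_cast hq.2.two_le
        gcongr)
      have h2 : #{p ∈ Gd | q ^ i ∣ p - 1} ≤ cnt N (q^i) := by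
        rw [cnt_eq]
        apply Finset.card_le_card
        exact Finset.filter_subset_filter _ (Finset.filter_subset _ _)
      calc _ ≤ (cnt N (q^i) : ℝ) := by exact_mod_cast h2
        _ ≤ _ := h1
        _ = _ := by push_cast; rfl
    · have : {p ∈ Gd | q ^ i ∣ p - 1} = ∅ := by
        apply Finset.eq_empty_of_forall_notMem
        intro p hp
        simp only [hGd, mem_filter] at hp
        apply hs
        push_cast
        rcases Nat.lt_or_ge i 2 with h2 | h2
        · have : i = 1 := by omega
          subst this
          rw [pow_one]
          have h3 : (q:ℝ) ≤ u := by
            have : (⌊u⌋₊ : ℝ) ≤ u := Nat.floor_le (by positivity)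
            have : (q:ℝ) ≤ ⌊u⌋₊ := by exact_mod_cast hq.1.2
            linarith
          exact h3.trans (Real.rpow_le_rpow_of_exponent_le hN1 hβ)
        · have h3 : ((q ^ (i/2) : ℕ) : ℝ) ≤ w := by
            by_contra h
            push Not at h
            apply hp.1.2
            refine ⟨q ^ (i/2), h, ?_⟩
            rw [← pow_mul]
            exact (pow_dvd_pow q (by omega)).trans hp.2
          calc (q:ℝ)^i ≤ (q:ℝ)^((i/2)*3) := by
                apply pow_le_pow_right₀
                · exact_mod_cast hq.2.one_le
                · omega
            _ = ((q ^ (i/2) : ℕ) : ℝ)^3 := by rw [pow_mul]; push_cast; rfl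
            _ ≤ w^3 := by gcongr
            _ = (N:ℝ)^(ε*3) := by
                rw [hw, ← Real.rpow_natCast, ← Real.rpow_mul hN0.le]; norm_num
            _ ≤ _ := Real.rpow_le_rpow_of_exponent_le hN1 (by linarith)
      rw [this]
      simp only [card_empty, Nat.cast_zero]
      positivity
  have h1 : ∑ p ∈ Gd, Lsm u (p - 1) ≤
      ∑ p ∈ Gd, ∑ q ∈ Icc 1 ⌊u⌋₊ with q.Prime, ∑ i ∈ Icc 1 N,
        (if q ^ i ∣ p - 1 then Real.log q else 0) := by
    apply Finset.sum_le_sum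
    intro p hp
    apply Finset.sum_le_sum
    intro q hq
    simp only [hGd, mem_filter, mem_Icc, mem_PR] at hq hp
    rw [Nat.factorization_eq_card_pow_dvd _ hq.2, ← Finset.sum_filter, Finset.sum_const, nsmul_eq_mul]
    have : 0 ≤ Real.log q := Real.log_natCast_nonneg q
    gcongr
    intro i hi
    simp only [mem_Ico, mem_Icc] at hi ⊢
    omega
  have h2 : ∑ p ∈ Gd, ∑ q ∈ Icc 1 ⌊u⌋₊ with q.Prime, ∑ i ∈ Icc 1 N,
        (if q ^ i ∣ p - 1 then Real.log q else 0) =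
      ∑ q ∈ Icc 1 ⌊u⌋₊ with q.Prime, ∑ i ∈ Icc 1 N,
        Real.log q * ((#{p ∈ Gd | q ^ i ∣ p - 1} : ℕ) : ℝ) := by
    rw [Finset.sum_comm]
    refine Finset.sum_congr rfl fun q _ => ?_
    rw [Finset.sum_comm]
    refine Finset.sum_congr rfl fun i _ => ?_
    rw [← Finset.sum_filter, Finset.sum_const, nsmul_eq_mul, mul_comm]
  have h3 : ∑ q ∈ Icc 1 ⌊u⌋₊ with q.Prime, ∑ i ∈ Icc 1 N,
        Real.log q * ((#{p ∈ Gd | q ^ i ∣ p - 1} : ℕ) : ℝ) ≤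
      ∑ q ∈ Icc 1 ⌊u⌋₊ with q.Prime, C * (N / X) * 2 * (Real.log q / q) := by
    apply Finset.sum_le_sum
    intro q hq
    have hq' := (mem_filter.1 hq).2
    have hl : 0 ≤ Real.log q := Real.log_natCast_nonneg q
    calc _ ≤ ∑ i ∈ Icc 1 N, Real.log q * (C * (N / X) * (1 / (q:ℝ)^i)) := by
          apply Finset.sum_le_sum
          intro i hi
          gcongr
          exact key q hq i hi
      _ = Real.log q * (C * (N / X)) * ∑ i ∈ Icc 1 N, (1 / (q:ℝ)^i) := by
          rw [Finset.mul_sum]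
          refine Finset.sum_congr rfl fun i _ => ?_
          ring
      _ ≤ Real.log q * (C * (N / X)) * (2 / q) := by
          gcongr
          exact geom_bound q hq'.two_le N
      _ = _ := by ring
  have h4 : ∑ q ∈ Icc 1 ⌊u⌋₊ with q.Prime, Real.log q / q ≤ 4 * (β * X + 1) := by
    apply short_interval _ 0 _ (by positivity)
    intro q hq
    simp only [mem_filter, mem_Icc] at hq
    refine ⟨hq.2, Real.log_natCast_nonneg q, ?_⟩
    rw [zero_add, hXd, ← Real.log_rpow hN0]
    have hq0 : (0:ℝ) < q := by exact_mod_cast hq.2.pos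
    apply Real.log_le_log hq0
    have : (⌊u⌋₊ : ℝ) ≤ u := Nat.floor_le (by positivity)
    have : (q:ℝ) ≤ ⌊u⌋₊ := by exact_mod_cast hq.1.2
    linarith
  calc _ ≤ _ := h1
    _ = _ := h2
    _ ≤ _ := h3
    _ = C * (N / X) * 2 * ∑ q ∈ Icc 1 ⌊u⌋₊ with q.Prime, Real.log q / q := by rw [Finset.mul_sum]
    _ ≤ C * (N / X) * 2 * (4 * (β * X + 1)) := by gcongr
    _ ≤ C * (N / X) * 2 * (4 * (2 * (β * X))) := by gcongr; linarith
    _ = _ := by field_simp; ring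

open Classical in
lemma smooth_markov (N : ℕ) (C c β ε t : ℝ) (hC : 0 < C) (hc : c ≤ 1/2) (hBT : BTH C c N) (hN : 2 ≤ N)
    (hβ : β ≤ 1/2) (hβ0 : 0 < β) (hX : 1 ≤ β * Real.log N) (hε : ε ≤ 1/6) (ht : 0 < t) :
    ((#{p ∈ PR N | ¬ sqbad ((N:ℝ)^ε) (p - 1) ∧ t < Lsm ((N:ℝ)^β) (p - 1)} : ℕ) : ℝ)
      ≤ 16 * C * β * N / t := by
  have h := smooth_sum N C c β ε hC hc hBT hN hβ hβ0 hX hε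
  rw [le_div_iff₀ ht]
  refine le_trans ?_ h
  rw [← Finset.filter_filter, mul_comm, ← nsmul_eq_mul', ← Finset.sum_const]
  refine le_trans (Finset.sum_le_sum (g := fun p => Lsm ((N:ℝ)^β) (p - 1)) ?_) ?_
  · intro p hp
    exact (mem_filter.1 hp).2.le
  · apply Finset.sum_le_sum_of_subset_of_nonneg (Finset.filter_subset _ _)
    intro p _ _
    apply Finset.sum_nonneg
    intro q _
    exact mul_nonneg (by positivity) (Real.log_natCast_nonneg q)

lemma log_prod_primes (T : Finset ℕ) (hT : ∀ q ∈ T, q.Prime) :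
    Real.log ((∏ q ∈ T, q : ℕ) : ℝ) = ∑ q ∈ T, Real.log (q:ℝ) := by
  push_cast
  rw [Real.log_prod]
  intro q hq
  exact_mod_cast (hT q hq).ne_zero

lemma cnt_rough (N : ℕ) (C c ε : ℝ) (hc : 0 ≤ c) (hBT : BTH C c N) (hN : 2 ≤ N)
    (hε : 0 < ε) (hl : 2 ≤ ε * (N:ℝ)^ε) (T : Finset ℕ) (hT : T ⊆ Pw ((N:ℝ)^ε) N)
    (hs : ∑ q ∈ T, Real.log (q:ℝ) ≤ (1 - c) * Real.log N) :
    (cnt N (∏ q ∈ T, q) : ℝ) ≤ C * (N / Real.log N) * ∏ q ∈ T, (1:ℝ)/q := by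
  have hN1 : (2:ℝ) ≤ N := by exact_mod_cast hN
  have hN0 : (0:ℝ) < N := by linarith
  have hX : 0 < Real.log N := Real.log_pos (by linarith)
  have hTp : ∀ q ∈ T, q.Prime := fun q hq => (mem_Pw.1 (hT hq)).1
  have hTw : ∀ q ∈ T, (N:ℝ)^ε < q := fun q hq => (mem_Pw.1 (hT hq)).2.2
  have hw0 : 0 < (N:ℝ)^ε := Real.rpow_pos_of_pos hN0 _
  have hpos : 0 < ∏ q ∈ T, q := Finset.prod_pos (fun q hq => (hTp q hq).pos)
  have hpf : (∏ q ∈ T, q).primeFactors = T := Nat.primeFactors_prod hTp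
  have hcard : (#T : ℝ) * ε ≤ 1 := by
    have h1 : (#T : ℝ) * (ε * Real.log N) ≤ ∑ q ∈ T, Real.log (q:ℝ) := by
      rw [← nsmul_eq_mul, ← Finset.sum_const]
      apply Finset.sum_le_sum
      intro q hq
      rw [← Real.log_rpow hN0]
      exact Real.log_le_log hw0 (hTw q hq).le
    have h2 : ((#T : ℝ) * ε) * Real.log N ≤ 1 * Real.log N := by nlinarith
    exact le_of_mul_le_mul_right h2 hX
  have := hBT (∏ q ∈ T, q) hpos ?_ ?_
  · refine this.trans (le_of_eq ?_)
    push_cast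
    rw [Finset.prod_div_distrib, Finset.prod_const_one]
  · have hpos' : (0:ℝ) < ((∏ q ∈ T, q : ℕ) : ℝ) := by exact_mod_cast hpos
    rw [← Real.log_le_log_iff hpos' (Real.rpow_pos_of_pos hN0 _), Real.log_rpow hN0,
      log_prod_primes T hTp]
    exact hs
  · rw [hpf]
    calc ∑ q ∈ T, (1:ℝ)/q ≤ ∑ q ∈ T, 1/(N:ℝ)^ε := by
          apply Finset.sum_le_sum
          intro q hq
          exact one_div_le_one_div_of_le hw0 (hTw q hq).le
      _ = #T / (N:ℝ)^ε := by rw [Finset.sum_const, nsmul_eq_mul]; ring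
      _ ≤ 1/2 := by
          rw [div_le_iff₀ hw0]
          have : (0:ℝ) ≤ #T := by positivity
          nlinarith

lemma prod_bound (N : ℕ) (ε : ℝ) (hε : 0 < ε) (hε1 : ε ≤ 1) (hN : 2 ≤ N) (hl : 2 ≤ (N:ℝ)^ε) :
    ∑ T ∈ (Pw ((N:ℝ)^ε) N).powerset, ∏ q ∈ T, (1:ℝ)/(2*q)
      ≤ Real.exp (1/2 * (Real.log (1/ε) + 3)) := by
  have hN1 : (2:ℝ) ≤ N := by exact_mod_cast hN
  have hN0 : (0:ℝ) < N := by linarith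
  have hX : 0 < Real.log N := Real.log_pos (by linarith)
  rw [← Finset.prod_one_add]
  calc ∏ q ∈ Pw ((N:ℝ)^ε) N, (1 + (1:ℝ)/(2*q))
      ≤ ∏ q ∈ Pw ((N:ℝ)^ε) N, Real.exp ((1:ℝ)/(2*q)) := by
        apply Finset.prod_le_prod
        · intro q hq; positivity
        · intro q hq
          rw [add_comm]
          exact Real.add_one_le_exp _
    _ = Real.exp (1/2 * ∑ q ∈ Pw ((N:ℝ)^ε) N, (1:ℝ)/q) := by
        rw [← Real.exp_sum, Finset.mul_sum]
        congr 1
        apply Finset.sum_congr rfl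
        intro q _
        ring
    _ ≤ _ := by
        apply Real.exp_le_exp.2
        apply mul_le_mul_of_nonneg_left _ (by norm_num)
        have h := mertens_two ((N:ℝ)^ε) N hl
          (by simpa using Real.rpow_le_rpow_of_exponent_le (by linarith : (1:ℝ) ≤ N) hε1)
        have e : Real.log N / Real.log ((N:ℝ)^ε) = 1/ε := by
          rw [Real.log_rpow hN0]; field_simp
        rw [e] at h
        refine le_trans (Finset.sum_le_sum_of_subset_of_nonneg ?_ ?_) h
        · intro q hq
          rw [mem_Pw] at hq
          simp only [mem_filter, mem_Ioc, Nat.floor_natCast]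
          exact ⟨⟨(Nat.floor_lt (by linarith)).2 hq.2.2, hq.2.1⟩, hq.1⟩
        · intro q _ _; positivity

lemma prod_dvd_of_Fp {w : ℝ} {N n : ℕ} {T : Finset ℕ} (hT : T ⊆ Fp w N n) :
    (∏ q ∈ T, q) ∣ n := by
  apply Finset.prod_primes_dvd
  · intro q hq
    exact (mem_Pw.1 (mem_filter.1 (hT hq)).1).1.prime
  · intro q hq
    exact (mem_filter.1 (hT hq)).2

open Classical in
/-- general first moment over rough squarefree divisors -/
lemma moment (N : ℕ) (C c ε : ℝ) (hc : 0 ≤ c) (hBT : BTH C c N) (hN : 2 ≤ N)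
    (hε : 0 < ε) (hl : 2 ≤ ε * (N:ℝ)^ε) (𝒯 : Finset (Finset ℕ))
    (h𝒯 : ∀ T ∈ 𝒯, T ⊆ Pw ((N:ℝ)^ε) N ∧ ∑ q ∈ T, Real.log (q:ℝ) ≤ (1 - c) * Real.log N)
    (g : Finset ℕ → ℝ) (hg : ∀ T, 0 ≤ g T) (S : Finset ℕ) (hS : S ⊆ PR N) (κ : ℝ)
    (hκ : ∀ p ∈ S, κ ≤ ∑ T ∈ 𝒯 with T ⊆ Fp ((N:ℝ)^ε) N (p-1), g T) :
    #S * κ ≤ C * (N / Real.log N) * ∑ T ∈ 𝒯, g T * ∏ q ∈ T, (1:ℝ)/q := by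
  calc #S * κ = ∑ p ∈ S, κ := by rw [Finset.sum_const, nsmul_eq_mul]
    _ ≤ ∑ p ∈ S, ∑ T ∈ 𝒯 with T ⊆ Fp ((N:ℝ)^ε) N (p-1), g T := Finset.sum_le_sum hκ
    _ ≤ ∑ p ∈ PR N, ∑ T ∈ 𝒯 with T ⊆ Fp ((N:ℝ)^ε) N (p-1), g T := by
        apply Finset.sum_le_sum_of_subset_of_nonneg hS
        intro p _ _
        exact Finset.sum_nonneg (fun T _ => hg T)
    _ ≤ ∑ p ∈ PR N, ∑ T ∈ 𝒯, if (∏ q ∈ T, q) ∣ p - 1 then g T else 0 := by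
        apply Finset.sum_le_sum
        intro p _
        rw [← Finset.sum_filter]
        apply Finset.sum_le_sum_of_subset_of_nonneg
        · intro T hT
          rw [mem_filter] at hT ⊢
          exact ⟨hT.1, prod_dvd_of_Fp hT.2⟩
        · intro T _ _; exact hg T
    _ = ∑ T ∈ 𝒯, g T * cnt N (∏ q ∈ T, q) := by
        rw [Finset.sum_comm]
        apply Finset.sum_congr rfl
        intro T _
        rw [← Finset.sum_filter, Finset.sum_const, nsmul_eq_mul, cnt_eq, mul_comm]
    _ ≤ ∑ T ∈ 𝒯, g T * (C * (N / Real.log N) * ∏ q ∈ T, (1:ℝ)/q) := by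
        apply Finset.sum_le_sum
        intro T hT
        exact mul_le_mul_of_nonneg_left
          (cnt_rough N C c ε hc hBT hN hε hl T (h𝒯 T hT).1 (h𝒯 T hT).2) (hg T)
    _ = _ := by
        rw [Finset.mul_sum]
        apply Finset.sum_congr rfl
        intro T _
        ring

open Classical in
lemma many_factors (N : ℕ) (C c ε β K : ℝ) (hC : 0 < C) (hc : 0 ≤ c) (hc2 : c ≤ 1/2)
    (hBT : BTH C c N) (hN : 2 ≤ N)
    (hε : 0 < ε) (hε1 : ε ≤ 1) (hl : 2 ≤ ε * (N:ℝ)^ε) (hβ : 0 < β) :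
    (#{p ∈ PR N | Lsm ((N:ℝ)^β) (p-1) ≤ Real.log N / 2 ∧ K < #(Fp ((N:ℝ)^ε) N (p-1))} : ℝ)
      * (3/2 : ℝ)^(K - 1/β)
      ≤ C * (N / Real.log N) * Real.exp (1/2 * (Real.log (1/ε) + 3)) := by
  have hN1 : (2:ℝ) ≤ N := by exact_mod_cast hN
  have hN0 : (0:ℝ) < N := by linarith
  have hX : 0 < Real.log N := Real.log_pos (by linarith)
  have hw0 : 0 < (N:ℝ)^ε := Real.rpow_pos_of_pos hN0 _
  have hu0 : 0 < (N:ℝ)^β := Real.rpow_pos_of_pos hN0 _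
  set S : Finset ℕ := {p ∈ PR N | Lsm ((N:ℝ)^β) (p-1) ≤ Real.log N / 2 ∧ K < #(Fp ((N:ℝ)^ε) N (p-1))} with hS
  set 𝒯 : Finset (Finset ℕ) := {T ∈ (Pw ((N:ℝ)^ε) N).powerset | ∑ q ∈ T, Real.log (q:ℝ) ≤ Real.log N / 2} with h𝒯
  have key := moment N C c ε hc hBT hN hε hl 𝒯 ?_ (fun T => (1/2:ℝ)^(#T)) (fun T => by positivity) S
    (filter_subset _ _) ((3/2 : ℝ)^(K - 1/β)) ?_
  · refine key.trans (mul_le_mul_of_nonneg_left ?_ (by positivity))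
    refine le_trans ?_ (prod_bound N ε hε hε1 hN (by nlinarith))
    refine le_trans (Finset.sum_le_sum_of_subset_of_nonneg (filter_subset _ _) ?_) (le_of_eq ?_)
    · intro T _ _; positivity
    · apply Finset.sum_congr rfl
      intro T _
      rw [← Finset.prod_const, ← Finset.prod_mul_distrib]
      apply Finset.prod_congr rfl
      intro q _
      ring
  · intro T hT
    rw [h𝒯, mem_filter, mem_powerset] at hT
    exact ⟨hT.1, by nlinarith [hT.2]⟩
  · intro p hp
    rw [hS, mem_filter, mem_PR] at hp
    obtain ⟨⟨hpp, hpN⟩, hL, hK⟩ := hp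
    have hp2 := hpp.two_le
    set F := Fp ((N:ℝ)^ε) N (p-1) with hF
    set F' : Finset ℕ := F.filter (fun q : ℕ => (q:ℝ) ≤ (N:ℝ)^β) with hF'
    set F'' : Finset ℕ := F.filter (fun q : ℕ => ¬ (q:ℝ) ≤ (N:ℝ)^β) with hF''
    have hFP : ∀ q ∈ F, q.Prime := fun q hq => (mem_Pw.1 (mem_filter.1 hq).1).1
    have hFd : ∀ q ∈ F, q ∣ p - 1 := fun q hq => (mem_filter.1 hq).2
    have hcard : #F' + #F'' = #F := Finset.card_filter_add_card_filter_not _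
    have h1 : (#F'' : ℝ) * (β * Real.log N) ≤ Real.log N := by
      calc (#F'' : ℝ) * (β * Real.log N) = ∑ q ∈ F'', Real.log ((N:ℝ)^β) := by
            rw [Real.log_rpow hN0, Finset.sum_const, nsmul_eq_mul]
        _ ≤ ∑ q ∈ F'', Real.log (q:ℝ) := by
            apply Finset.sum_le_sum
            intro q hq
            apply Real.log_le_log hu0
            exact (not_le.1 (mem_filter.1 hq).2).le
        _ = Real.log ((∏ q ∈ F'', q : ℕ) : ℝ) :=
            (log_prod_primes F'' (fun q hq => hFP q (mem_filter.1 hq).1)).symm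
        _ ≤ Real.log N := by
            apply Real.log_le_log
            · exact_mod_cast Finset.prod_pos (fun q hq => (hFP q (mem_filter.1 hq).1).pos)
            · have h3 : (∏ q ∈ F'', q) ∣ p - 1 := prod_dvd_of_Fp (filter_subset _ _)
              have h4 := Nat.le_of_dvd (by omega) h3
              exact_mod_cast (by omega : (∏ q ∈ F'', q) ≤ N)
    have h2 : (#F'' : ℝ) ≤ 1/β := by
      rw [le_div_iff₀ hβ]
      have : ((#F'' : ℝ) * β) * Real.log N ≤ 1 * Real.log N := by linarith
      exact le_of_mul_le_mul_right this hX
    have h3 : K - 1/β ≤ #F' := by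
      have : (#F' : ℝ) + #F'' = #F := by exact_mod_cast hcard
      linarith
    have h4 : ∑ q ∈ F', Real.log (q:ℝ) ≤ Lsm ((N:ℝ)^β) (p-1) := by
      rw [Lsm]
      calc ∑ q ∈ F', Real.log (q:ℝ) ≤ ∑ q ∈ F', ((p-1).factorization q : ℝ) * Real.log q := by
            apply Finset.sum_le_sum
            intro q hq
            have hqF := (mem_filter.1 hq).1
            have : 1 ≤ (p-1).factorization q :=
              (hFP q hqF).factorization_pos_of_dvd (by omega) (hFd q hqF)
            have h5 : (1:ℝ) ≤ (p-1).factorization q := by exact_mod_cast this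
            have h6 : 0 ≤ Real.log (q:ℝ) := Real.log_natCast_nonneg q
            nlinarith
        _ ≤ _ := by
            apply Finset.sum_le_sum_of_subset_of_nonneg
            · intro q hq
              have hqF := (mem_filter.1 hq).1
              simp only [mem_filter, mem_Icc]
              exact ⟨⟨(hFP q hqF).one_le, Nat.le_floor (mem_filter.1 hq).2⟩, hFP q hqF⟩
            · intro q _ _
              exact mul_nonneg (by positivity) (Real.log_natCast_nonneg q)
    calc (3/2 : ℝ)^(K - 1/β) ≤ (3/2 : ℝ)^((#F' : ℕ):ℝ) :=
          Real.rpow_le_rpow_of_exponent_le (by norm_num) h3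
      _ = (3/2:ℝ)^(#F') := Real.rpow_natCast _ _
      _ = ∑ T ∈ F'.powerset, (1/2:ℝ)^(#T) := by
          have := Finset.prod_one_add (f := fun _ : ℕ => (1/2:ℝ)) F'
          simp only [Finset.prod_const] at this
          rw [← this]; norm_num
      _ ≤ _ := by
          apply Finset.sum_le_sum_of_subset_of_nonneg
          · intro T hT
            rw [mem_powerset] at hT
            have hTF : T ⊆ F := hT.trans (filter_subset _ _)
            rw [mem_filter, h𝒯, mem_filter, mem_powerset]
            refine ⟨⟨hTF.trans (filter_subset _ _), ?_⟩, hTF⟩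
            refine le_trans (Finset.sum_le_sum_of_subset_of_nonneg hT ?_) (h4.trans hL)
            intro q _ _; exact Real.log_natCast_nonneg q
          · intro T _ _; positivity

open Classical in
lemma interval_sum (P : Finset ℕ) (hP : ∀ q ∈ P, q.Prime) (Y Z : ℝ) (hY : 0 < Y) (hYZ : Y ≤ Z) :
    ∑ T ∈ P.powerset.filter (fun T : Finset ℕ => Y ≤ ∑ q ∈ T, Real.log (q:ℝ) ∧ ∑ q ∈ T, Real.log (q:ℝ) ≤ Z),
        ∏ q ∈ T, (1:ℝ)/(2*q)
      ≤ (2 * (Z - Y + 1) / Y) * ∑ T ∈ P.powerset, ∏ q ∈ T, (1:ℝ)/(2*q) := by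
  set s : Finset ℕ → ℝ := fun T => ∑ q ∈ T, Real.log (q:ℝ) with hs
  set v : Finset ℕ → ℝ := fun T => ∏ q ∈ T, (1:ℝ)/(2*q) with hv
  have hv0 : ∀ T, 0 ≤ v T := fun T => Finset.prod_nonneg (fun q _ => by positivity)
  set 𝒯 : Finset (Finset ℕ) := {T ∈ P.powerset | Y ≤ s T ∧ s T ≤ Z} with h𝒯
  change ∑ T ∈ 𝒯, v T ≤ (2 * (Z - Y + 1) / Y) * ∑ T ∈ P.powerset, v T
  set Q : Finset ℕ → Finset ℕ := fun T => P.filter (fun q : ℕ => Y - s T ≤ Real.log (q:ℝ) ∧ Real.log (q:ℝ) ≤ Z - s T) with hQ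
  have h1 : Y * ∑ T ∈ 𝒯, v T ≤ ∑ T ∈ 𝒯, ∑ q ∈ T, Real.log (q:ℝ) * v T := by
    rw [Finset.mul_sum]
    apply Finset.sum_le_sum
    intro T hT
    rw [← Finset.sum_mul]
    exact mul_le_mul_of_nonneg_right (mem_filter.1 hT).2.1 (hv0 T)
  have h2 : ∑ T ∈ 𝒯, ∑ q ∈ T, Real.log (q:ℝ) * v T ≤
      ∑ T ∈ P.powerset, ∑ q ∈ Q T, (Real.log (q:ℝ) / q) * (1/2 * v T) := by
    rw [Finset.sum_sigma', Finset.sum_sigma']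
    apply sum_le_sum_of_surj _ _ _ _ (fun y => ⟨insert y.2 y.1, y.2⟩)
    · rintro ⟨T, q⟩ _
      have := hv0 T
      have := Real.log_natCast_nonneg q
      dsimp only
      positivity
    · rintro ⟨T, q⟩ hTq
      rw [mem_sigma] at hTq
      obtain ⟨hT, hq⟩ := hTq
      dsimp only at hT hq
      rw [h𝒯, mem_filter, mem_powerset] at hT
      obtain ⟨hTP, hT1, hT2⟩ := hT
      have hsT : s T = Real.log (q:ℝ) + s (T.erase q) := (Finset.add_sum_erase T _ hq).symm
      have hvT : v T = (1:ℝ)/(2*q) * v (T.erase q) := (Finset.mul_prod_erase T _ hq).symm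
      refine ⟨⟨T.erase q, q⟩, ?_, ?_, ?_⟩
      · rw [mem_sigma]
        dsimp only
        rw [mem_powerset, hQ, mem_filter]
        exact ⟨(erase_subset _ _).trans hTP, hTP hq, by linarith, by linarith⟩
      · dsimp only
        rw [insert_erase hq]
      · dsimp only
        rw [hvT]
        apply le_of_eq
        ring
  have h3 : ∑ T ∈ P.powerset, ∑ q ∈ Q T, (Real.log (q:ℝ) / q) * (1/2 * v T) ≤
      ∑ T ∈ P.powerset, (2 * (Z - Y + 1)) * v T := by
    apply Finset.sum_le_sum
    intro T _
    rw [← Finset.sum_mul]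
    have := short_interval (Q T) (Y - s T) (Z - Y) (by linarith) (by
      intro q hq
      rw [hQ, mem_filter] at hq
      exact ⟨hP q hq.1, hq.2.1, by linarith [hq.2.2]⟩)
    nlinarith [hv0 T]
  rw [← Finset.mul_sum] at h3
  rw [div_mul_eq_mul_div, le_div_iff₀ hY]
  linarith

/-- there is a product of few rough prime factors of `n` in a given interval -/
def Gp (w : ℝ) (N : ℕ) (K Y Z : ℝ) (n : ℕ) : Prop :=
  ∃ T : Finset ℕ, T ⊆ Fp w N n ∧ (#T : ℝ) ≤ K / 2 ∧
    Y ≤ ∑ q ∈ T, Real.log (q:ℝ) ∧ ∑ q ∈ T, Real.log (q:ℝ) ≤ Z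

open Classical in
lemma few_factors (N : ℕ) (C c ε K Y Z : ℝ) (hC : 0 < C) (hc : 0 ≤ c)
    (hBT : BTH C c N) (hN : 2 ≤ N)
    (hε : 0 < ε) (hε1 : ε ≤ 1) (hl : 2 ≤ ε * (N:ℝ)^ε) (hY : 0 < Y) (hYZ : Y ≤ Z)
    (hZ : Z ≤ (1 - c) * Real.log N) :
    (#{p ∈ PR N | Gp ((N:ℝ)^ε) N K Y Z (p-1)} : ℝ)
      * (1/2 : ℝ)^(K/2)
      ≤ C * (N / Real.log N) *
        ((2 * (Z - Y + 1) / Y) * Real.exp (1/2 * (Real.log (1/ε) + 3))) := by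
  have hN1 : (2:ℝ) ≤ N := by exact_mod_cast hN
  have hX : 0 < Real.log N := Real.log_pos (by linarith)
  set 𝒯 : Finset (Finset ℕ) := {T ∈ (Pw ((N:ℝ)^ε) N).powerset |
    Y ≤ ∑ q ∈ T, Real.log (q:ℝ) ∧ ∑ q ∈ T, Real.log (q:ℝ) ≤ Z} with h𝒯
  have key := moment N C c ε hc hBT hN hε hl 𝒯 ?_ (fun T => (1/2:ℝ)^(#T)) (fun T => by positivity)
    {p ∈ PR N | Gp ((N:ℝ)^ε) N K Y Z (p-1)}
    (filter_subset _ _) ((1/2 : ℝ)^(K/2)) ?_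
  · refine key.trans (mul_le_mul_of_nonneg_left ?_ (by positivity))
    have h1 := interval_sum (Pw ((N:ℝ)^ε) N) (fun q hq => (mem_Pw.1 hq).1) Y Z hY hYZ
    have h2 := prod_bound N ε hε hε1 hN (by nlinarith [Real.rpow_pos_of_pos (by linarith : (0:ℝ) < N) ε])
    have h3 : 0 ≤ 2 * (Z - Y + 1) / Y := div_nonneg (by linarith) hY.le
    refine le_trans (le_of_eq ?_) (h1.trans (mul_le_mul_of_nonneg_left h2 h3))
    apply Finset.sum_congr rfl
    intro T _
    rw [← Finset.prod_const, ← Finset.prod_mul_distrib]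
    apply Finset.prod_congr rfl
    intro q _
    ring
  · intro T hT
    rw [h𝒯, mem_filter, mem_powerset] at hT
    exact ⟨hT.1, hT.2.2.trans hZ⟩
  · intro p hp
    obtain ⟨-, T, hTF, hTK, hTY, hTZ⟩ := mem_filter.1 hp
    have hT : T ∈ 𝒯.filter (fun T => T ⊆ Fp ((N:ℝ)^ε) N (p-1)) := by
      rw [mem_filter, h𝒯, mem_filter, mem_powerset]
      exact ⟨⟨hTF.trans (filter_subset _ _), hTY, hTZ⟩, hTF⟩
    refine le_trans ?_ (Finset.single_le_sum (f := fun T => (1/2:ℝ)^(#T))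
      (fun T _ => by positivity) hT)
    rw [← Real.rpow_natCast]
    exact Real.rpow_le_rpow_of_exponent_ge (by norm_num) (by norm_num) hTK

lemma decomp (N n m : ℕ) (w : ℝ) (hn : 1 ≤ n) (hnN : n ≤ N) (hsq : ¬ sqbad w n) (hm : m ∣ n) :
    ∑ q ∈ Fp w N m, Real.log (q:ℝ) ≤ Real.log m ∧
    Real.log m ≤ Lsm w n + ∑ q ∈ Fp w N m, Real.log (q:ℝ) := by
  have hm0 : 0 < m := Nat.pos_of_dvd_of_pos hm hn
  have hmn : m ≤ n := Nat.le_of_dvd hn hm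
  have hFP : ∀ q ∈ Fp w N m, q.Prime := fun q hq => (mem_Pw.1 (mem_filter.1 hq).1).1
  constructor
  · rw [← log_prod_primes _ hFP]
    apply Real.log_le_log
    · exact_mod_cast Finset.prod_pos (fun q hq => (hFP q hq).pos)
    · exact_mod_cast Nat.le_of_dvd hm0 (prod_dvd_of_Fp (subset_refl _))
  · classical
    rw [Real.log_nat_eq_sum_factorization, Finsupp.sum, Nat.support_factorization,
      ← Finset.sum_filter_add_sum_filter_not m.primeFactors (fun q : ℕ => (q:ℝ) ≤ w)]
    apply add_le_add
    · rw [Lsm]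
      calc ∑ q ∈ m.primeFactors.filter (fun q : ℕ => (q:ℝ) ≤ w), (m.factorization q : ℝ) * Real.log q
          ≤ ∑ q ∈ m.primeFactors.filter (fun q : ℕ => (q:ℝ) ≤ w), (n.factorization q : ℝ) * Real.log q := by
            apply Finset.sum_le_sum
            intro q _
            apply mul_le_mul_of_nonneg_right _ (Real.log_natCast_nonneg q)
            exact_mod_cast (Nat.factorization_le_iff_dvd (by omega) (by omega)).2 hm q
        _ ≤ _ := by
            apply Finset.sum_le_sum_of_subset_of_nonneg
            · intro q hq
              rw [mem_filter, Nat.mem_primeFactors] at hq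
              simp only [mem_filter, mem_Icc]
              exact ⟨⟨hq.1.1.one_le, Nat.le_floor hq.2⟩, hq.1.1⟩
            · intro q _ _
              exact mul_nonneg (by positivity) (Real.log_natCast_nonneg q)
    · calc ∑ q ∈ m.primeFactors.filter (fun q : ℕ => ¬ (q:ℝ) ≤ w), (m.factorization q : ℝ) * Real.log q
          ≤ ∑ q ∈ m.primeFactors.filter (fun q : ℕ => ¬ (q:ℝ) ≤ w), Real.log (q:ℝ) := by
            apply Finset.sum_le_sum
            intro q hq
            rw [mem_filter, Nat.mem_primeFactors] at hq
            have h1 : m.factorization q ≤ 1 := by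
              by_contra h
              push Not at h
              apply hsq
              refine ⟨q, not_le.1 hq.2, ?_⟩
              refine dvd_trans ?_ hm
              exact (hq.1.1.pow_dvd_iff_le_factorization hm0.ne').2 h
            have h2 : (m.factorization q : ℝ) ≤ 1 := by exact_mod_cast h1
            nlinarith [Real.log_natCast_nonneg q]
        _ ≤ _ := by
            apply Finset.sum_le_sum_of_subset_of_nonneg
            · intro q hq
              rw [mem_filter, Nat.mem_primeFactors] at hq
              rw [Fp, mem_filter, mem_Pw]
              have := Nat.le_of_dvd hm0 hq.1.2.1
              exact ⟨⟨hq.1.1, by omega, not_le.1 hq.2⟩, hq.1.2.1⟩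
            · intro q _ _; exact Real.log_natCast_nonneg q

lemma inclusion (N p m : ℕ) (δ ε A K : ℝ) (hδ0 : 0 < δ) (hδ1 : δ < 1) (hε : 0 < ε) (hεδ : ε < δ)
    (hε1 : ε < 1)
    (hA : 0 ≤ A) (hN : 2 ≤ N) (hw2 : 2 ≤ (N:ℝ)^ε) (hp : p.Prime) (hpN : p ≤ N)
    (hpl : (N:ℝ)^(1-ε) < p) (hsq : ¬ sqbad ((N:ℝ)^ε) (p-1))
    (hL : Lsm ((N:ℝ)^ε) (p-1) ≤ A * ε * Real.log N) (hK : (#(Fp ((N:ℝ)^ε) N (p-1)) : ℝ) ≤ K)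
    (hm : m ∣ p - 1) (hm1 : (p:ℝ)^(δ-ε) ≤ m) (hm2 : (m:ℝ) ≤ (p:ℝ)^(δ+ε)) :
    Gp ((N:ℝ)^ε) N K ((δ - (A+4)*ε) * Real.log N) ((δ + 2*ε) * Real.log N) (p-1) ∨
    Gp ((N:ℝ)^ε) N K ((1 - δ - (A+4)*ε) * Real.log N) ((1 - δ + 2*ε) * Real.log N) (p-1) := by
  have hN1 : (2:ℝ) ≤ N := by exact_mod_cast hN
  have hN0 : (0:ℝ) < N := by linarith
  have hX : 0 < Real.log N := Real.log_pos (by linarith)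
  have hp2 := hp.two_le
  have hp2' : (2:ℝ) ≤ p := by exact_mod_cast hp2
  have hp0 : (0:ℝ) < p := by linarith
  obtain ⟨m', hmm⟩ := hm
  have hm0 : 0 < m := Nat.pos_of_ne_zero (by rintro rfl; simp at hmm; omega)
  have hmp0 : 0 < m' := Nat.pos_of_ne_zero (by rintro rfl; simp at hmm; omega)
  have hm0' : (0:ℝ) < m := by exact_mod_cast hm0
  have hmpR : (0:ℝ) < m' := by exact_mod_cast hmp0
  have hmul : (m:ℝ) * m' = p - 1 := by
    have : ((p - 1 : ℕ) : ℝ) = (p:ℝ) - 1 := by push_cast [Nat.cast_sub hp.one_le]; ring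
    rw [← this, hmm]; push_cast; ring
  have hlog : Real.log m + Real.log m' = Real.log (p - 1) := by
    rw [← hmul, Real.log_mul hm0'.ne' hmpR.ne']
  obtain ⟨d1, d2⟩ := decomp N (p-1) m _ (by omega) (by omega) hsq ⟨m', hmm⟩
  obtain ⟨d3, d4⟩ := decomp N (p-1) m' _ (by omega) (by omega) hsq ⟨m, by rw [hmm, mul_comm]⟩
  set X := Real.log N with hXd
  set L := Real.log p with hLd
  have hLX : L ≤ X := Real.log_le_log hp0 (by exact_mod_cast hpN)
  have hLX' : (1 - ε) * X ≤ L := by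
    rw [hXd, ← Real.log_rpow hN0]
    exact Real.log_le_log (Real.rpow_pos_of_pos hN0 _) hpl.le
  have hl2 : Real.log 2 ≤ ε * X := by
    rw [hXd, ← Real.log_rpow hN0]
    exact Real.log_le_log (by norm_num) hw2
  have hp1 : L - Real.log 2 ≤ Real.log (p - 1) := by
    rw [hLd, ← Real.log_div hp0.ne' (by norm_num)]
    exact Real.log_le_log (by positivity) (by linarith)
  have hp1' : Real.log (p - 1) ≤ L := Real.log_le_log (by linarith) (by linarith)
  have e1 : (δ - ε) * L ≤ Real.log m := by
    rw [hLd, ← Real.log_rpow hp0]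
    exact Real.log_le_log (Real.rpow_pos_of_pos hp0 _) hm1
  have e2 : Real.log m ≤ (δ + ε) * L := by
    rw [hLd, ← Real.log_rpow hp0]
    exact Real.log_le_log hm0' hm2
  have hεX : 0 < ε * X := by positivity
  have e3 : (δ - 2 * ε) * X ≤ Real.log m := by
    have h1 : (δ - ε) * ((1 - ε) * X) ≤ (δ - ε) * L :=
      mul_le_mul_of_nonneg_left hLX' (by linarith)
    have h2 : 0 ≤ (1 - δ + ε) * (ε * X) := mul_nonneg (by linarith) hεX.le
    nlinarith
  have e4 : Real.log m ≤ (δ + ε) * X :=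
    e2.trans (mul_le_mul_of_nonneg_left hLX (by linarith))
  have hsub1 : Fp ((N:ℝ)^ε) N m ⊆ Fp ((N:ℝ)^ε) N (p-1) := by
    intro q hq
    rw [Fp, mem_filter] at hq ⊢
    exact ⟨hq.1, hq.2.trans ⟨m', hmm⟩⟩
  have hsub2 : Fp ((N:ℝ)^ε) N m' ⊆ Fp ((N:ℝ)^ε) N (p-1) := by
    intro q hq
    rw [Fp, mem_filter] at hq ⊢
    exact ⟨hq.1, hq.2.trans ⟨m, by rw [hmm, mul_comm]⟩⟩
  have hdis : Disjoint (Fp ((N:ℝ)^ε) N m) (Fp ((N:ℝ)^ε) N m') := by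
    rw [Finset.disjoint_left]
    intro q hq hq'
    rw [Fp, mem_filter] at hq hq'
    apply hsq
    refine ⟨q, (mem_Pw.1 hq.1).2.2, ?_⟩
    rw [hmm, pow_two]
    exact mul_dvd_mul hq.2 hq'.2
  have hcard : (#(Fp ((N:ℝ)^ε) N m) : ℝ) + #(Fp ((N:ℝ)^ε) N m') ≤ K := by
    refine le_trans ?_ hK
    rw [← Nat.cast_add, ← Finset.card_union_of_disjoint hdis]
    exact_mod_cast Finset.card_le_card (Finset.union_subset hsub1 hsub2)
  by_cases hc : (#(Fp ((N:ℝ)^ε) N m) : ℝ) ≤ K / 2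
  · left
    refine ⟨_, hsub1, hc, ?_, ?_⟩ <;> linarith
  · right
    refine ⟨_, hsub2, by linarith, ?_, ?_⟩ <;> linarith

/-- `p - 1` has a divisor near `p ^ δ` -/
def badp (δ ε : ℝ) (p : ℕ) : Prop :=
  ∃ m : ℕ, m ∣ (p - 1) ∧ (p : ℝ) ^ (δ - ε) ≤ (m : ℝ) ∧ (m : ℝ) ≤ (p : ℝ) ^ (δ + ε)

open Classical in
lemma Gp_count (N : ℕ) (C c ε K A δ : ℝ) (hC : 0 < C) (hc : 0 < c)
    (hBT : BTH C c N) (hN : 2 ≤ N) (hA : 0 < A)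
    (hε : 0 < ε) (hε1 : ε ≤ 1) (hl : 2 ≤ ε * (N:ℝ)^ε) (hX1 : 1 ≤ ε * Real.log N)
    (h1 : 2 * c ≤ δ) (h2 : 2 * c ≤ 1 - δ) (h3 : (A + 4) * ε ≤ c) :
    (#{p ∈ PR N | Gp ((N:ℝ)^ε) N K ((δ - (A+4)*ε) * Real.log N) ((δ + 2*ε) * Real.log N) (p-1)} : ℝ)
      ≤ (N / Real.log N) * (C * (2*(A+7)*ε/c) * Real.exp (1/2 * (Real.log (1/ε) + 3)) / (1/2:ℝ)^(K/2)) := by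
  have hN1 : (2:ℝ) ≤ N := by exact_mod_cast hN
  have hX : 0 < Real.log N := Real.log_pos (by linarith)
  have hAε : 0 < A * ε := by positivity
  have hY : c * Real.log N ≤ (δ - (A+4)*ε) * Real.log N :=
    mul_le_mul_of_nonneg_right (by linarith) hX.le
  have hcX : 0 < c * Real.log N := by positivity
  have key := few_factors N C c ε K ((δ - (A+4)*ε) * Real.log N) ((δ + 2*ε) * Real.log N) hC hc.le
    hBT hN hε hε1 hl (by linarith) (mul_le_mul_of_nonneg_right (by linarith) hX.le)
    (mul_le_mul_of_nonneg_right (by linarith) hX.le)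
  have hp : (0:ℝ) < (1/2:ℝ)^(K/2) := by positivity
  rw [← mul_div_assoc, le_div_iff₀ hp]
  refine key.trans ?_
  have hr : 2 * ((δ + 2*ε) * Real.log N - (δ - (A+4)*ε) * Real.log N + 1) / ((δ - (A+4)*ε) * Real.log N)
      ≤ 2*(A+7)*ε/c := by
    calc _ ≤ 2 * ((A+7)*ε*Real.log N) / (c * Real.log N) := by
          gcongr
          linarith
      _ = _ := by field_simp
  have hD := Real.exp_pos (1/2 * (Real.log (1/ε) + 3))
  have hR : 0 ≤ C * ((N:ℝ) / Real.log N) := by positivity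
  calc _ ≤ C * ((N:ℝ) / Real.log N) * ((2*(A+7)*ε/c) * Real.exp (1/2 * (Real.log (1/ε) + 3))) :=
        mul_le_mul_of_nonneg_left (mul_le_mul_of_nonneg_right hr hD.le) hR
    _ = _ := by ring

open Classical in
lemma bad_count (N : ℕ) (C c ε β K A δ : ℝ) (hC : 0 < C) (hc : 0 < c)
    (hBT : BTH C c N) (hN : 2 ≤ N) (hA : 0 < A)
    (hε : 0 < ε) (hε1 : ε ≤ 1/6) (hl : 2 ≤ ε * (N:ℝ)^ε) (hX1 : 1 ≤ ε * Real.log N)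
    (h1 : 2 * c ≤ δ) (h2 : 2 * c ≤ 1 - δ) (h3 : (A + 4) * ε ≤ c)
    (hβ : 0 < β) (hβ1 : β ≤ 1/2) (hX2 : 1 ≤ β * Real.log N) :
    (#{p ∈ PR N | badp δ ε p} : ℝ) ≤ (N / Real.log N) * (16*C/A + 32*C*β
      + C * Real.exp (1/2 * (Real.log (1/ε) + 3)) / (3/2:ℝ)^(K-1/β)
      + 2 * (C * (2*(A+7)*ε/c) * Real.exp (1/2 * (Real.log (1/ε) + 3)) / (1/2:ℝ)^(K/2)))
      + 3 * (N / (N:ℝ)^ε) := by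
  have hN1 : (2:ℝ) ≤ N := by exact_mod_cast hN
  have hN0 : (0:ℝ) < N := by linarith
  have hX : 0 < Real.log N := Real.log_pos (by linarith)
  have hw0 : 0 < (N:ℝ)^ε := Real.rpow_pos_of_pos hN0 _
  have hw2 : 2 ≤ (N:ℝ)^ε := by nlinarith
  have hAε : 0 < A * ε := by positivity
  set w := (N:ℝ)^ε with hw
  set X := Real.log N with hXd
  set E0 : Finset ℕ := {p ∈ PR N | (p:ℝ) ≤ (N:ℝ)^(1-ε)} with hE0
  set E1 : Finset ℕ := {p ∈ PR N | sqbad w (p-1)} with hE1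
  set E2 : Finset ℕ := {p ∈ PR N | ¬ sqbad w (p-1) ∧ A * ε * X < Lsm w (p-1)} with hE2
  set E3 : Finset ℕ := {p ∈ PR N | ¬ sqbad w (p-1) ∧ X / 2 < Lsm ((N:ℝ)^β) (p-1)} with hE3
  set E4 : Finset ℕ := {p ∈ PR N | Lsm ((N:ℝ)^β) (p-1) ≤ X / 2 ∧ K < #(Fp w N (p-1))} with hE4
  set G1 : Finset ℕ := {p ∈ PR N | Gp w N K ((δ - (A+4)*ε) * X) ((δ + 2*ε) * X) (p-1)} with hG1
  set G2 : Finset ℕ := {p ∈ PR N | Gp w N K ((1 - δ - (A+4)*ε) * X) ((1 - δ + 2*ε) * X) (p-1)} with hG2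
  have hsub : {p ∈ PR N | badp δ ε p} ⊆ E0 ∪ (E1 ∪ (E2 ∪ (E3 ∪ (E4 ∪ (G1 ∪ G2))))) := by
    intro p hp
    rw [mem_filter] at hp
    obtain ⟨hpN, m, hm, hm1, hm2⟩ := hp
    simp only [mem_union, hE0, hE1, hE2, hE3, hE4, hG1, hG2, mem_filter, hpN, true_and]
    by_contra hcon
    push Not at hcon
    obtain ⟨g0, g1, g2, g3, g4, g5, g6⟩ := hcon
    have := inclusion N p m δ ε A K (by linarith) (by linarith) hε (by nlinarith) (by linarith) hA.le hN
      hw2 (mem_PR.1 hpN).1 (mem_PR.1 hpN).2 g0 g1 (g2 g1) (g4 (g3 g1)) hm hm1 hm2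
    rcases this with h | h
    · exact g5 h
    · exact g6 h
  have b0 : (#E0 : ℝ) ≤ N / w := by
    have hs : E0 ⊆ Icc 1 ⌊(N:ℝ)^(1-ε)⌋₊ := by
      intro p hp
      rw [hE0, mem_filter, mem_PR] at hp
      rw [mem_Icc]
      exact ⟨hp.1.1.one_le, Nat.le_floor hp.2⟩
    have h := Finset.card_le_card hs
    rw [Nat.card_Icc, Nat.add_sub_cancel] at h
    have e : (N:ℝ)^(1-ε) = N / w := by rw [Real.rpow_sub hN0, Real.rpow_one]
    rw [← e]
    exact (by exact_mod_cast h : (#E0 : ℝ) ≤ ⌊(N:ℝ)^(1-ε)⌋₊).trans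
      (Nat.floor_le (Real.rpow_nonneg hN0.le _))
  have b1 : (#E1 : ℝ) ≤ 2 * (N / w) := by
    rw [← mul_div_assoc]
    exact sqbad_count N w (by linarith)
  have b2 : (#E2 : ℝ) ≤ (N / X) * (16*C/A) := by
    refine (smooth_markov N C c ε ε (A*ε*X) hC (by linarith) hBT hN (by linarith) hε hX1 hε1
      (by positivity)).trans (le_of_eq ?_)
    field_simp
  have b3 : (#E3 : ℝ) ≤ (N / X) * (32*C*β) := by
    refine (smooth_markov N C c β ε (X/2) hC (by linarith) hBT hN hβ1 hβ hX2 hε1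
      (by positivity)).trans (le_of_eq ?_)
    field_simp
    norm_num
  have b4 : (#E4 : ℝ) ≤ (N / X) * (C * Real.exp (1/2 * (Real.log (1/ε) + 3)) / (3/2:ℝ)^(K-1/β)) := by
    rw [← mul_div_assoc, le_div_iff₀ (by positivity)]
    refine (many_factors N C c ε β K hC hc.le (by linarith) hBT hN hε (by linarith) hl hβ).trans
      (le_of_eq ?_)
    ring
  have b5 := Gp_count N C c ε K A δ hC hc hBT hN hA hε (by linarith) hl hX1 h1 h2 h3
  have b6 := Gp_count N C c ε K A (1-δ) hC hc hBT hN hA hε (by linarith) hl hX1 h2 (by linarith) h3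
  have hcard : (#{p ∈ PR N | badp δ ε p} : ℝ) ≤ #E0 + (#E1 + (#E2 + (#E3 + (#E4 + (#G1 + #G2))))) := by
    have h := Finset.card_le_card hsub
    have u1 := Finset.card_union_le E0 (E1 ∪ (E2 ∪ (E3 ∪ (E4 ∪ (G1 ∪ G2)))))
    have u2 := Finset.card_union_le E1 (E2 ∪ (E3 ∪ (E4 ∪ (G1 ∪ G2))))
    have u3 := Finset.card_union_le E2 (E3 ∪ (E4 ∪ (G1 ∪ G2)))
    have u4 := Finset.card_union_le E3 (E4 ∪ (G1 ∪ G2))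
    have u5 := Finset.card_union_le E4 (G1 ∪ G2)
    have u6 := Finset.card_union_le G1 G2
    have : #{p ∈ PR N | badp δ ε p} ≤ #E0 + (#E1 + (#E2 + (#E3 + (#E4 + (#G1 + #G2))))) := by omega
    exact_mod_cast this
  have hsum := add_le_add b0 (add_le_add b1 (add_le_add b2 (add_le_add b3 (add_le_add b4 (add_le_add b5 b6)))))
  refine hcard.trans (hsum.trans (le_of_eq ?_))
  ring

open Filter Topology in
lemma tends_exp (κ b : ℝ) (hκ : 0 < κ) :
    Tendsto (fun ε : ℝ => Real.exp (b - κ * Real.log (1/ε))) (𝓝[>] 0) (𝓝 0) := by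
  apply Real.tendsto_exp_atBot.comp
  have h : Tendsto (fun ε : ℝ => b + κ * Real.log ε) (𝓝[>] 0) atBot :=
    tendsto_atBot_add_const_left _ b (Real.tendsto_log_nhdsGT_zero.const_mul_atBot hκ)
  refine h.congr (fun ε => ?_)
  rw [one_div, Real.log_inv]; ring

open Filter Topology in
lemma tends_E4 (C β : ℝ) :
    Tendsto (fun ε : ℝ => C * Real.exp (1/2 * (Real.log (1/ε) + 3)) / (3/2:ℝ)^(4/3 * Real.log (1/ε) -1/β))
      (𝓝[>] 0) (𝓝 0) := by
  have hlog : 3/8 < Real.log (3/2) := by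
    have h1 : Real.exp 3 < (3/2:ℝ)^8 := by
      have : Real.exp 3 = Real.exp 1 ^ 3 := by rw [← Real.exp_nat_mul]; norm_num
      rw [this]
      have h2 := Real.exp_one_lt_d9
      calc Real.exp 1 ^ 3 < 2.7182818286 ^ 3 := by gcongr
        _ < _ := by norm_num
    have h3 := Real.log_lt_log (Real.exp_pos 3) h1
    rw [Real.log_exp, Real.log_pow] at h3
    push_cast at h3
    linarith
  have h := (tends_exp (4/3 * Real.log (3/2) - 1/2) (3/2 + Real.log (3/2) * (1/β)) (by linarith)).const_mul C
  rw [mul_zero] at h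
  refine h.congr (fun ε => ?_)
  rw [Real.rpow_def_of_pos (by norm_num), mul_div_assoc, ← Real.exp_sub]
  congr 2
  ring

open Filter Topology in
lemma tends_G (C A c : ℝ) :
    Tendsto (fun ε : ℝ => 2 * (C * (2*(A+7)*ε/c) * Real.exp (1/2 * (Real.log (1/ε) + 3)) /
      (1/2:ℝ)^((4/3 * Real.log (1/ε))/2)))
      (𝓝[>] 0) (𝓝 0) := by
  have hlog := Real.log_two_lt_d9
  have h := (tends_exp (1/2 - 2/3 * Real.log 2) (3/2) (by linarith)).const_mul (2 * (C * (2*(A+7)/c)))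
  rw [mul_zero] at h
  refine h.congr' ?_
  filter_upwards [self_mem_nhdsWithin] with ε hε
  have hε : 0 < ε := hε
  rw [Real.rpow_def_of_pos (by norm_num)]
  have e1 : ε = Real.exp (- Real.log (1/ε)) := by
    rw [one_div, Real.log_inv, neg_neg, Real.exp_log hε]
  have e2 : Real.log (1/2) = - Real.log 2 := by rw [one_div, Real.log_inv]
  rw [e2]
  set l := Real.log (1/ε) with hl
  have e3 : Real.exp (3/2 - (1/2 - 2/3 * Real.log 2) * l) =
      Real.exp (-l) * Real.exp (1/2 * (l + 3)) / Real.exp (-Real.log 2 * (4/3 * l / 2)) := by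
    rw [← Real.exp_add, ← Real.exp_sub]
    congr 1
    ring
  rw [e3, ← e1]
  ring

open Filter Topology Classical in
lemma bad_small (δ : ℝ) (hδ0 : 0 < δ) (hδ1 : δ < 1) (η : ℝ) (hη : 0 < η) :
    ∀ᶠ ε in 𝓝[>] (0:ℝ), ∀ᶠ N : ℕ in atTop,
      (#{p ∈ PR N | badp δ ε p} : ℝ) ≤ η * (N / Real.log N) := by
  set c := min δ (1 - δ) / 2 with hc
  have hm0 : 0 < min δ (1 - δ) := lt_min hδ0 (by linarith)
  have hc0 : 0 < c := by positivity
  have h1 : 2 * c ≤ δ := by have := min_le_left δ (1-δ); linarith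
  have h2 : 2 * c ≤ 1 - δ := by have := min_le_right δ (1-δ); linarith
  obtain ⟨C, hC, hBT⟩ := brun_titchmarsh c hc0
  set A := 128 * C / η with hA
  have hA0 : 0 < A := by positivity
  set β := min (1/2) (η / (256 * C)) with hβ
  have hβ0 : 0 < β := lt_min (by norm_num) (by positivity)
  have hβ1 : β ≤ 1/2 := min_le_left _ _
  have hβ2 : 32 * C * β ≤ η / 8 := by
    calc 32 * C * β ≤ 32 * C * (η / (256 * C)) := by
          apply mul_le_mul_of_nonneg_left (min_le_right _ _) (by positivity)
      _ = η / 8 := by field_simp; norm_num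
  have hA2 : 16 * C / A = η / 8 := by rw [hA]; field_simp; norm_num
  have hlin : ∀ᶠ ε in 𝓝[>] (0:ℝ), ε ≤ min (1/6) (c / (A + 4)) := by
    filter_upwards [Ioc_mem_nhdsGT (show (0:ℝ) < min (1/6) (c / (A + 4)) from
      lt_min (by norm_num) (by positivity))] with ε hε using hε.2
  filter_upwards [self_mem_nhdsWithin, hlin, (tends_E4 C β).eventually (gt_mem_nhds (show (0:ℝ) < η/8 by positivity)),
    (tends_G C A c).eventually (gt_mem_nhds (show (0:ℝ) < η/8 by positivity))] with ε hε hε1 hE4 hG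
  have hε : 0 < ε := hε
  have h3 : (A + 4) * ε ≤ c := by
    have := hε1.trans (min_le_right _ _)
    rw [le_div_iff₀ (by positivity)] at this
    linarith
  have hlogt : Tendsto (fun N : ℕ => Real.log N) atTop atTop :=
    Real.tendsto_log_atTop.comp tendsto_natCast_atTop_atTop
  have hpow : Tendsto (fun N : ℕ => (N:ℝ)^ε) atTop atTop :=
    (tendsto_rpow_atTop hε).comp tendsto_natCast_atTop_atTop
  have hlo : ∀ᶠ N : ℕ in atTop, Real.log N ≤ η/24 * (N:ℝ)^ε := by
    have := ((isLittleO_log_rpow_atTop hε).bound (show (0:ℝ) < η/24 by positivity))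
    have := tendsto_natCast_atTop_atTop.eventually this
    filter_upwards [this] with N hN
    rw [Real.norm_of_nonneg (Real.log_natCast_nonneg N), Real.norm_of_nonneg (by positivity)] at hN
    exact hN
  filter_upwards [hBT, eventually_ge_atTop 2, (hpow.const_mul_atTop hε).eventually_ge_atTop 2,
    (hlogt.const_mul_atTop hε).eventually_ge_atTop 1, (hlogt.const_mul_atTop hβ0).eventually_ge_atTop 1,
    hlo] with N hB hN hl hX1 hX2 hlo
  have key := bad_count N C c ε β (4/3 * Real.log (1/ε)) A δ hC hc0 hB hN hA0 hε
    (hε1.trans (min_le_left _ _)) hl hX1 h1 h2 h3 hβ0 hβ1 hX2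
  have hN1 : (2:ℝ) ≤ N := by exact_mod_cast hN
  have hN0 : (0:ℝ) < N := by linarith
  have hX : 0 < Real.log N := Real.log_pos (by linarith)
  have hw0 : 0 < (N:ℝ)^ε := Real.rpow_pos_of_pos hN0 _
  have hR : 0 < (N:ℝ) / Real.log N := by positivity
  have hlast : 3 * ((N:ℝ) / (N:ℝ)^ε) ≤ η / 8 * (N / Real.log N) := by
    rw [← mul_div_assoc, ← mul_div_assoc, div_le_div_iff₀ hw0 hX]
    have := mul_le_mul_of_nonneg_left hlo hN0.le
    linarith
  rw [hA2] at key
  refine key.trans ?_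
  calc _ ≤ (N / Real.log N) * (η/8 + η/8 + η/8 + η/8) + η / 8 * (N / Real.log N) := by
        apply add_le_add (mul_le_mul_of_nonneg_left _ hR.le) hlast
        linarith
    _ = (5/8) * (η * (N / Real.log N)) := by ring
    _ ≤ _ := by
        have : 0 < η * (N / Real.log N) := by positivity
        linarith

open Filter in
lemma pi_lower : ∀ᶠ N : ℕ in atTop, (1/2) * ((N:ℝ) / Real.log N) ≤ (Nat.primeCounting N : ℝ) := by
  have hlo : ∀ᶠ N : ℕ in atTop, Real.log N ≤ 1/100 * (N:ℝ) := by
    have := (Real.isLittleO_log_id_atTop.bound (show (0:ℝ) < 1/100 by positivity))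
    have := tendsto_natCast_atTop_atTop.eventually this
    filter_upwards [this] with N hN
    rw [Real.norm_of_nonneg (Real.log_natCast_nonneg N)] at hN
    simpa using hN
  filter_upwards [hlo, eventually_ge_atTop 100] with N hN hN2
  have h := Chebyshev.pi_ge (n := N)
  have hN3 : (100:ℝ) ≤ N := by exact_mod_cast hN2
  have hX : 0 < Real.log N := Real.log_pos (by linarith)
  refine le_trans ?_ h
  rw [← mul_div_assoc]
  apply div_le_div_of_nonneg_right _ hX.le
  have h1 : Real.log (N+1) ≤ Real.log 2 + Real.log N := by
    rw [← Real.log_mul (by norm_num) (by linarith)]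
    exact Real.log_le_log (by linarith) (by linarith)
  have h2 := Real.log_two_gt_d9
  have h3 := Real.log_two_lt_d9
  nlinarith

lemma PR_card (N : ℕ) : #(PR N) = Nat.primeCounting N := by
  rw [Nat.primeCounting, Nat.primeCounting', Nat.count_eq_card_filter_range]
  congr 1
  ext p
  rw [mem_PR, mem_filter, mem_range]
  constructor
  · rintro ⟨h1, h2⟩; exact ⟨by omega, h1⟩
  · rintro ⟨h1, h2⟩; exact ⟨h2, by omega⟩

open Classical in
lemma good_card (δ ε : ℝ) (x : ℕ) :
    (Nat.card {p : ℕ | Nat.Prime p ∧ p ≤ x ∧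
              ¬ ∃ m : ℕ, m ∣ (p - 1) ∧
                (p : ℝ) ^ (δ - ε) ≤ (m : ℝ) ∧ (m : ℝ) ≤ (p : ℝ) ^ (δ + ε)} : ℝ)
      = (Nat.primeCounting x : ℝ) - #{p ∈ PR x | badp δ ε p} := by
  have h : {p : ℕ | Nat.Prime p ∧ p ≤ x ∧
              ¬ ∃ m : ℕ, m ∣ (p - 1) ∧
                (p : ℝ) ^ (δ - ε) ≤ (m : ℝ) ∧ (m : ℝ) ≤ (p : ℝ) ^ (δ + ε)}
      = ((PR x).filter (fun p => ¬ badp δ ε p) : Finset ℕ) := by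
    ext p
    rw [Finset.mem_coe, mem_filter, mem_PR, and_assoc]
    rfl
  have h2 := Finset.card_filter_add_card_filter_not (s := PR x) (fun p => badp δ ε p)
  rw [PR_card] at h2
  rw [h, Nat.card_coe_set_eq, Set.ncard_coe_finset, ← h2]
  push_cast
  ring

end Aux

open Filter

/-- Fix `δ ∈ (0,1)`. For `ε > 0`, let `d(ε)` be the lower density, relative to the
primes, of the set of primes `p` such that `p - 1` has no divisor in the interval
`[p^(δ-ε), p^(δ+ε)]`. Then `d(ε) → 1` as `ε → 0⁺`. -/
theorem stmt_14 (δ : ℝ) (hδ : δ ∈ Set.Ioo (0 : ℝ) 1) :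
    Tendsto (fun ε : ℝ =>
        liminf (fun x : ℕ =>
          ((Nat.card {p : ℕ | Nat.Prime p ∧ p ≤ x ∧
              ¬ ∃ m : ℕ, m ∣ (p - 1) ∧
                (p : ℝ) ^ (δ - ε) ≤ (m : ℝ) ∧ (m : ℝ) ≤ (p : ℝ) ^ (δ + ε)} : ℝ)
            / (Nat.primeCounting x : ℝ))) atTop)
      (nhdsWithin 0 (Set.Ioi 0)) (nhds 1) := by
  classical
  simp_rw [good_card]
  have hle : ∀ (ε : ℝ) (x : ℕ), ((Nat.primeCounting x : ℝ) - (Finset.card {p ∈ PR x | badp δ ε p})) /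
      (Nat.primeCounting x : ℝ) ≤ 1 := by
    intro ε x
    apply div_le_one_of_le₀ _ (by positivity)
    have : (0:ℝ) ≤ (Finset.card {p ∈ PR x | badp δ ε p}) := by positivity
    linarith
  have hge : ∀ (ε : ℝ) (x : ℕ), 0 ≤ ((Nat.primeCounting x : ℝ) - (Finset.card {p ∈ PR x | badp δ ε p})) /
      (Nat.primeCounting x : ℝ) := by
    intro ε x
    apply div_nonneg _ (by positivity)
    have h := Finset.card_filter_le (PR x) (fun p => badp δ ε p)
    rw [PR_card] at h
    have h' : ((Finset.card {p ∈ PR x | badp δ ε p}) : ℝ) ≤ Nat.primeCounting x := by exact_mod_cast h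
    linarith
  rw [Metric.tendsto_nhds]
  intro η hη
  filter_upwards [bad_small δ hδ.1 hδ.2 (η/4) (by positivity)] with ε hε
  have hup : liminf (fun x : ℕ => ((Nat.primeCounting x : ℝ) - (Finset.card {p ∈ PR x | badp δ ε p})) /
      (Nat.primeCounting x : ℝ)) atTop ≤ 1 := by
    apply liminf_le_of_le
    · exact isBoundedUnder_of ⟨0, fun x => hge ε x⟩
    · intro b hb
      obtain ⟨x, hx⟩ := hb.exists
      exact hx.trans (hle ε x)
  have hlow : 1 - η/2 ≤ liminf (fun x : ℕ => ((Nat.primeCounting x : ℝ) - (Finset.card {p ∈ PR x | badp δ ε p})) /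
      (Nat.primeCounting x : ℝ)) atTop := by
    apply le_liminf_of_le
    · exact (isBoundedUnder_of ⟨1, fun x => hle ε x⟩ : IsBoundedUnder (· ≤ ·) atTop _).isCoboundedUnder_ge
    · filter_upwards [hε, pi_lower, eventually_ge_atTop 2] with N h1 h2 hN
      have hN1 : (2:ℝ) ≤ N := by exact_mod_cast hN
      have hX : 0 < Real.log N := Real.log_pos (by linarith)
      have hR : 0 < (N:ℝ) / Real.log N := by positivity
      have hpi : (0:ℝ) < Nat.primeCounting N := by linarith
      rw [le_div_iff₀ hpi]
      nlinarith
  rw [Real.dist_eq, abs_lt]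
  constructor <;> linarith
end

section
/- Let a_1,…,a_k be nonzero, multiplicatively independent integers. Then there is a positive constant C (depending on a_1,…,a_k) such that, for every real y ≥ 1, the number of primes p not dividing a_1⋯a_k for which ℓ_{a_1,…,a_k}(p) ≤ y is at most C·y^{1+1/k}. -/
namespace Matthews

/-- Integer `∏ a_i^{d_i⁺} - ∏ a_i^{d_i⁻}`. -/
def num {k : ℕ} (a : Fin k → ℤ) (d : Fin k → ℤ) : ℤ :=
  (∏ i, a i ^ (d i).toNat) - ∏ i, a i ^ (-d i).toNat

lemma num_ne_zero {k : ℕ} (a : Fin k → ℤ) (ha : ∀ i, a i ≠ 0)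
    (hind : ∀ e : Fin k → ℤ, (∏ i, (a i : ℚ) ^ e i) = 1 → ∀ i, e i = 0)
    (d : Fin k → ℤ) (hd : d ≠ 0) : num a d ≠ 0 := by
  intro h
  apply hd
  funext i
  refine hind d ?_ i
  have h1 : (∏ i, a i ^ (d i).toNat) = ∏ i, a i ^ (-d i).toNat := sub_eq_zero.mp h
  have h2 : (∏ i, (a i : ℚ) ^ (d i).toNat) = ∏ i, (a i : ℚ) ^ (-d i).toNat := by
    exact_mod_cast congrArg (fun z : ℤ => (z : ℚ)) h1
  have h3 : ∀ i, (a i : ℚ) ^ d i = (a i : ℚ) ^ (d i).toNat / (a i : ℚ) ^ (-d i).toNat := by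
    intro i
    have hi : (a i : ℚ) ≠ 0 := by exact_mod_cast ha i
    rw [← zpow_natCast, ← zpow_natCast, ← zpow_sub₀ hi]
    congr 1
    omega
  rw [Finset.prod_congr rfl (fun i _ => h3 i), Finset.prod_div_distrib, h2, div_self]
  refine Finset.prod_ne_zero_iff.mpr fun i _ => pow_ne_zero _ ?_
  exact_mod_cast ha i

lemma natAbs_prod_le {k : ℕ} (a : Fin k → ℤ) (ha : ∀ i, a i ≠ 0) (T : ℕ) (n : Fin k → ℕ)
    (hn : ∀ i, n i ≤ T) :
    (∏ i, a i ^ n i).natAbs ≤ (∏ i, (a i).natAbs) ^ T := by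
  rw [← Finset.prod_pow]
  have : (∏ i, a i ^ n i).natAbs = ∏ i, (a i).natAbs ^ n i := by
    rw [← Int.natAbsHom_apply, map_prod]
    simp [Int.natAbs_pow]
  rw [this]
  refine Finset.prod_le_prod' fun i _ => ?_
  exact Nat.pow_le_pow_right (Int.natAbs_pos.mpr (ha i)) (hn i)

lemma card_primeFactors_le (n m : ℕ) (hn : n ≠ 0) (h : n ≤ 2 ^ m) :
    n.primeFactors.card ≤ m := by
  have h1 : 2 ^ n.primeFactors.card ≤ ∏ p ∈ n.primeFactors, p :=
    Finset.pow_card_le_prod _ _ _ fun p hp => (Nat.prime_of_mem_primeFactors hp).two_le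
  have h2 := Nat.le_of_dvd (Nat.pos_of_ne_zero hn) (Nat.prod_primeFactors_dvd n)
  exact (Nat.pow_le_pow_iff_right (by norm_num)).mp (h1.trans (h2.trans h))

lemma card_num {k : ℕ} (a : Fin k → ℤ) (ha : ∀ i, a i ≠ 0)
    (T : ℕ) (hT : 1 ≤ T) (d : Fin k → ℤ) (hd : ∀ i, d i ∈ Finset.Icc (-(T : ℤ)) T)
    (h0 : num a d ≠ 0) :
    (num a d).natAbs.primeFactors.card ≤ 2 * (∏ i, (a i).natAbs) * T := by
  refine card_primeFactors_le _ _ (Int.natAbs_ne_zero.mpr h0) ?_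
  have h1 := natAbs_prod_le a ha T (fun i => (d i).toNat) (fun i => by
    have := Finset.mem_Icc.mp (hd i); omega)
  have h2 := natAbs_prod_le a ha T (fun i => (-d i).toNat) (fun i => by
    have := Finset.mem_Icc.mp (hd i); omega)
  have h3 : (num a d).natAbs ≤ 2 * (∏ i, (a i).natAbs) ^ T := by
    unfold num
    refine (Int.natAbs_sub_le _ _).trans ?_
    omega
  refine h3.trans ?_
  set A := ∏ i, (a i).natAbs
  calc 2 * A ^ T ≤ 2 ^ T * A ^ T := by
        gcongr
        exact Nat.le_self_pow (by omega) 2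
    _ = (2 * A) ^ T := (mul_pow _ _ _).symm
    _ ≤ (2 ^ (2 * A)) ^ T := Nat.pow_le_pow_left Nat.lt_two_pow_self.le _
    _ = 2 ^ (2 * A * T) := (pow_mul _ _ _).symm

lemma exists_d {k : ℕ} (a : Fin k → ℤ) (T p : ℕ) (hp : p.Prime)
    (hpa : ¬ (p : ℤ) ∣ ∏ i, a i)
    (hcard : Nat.card (Submonoid.closure (Set.range (fun i => ((a i : ZMod p))))) < (T + 1) ^ k) :
    ∃ d : Fin k → ℤ, (∀ i, d i ∈ Finset.Icc (-(T : ℤ)) T) ∧ d ≠ 0 ∧ (p : ℤ) ∣ num a d := by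
  have : Fact p.Prime := ⟨hp⟩
  set S := Submonoid.closure (Set.range (fun i => ((a i : ZMod p)))) with hS
  have hne : ∀ i, (a i : ZMod p) ≠ 0 := by
    intro i h
    exact hpa (((ZMod.intCast_zmod_eq_zero_iff_dvd _ _).mp h).trans
      (Finset.dvd_prod_of_mem a (Finset.mem_univ i)))
  let F : (Fin k → Fin (T + 1)) → S := fun e =>
    ⟨∏ i, (a i : ZMod p) ^ (e i : ℕ), S.prod_mem fun i _ => S.pow_mem
      (Submonoid.subset_closure (Set.mem_range_self i)) _⟩
  have hninj : ¬ Function.Injective F := by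
    intro hF
    have := Nat.card_le_card_of_injective F hF
    simp at this
    omega
  simp only [Function.Injective, not_forall] at hninj
  obtain ⟨e, f, hef, hne'⟩ := hninj
  have hprod : ∏ i, (a i : ZMod p) ^ (e i : ℕ) = ∏ i, (a i : ZMod p) ^ (f i : ℕ) :=
    congrArg Subtype.val hef
  refine ⟨fun i => (e i : ℤ) - (f i : ℤ), fun i => ?_, ?_, ?_⟩
  · have := (e i).is_lt
    have := (f i).is_lt
    rw [Finset.mem_Icc]
    constructor <;> dsimp only <;> omega
  · intro h
    apply hne'
    funext i
    have := congrFun h i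
    simp only [Pi.zero_apply] at this
    apply Fin.ext
    omega
  · rw [← ZMod.intCast_zmod_eq_zero_iff_dvd]
    unfold num
    push_cast
    rw [sub_eq_zero]
    have hm : (∏ i, (a i : ZMod p) ^ (min (e i : ℕ) (f i : ℕ))) ≠ 0 :=
      Finset.prod_ne_zero_iff.mpr fun i _ => pow_ne_zero _ (hne i)
    apply mul_left_cancel₀ hm
    rw [← Finset.prod_mul_distrib, ← Finset.prod_mul_distrib]
    have e1 : ∀ i, (a i : ZMod p) ^ (min (e i : ℕ) (f i : ℕ)) *
        (a i : ZMod p) ^ ((e i : ℤ) - (f i : ℤ)).toNat = (a i : ZMod p) ^ (e i : ℕ) := by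
      intro i
      rw [← pow_add]
      congr 1
      omega
    have e2 : ∀ i, (a i : ZMod p) ^ (min (e i : ℕ) (f i : ℕ)) *
        (a i : ZMod p) ^ (-((e i : ℤ) - (f i : ℤ))).toNat = (a i : ZMod p) ^ (f i : ℕ) := by
      intro i
      rw [← pow_add]
      congr 1
      omega
    rw [Finset.prod_congr rfl (fun i _ => e1 i), Finset.prod_congr rfl (fun i _ => e2 i), hprod]

end Matthews


/-- **Matthews' lemma.** Let `a₁, …, a_k` be nonzero, multiplicatively independent
integers. There is a positive constant `C` such that, for every `y ≥ 1`, the number of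
primes `p` (not dividing `a₁⋯a_k`) with `ℓ_{a₁,…,a_k}(p) ≤ y` is at most `C y^(1+1/k)`,
where `ℓ_{a₁,…,a_k}(p)` is the order of the subgroup of `(ℤ/pℤ)ˣ` generated by
`a₁, …, a_k`. -/
theorem stmt_15 (k : ℕ) (hk : 0 < k) (a : Fin k → ℤ) (ha : ∀ i, a i ≠ 0)
    (hind : ∀ e : Fin k → ℤ, (∏ i, (a i : ℚ) ^ e i) = 1 → ∀ i, e i = 0) :
    ∃ C : ℝ, 0 < C ∧ ∀ y : ℝ, 1 ≤ y →
      {p : ℕ | Nat.Prime p ∧ ¬ (p : ℤ) ∣ (∏ i, a i) ∧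
          (Nat.card (Submonoid.closure (Set.range (fun i => ((a i : ZMod p))))) : ℝ)
            ≤ y}.Finite ∧
      (Nat.card {p : ℕ | Nat.Prime p ∧ ¬ (p : ℤ) ∣ (∏ i, a i) ∧
          (Nat.card (Submonoid.closure (Set.range (fun i => ((a i : ZMod p))))) : ℝ)
            ≤ y} : ℝ)
        ≤ C * y ^ (1 + 1 / (k : ℝ)) := by
  classical
  set A := ∏ i, (a i).natAbs with hA
  have hApos : 0 < A := Finset.prod_pos fun i _ => Int.natAbs_pos.mpr (ha i)
  refine ⟨3 ^ k * (2 * A), by positivity, fun y hy => ?_⟩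
  have hy0 : (0 : ℝ) ≤ y := by linarith
  set T := ⌊y ^ (1 / (k : ℝ))⌋₊ with hT
  have hr0 : (0 : ℝ) ≤ y ^ (1 / (k : ℝ)) := by positivity
  have hrk : (y ^ (1 / (k : ℝ))) ^ k = y := by
    rw [one_div]
    exact Real.rpow_inv_natCast_pow hy0 hk.ne'
  have hT1 : 1 ≤ T := Nat.le_floor (by
    simpa using Real.one_le_rpow hy (by positivity))
  have hTle : (T : ℝ) ≤ y ^ (1 / (k : ℝ)) := Nat.floor_le hr0
  have hTlt : y < ((T : ℝ) + 1) ^ k := by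
    calc y = (y ^ (1 / (k : ℝ))) ^ k := hrk.symm
      _ < _ := pow_lt_pow_left₀ (Nat.lt_floor_add_one _) hr0 hk.ne'
  set D : Finset (Fin k → ℤ) :=
    (Fintype.piFinset fun _ : Fin k => Finset.Icc (-(T : ℤ)) T).filter (fun d => d ≠ 0) with hD
  set B : Finset ℕ := D.biUnion fun d => (Matthews.num a d).natAbs.primeFactors with hB
  set P := {p : ℕ | Nat.Prime p ∧ ¬ (p : ℤ) ∣ (∏ i, a i) ∧
          (Nat.card (Submonoid.closure (Set.range (fun i => ((a i : ZMod p))))) : ℝ)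
            ≤ y} with hP
  have hsub : P ⊆ (B : Set ℕ) := by
    rintro p ⟨hp, hpa, hc⟩
    obtain ⟨d, hd1, hd2, hd3⟩ := Matthews.exists_d a T p hp hpa (by
      have := hc.trans_lt hTlt
      exact_mod_cast this)
    rw [Finset.mem_coe, hB, Finset.mem_biUnion]
    refine ⟨d, Finset.mem_filter.mpr ⟨Fintype.mem_piFinset.mpr hd1, hd2⟩, ?_⟩
    exact Nat.mem_primeFactors.mpr ⟨hp, Int.natCast_dvd.mp hd3,
      Int.natAbs_ne_zero.mpr (Matthews.num_ne_zero a ha hind d hd2)⟩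
  have hDcard : D.card ≤ (2 * T + 1) ^ k := by
    refine (Finset.card_filter_le _ _).trans ?_
    rw [Fintype.card_piFinset]
    simp only [Int.card_Icc, Finset.prod_const, Finset.card_univ, Fintype.card_fin]
    apply Nat.pow_le_pow_left
    omega
  have hBcard : B.card ≤ (2 * T + 1) ^ k * (2 * A * T) := by
    refine (Finset.card_biUnion_le_card_mul _ _ (2 * A * T) fun d hd => ?_).trans
      (Nat.mul_le_mul_right _ hDcard)
    obtain ⟨h1, h2⟩ := Finset.mem_filter.mp hd
    exact Matthews.card_num a ha T hT1 d (Fintype.mem_piFinset.mp h1)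
      (Matthews.num_ne_zero a ha hind d h2)
  refine ⟨B.finite_toSet.subset hsub, ?_⟩
  have hPB : Nat.card P ≤ B.card := by
    have := Nat.card_mono B.finite_toSet hsub
    simpa using this
  have hT1' : (1 : ℝ) ≤ T := by exact_mod_cast hT1
  have hfin : ((2 * T + 1) ^ k * (2 * A * T) : ℝ) ≤ 3 ^ k * (2 * A) * y ^ (1 + 1 / (k : ℝ)) := by
    rw [Real.rpow_add (by linarith), Real.rpow_one]
    calc ((2 * T + 1) ^ k * (2 * A * T) : ℝ) ≤ (3 * y ^ (1 / (k : ℝ))) ^ k *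
          (2 * A * y ^ (1 / (k : ℝ))) := by
          gcongr
          linarith
      _ = _ := by
          rw [mul_pow, hrk]
          ring
  calc (Nat.card P : ℝ) ≤ B.card := by exact_mod_cast hPB
    _ ≤ ((2 * T + 1) ^ k * (2 * A * T) : ℝ) := by exact_mod_cast hBcard
    _ ≤ _ := hfin
end

section
/- For each nonzero integer a and each positive integer n, ℓ_a(n) ≥ (λ(n)/n) · ∏_{p | n, p ∤ a} ℓ_a(p), where the product runs over the prime divisors p of n not dividing a. -/
/-- `ellc a n` is the eventual period of `a, a², a³, …` modulo `n`: the multiplicative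
order of `a` modulo `n'`, where `n'` is the largest positive divisor of `n` coprime
to `a`. -/
noncomputable def ellc (a : ℤ) (n : ℕ) : ℕ :=
  orderOf ((a : ZMod (((n.divisors.filter (fun d => Nat.Coprime d a.natAbs)).max).getD 1)))

/-- Carmichael's function: the exponent of the multiplicative group mod `n`. -/
noncomputable def carmichael (n : ℕ) : ℕ := Monoid.exponent (ZMod n)ˣ

/-- Two-element step. -/
lemma lcm_two_aux (A B C D : ℕ) (h1 : B ∣ A) (h2 : D ∣ C) :
    Nat.lcm A C * (B * D) ∣ Nat.lcm B D * (A * C) := by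
  have hg : Nat.gcd B D ∣ Nat.gcd A C := Nat.gcd_dvd_gcd_of_dvd_left _ h1 |>.trans
    (Nat.gcd_dvd_gcd_of_dvd_right _ h2)
  obtain ⟨k, hk⟩ := hg
  refine ⟨k, ?_⟩
  rw [← Nat.gcd_mul_lcm A C, ← Nat.gcd_mul_lcm B D, hk]
  ring

lemma lcm_prod_aux (s : Finset ℕ) (A B : ℕ → ℕ) (hA : ∀ p ∈ s, 0 < A p)
    (hB : ∀ p ∈ s, B p ∣ A p) :
    0 < s.lcm A ∧ s.lcm B ∣ s.lcm A ∧ s.lcm A * ∏ p ∈ s, B p ∣ s.lcm B * ∏ p ∈ s, A p := by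
  classical
  induction s using Finset.induction_on with
  | empty => simp
  | insert q s hq ih =>
    obtain ⟨h0, h1, h2⟩ := ih (fun p hp => hA p (Finset.mem_insert_of_mem hp))
      (fun p hp => hB p (Finset.mem_insert_of_mem hp))
    have hAq := hA q (Finset.mem_insert_self _ _)
    have hBq := hB q (Finset.mem_insert_self _ _)
    simp only [Finset.lcm_insert, Finset.prod_insert hq]
    refine ⟨Nat.lcm_pos hAq h0, lcm_dvd_lcm hBq h1, ?_⟩
    have key := mul_dvd_mul (lcm_two_aux _ _ _ _ hBq h1) h2
    have hLB : 0 < s.lcm B := Nat.pos_of_dvd_of_pos h1 h0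
    refine Nat.dvd_of_mul_dvd_mul_left (Nat.mul_pos h0 hLB) ?_
    have e1 : s.lcm A * s.lcm B * (Nat.lcm (A q) (s.lcm A) * (B q * ∏ p ∈ s, B p)) =
        Nat.lcm (A q) (s.lcm A) * (B q * s.lcm B) * (s.lcm A * ∏ p ∈ s, B p) := by ring
    have e2 : s.lcm A * s.lcm B * (Nat.lcm (B q) (s.lcm B) * (A q * ∏ p ∈ s, A p)) =
        Nat.lcm (B q) (s.lcm B) * (A q * s.lcm A) * (s.lcm B * ∏ p ∈ s, A p) := by ring
    rw [← e1, ← e2] at key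
    exact key

lemma carmichael_dvd_aux (n : ℕ) (hn : 0 < n) :
    carmichael n ∣ n.primeFactors.lcm (fun p => Nat.totient (p ^ n.factorization p)) := by
  unfold carmichael
  haveI : NeZero n := ⟨hn.ne'⟩
  apply Monoid.exponent_dvd_of_forall_pow_eq_one
  intro x
  set L := n.primeFactors.lcm (fun p => Nat.totient (p ^ n.factorization p)) with hL
  have hco := ZMod.val_coe_unit_coprime x
  set k := (x : ZMod n).val with hk
  have hdvd : (n : ℤ) ∣ (k : ℤ) ^ L - 1 := by
    have hprod : ((∏ p ∈ n.primeFactors, p ^ n.factorization p : ℕ) : ℤ) ∣ (k : ℤ) ^ L - 1 := by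
      push_cast
      apply Finset.prod_dvd_of_coprime
      · intro p hp q hq hpq
        have := Nat.coprime_pow_primes (n.factorization p) (n.factorization q)
          (Nat.prime_of_mem_primeFactors hp) (Nat.prime_of_mem_primeFactors hq) hpq
        have := Nat.isCoprime_iff_coprime.2 this
        simpa [Function.onFun] using this
      · intro p hp
        have hkp : Nat.Coprime k (p ^ n.factorization p) :=
          Nat.Coprime.coprime_dvd_right (Nat.ordProj_dvd n p) hco
        obtain ⟨c, hc⟩ : Nat.totient (p ^ n.factorization p) ∣ L :=
          Finset.dvd_lcm (f := fun p => Nat.totient (p ^ n.factorization p)) hp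
        have h1 := (Nat.ModEq.pow_totient hkp).pow c
        rw [← pow_mul, ← hc, one_pow] at h1
        have h2 := (Nat.modEq_iff_dvd.1 h1.symm)
        simpa using h2
    have e : ∏ p ∈ n.primeFactors, p ^ n.factorization p = n :=
      Nat.prod_factorization_pow_eq_self hn.ne'
    rwa [e] at hprod
  have h0 := (ZMod.intCast_zmod_eq_zero_iff_dvd _ n).2 hdvd
  ext
  push_cast at h0 ⊢
  rw [hk, ZMod.natCast_zmod_val] at h0
  exact sub_eq_zero.1 h0

lemma ellc_aux (a : ℤ) (ha : a ≠ 0) (n : ℕ) (hn : 0 < n) :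
    0 < ellc a n ∧ ∀ p ∈ n.primeFactors, ¬ (p : ℤ) ∣ a → orderOf (a : ZMod p) ∣ ellc a n := by
  unfold ellc
  set s := n.divisors.filter (fun d => Nat.Coprime d a.natAbs) with hs
  have h1 : 1 ∈ s := by simp [hs, hn.ne']
  obtain ⟨m, hm⟩ := Finset.max_of_mem h1
  have e : (s.max).getD 1 = m := by rw [hm]; rfl
  rw [e]
  have hms := Finset.mem_of_max hm
  simp only [hs, Finset.mem_filter, Nat.mem_divisors] at hms
  obtain ⟨⟨hmn, -⟩, hco⟩ := hms
  have hm0 : 0 < m := Nat.pos_of_dvd_of_pos hmn hn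
  haveI : NeZero m := ⟨hm0.ne'⟩
  constructor
  · have hu : IsUnit (a : ZMod m) := by
      rw [ZMod.coe_int_isUnit_iff_isCoprime]
      rw [Int.isCoprime_iff_gcd_eq_one]
      simpa [Int.gcd] using hco
    obtain ⟨u, hu⟩ := hu
    rw [← hu, orderOf_units]
    exact orderOf_pos u
  · intro p hp hpa
    have hpp := Nat.prime_of_mem_primeFactors hp
    have hpn := Nat.dvd_of_mem_primeFactors hp
    have hpm : p ∣ m := by
      by_contra hcon
      have hpm := (Nat.Prime.coprime_iff_not_dvd hpp).2 hcon
      have hpa' : Nat.Coprime p a.natAbs := (Nat.Prime.coprime_iff_not_dvd hpp).2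
        (fun h => hpa (Int.natCast_dvd.2 h))
      have hmem : p * m ∈ s := by
        simp only [hs, Finset.mem_filter, Nat.mem_divisors]
        exact ⟨⟨hpm.mul_dvd_of_dvd_of_dvd hpn hmn, hn.ne'⟩, hpa'.mul_left hco⟩
      have := Finset.le_max_of_eq hmem hm
      have := hpp.two_le
      nlinarith
    have := orderOf_map_dvd (ZMod.castHom hpm (ZMod p) : ZMod m →* ZMod p) (a : ZMod m)
    simpa using this

/-- **Kurlberg–Rudnick.** For each nonzero integer `a` and positive integer `n`,
`ℓ_a(n) ≥ (λ(n)/n) ∏_{p ∣ n, p ∤ a} ℓ_a(p)`, the product over prime divisors `p` of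
`n` not dividing `a`. -/
theorem stmt_16 (a : ℤ) (ha : a ≠ 0) (n : ℕ) (hn : 0 < n) :
    ((carmichael n : ℝ) / (n : ℝ)) *
        ∏ p ∈ n.primeFactors.filter (fun p : ℕ => ¬ (p : ℤ) ∣ a),
          (orderOf ((a : ZMod p)) : ℝ)
      ≤ (ellc a n : ℝ) := by
  obtain ⟨hpos, hell⟩ := ellc_aux a ha n hn
  set A : ℕ → ℕ := fun p => Nat.totient (p ^ n.factorization p) with hA
  set B : ℕ → ℕ := fun p => if ¬ (p : ℤ) ∣ a then orderOf (a : ZMod p) else 1 with hB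
  have hApos : ∀ p ∈ n.primeFactors, 0 < A p := fun p hp =>
    Nat.totient_pos.2 (pow_pos (Nat.prime_of_mem_primeFactors hp).pos _)
  have hBA : ∀ p ∈ n.primeFactors, B p ∣ A p := by
    intro p hp
    simp only [hB, hA]
    by_cases h : ¬ (p : ℤ) ∣ a
    · rw [if_pos h]
      have hpp := Nat.prime_of_mem_primeFactors hp
      have : Fact p.Prime := ⟨hpp⟩
      have h1 : (a : ZMod p) ≠ 0 := fun h0 => h ((ZMod.intCast_zmod_eq_zero_iff_dvd _ p).1 h0)
      have h2 : orderOf (a : ZMod p) ∣ p - 1 :=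
        orderOf_dvd_of_pow_eq_one (ZMod.pow_card_sub_one_eq_one h1)
      rw [← Nat.totient_prime hpp] at h2
      exact h2.trans (Nat.totient_dvd_of_dvd (dvd_pow_self p
        (hpp.factorization_pos_of_dvd hn.ne' (Nat.dvd_of_mem_primeFactors hp)).ne'))
    · rw [if_neg h]
      exact one_dvd _
  obtain ⟨h0, h1, h2⟩ := lcm_prod_aux n.primeFactors A B hApos hBA
  have hprodA : ∏ p ∈ n.primeFactors, A p = Nat.totient n :=
    (Nat.multiplicative_factorization Nat.totient (fun _ _ h => Nat.totient_mul h)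
      Nat.totient_one hn.ne').symm
  have hLB : n.primeFactors.lcm B ∣ ellc a n := by
    apply Finset.lcm_dvd
    intro p hp
    simp only [hB]
    by_cases h : ¬ (p : ℤ) ∣ a
    · rw [if_pos h]
      exact hell p hp h
    · rw [if_neg h]
      exact one_dvd _
  have hfin : carmichael n * ∏ p ∈ n.primeFactors, B p ≤ ellc a n * n := by
    have ht := Nat.totient_pos.2 hn
    calc carmichael n * ∏ p ∈ n.primeFactors, B p
        ≤ ellc a n * n.totient := by
          apply Nat.le_of_dvd (Nat.mul_pos hpos ht)
          rw [← hprodA]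
          exact (mul_dvd_mul_right (carmichael_dvd_aux n hn) _).trans
            (h2.trans (mul_dvd_mul_right hLB _))
      _ ≤ _ := Nat.mul_le_mul_left _ (Nat.totient_le n)
  have hn' : (0 : ℝ) < n := by exact_mod_cast hn
  rw [div_mul_eq_mul_div, div_le_iff₀ hn', Finset.prod_filter]
  have : ((carmichael n * ∏ p ∈ n.primeFactors, B p : ℕ) : ℝ) ≤ ((ellc a n * n : ℕ) : ℝ) := by
    exact_mod_cast hfin
  simpa [hB] using this
end

section
/- There exist a constant C > 0 and x_0 such that for all x ≥ x_0, the number of positive integers n ≤ x with λ(n) ≤ n·exp(−(log log n)³) is at most C·x/(log x)^{10}. -/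
namespace KP

lemma sub_one_dvd {n p : ℕ} (hn : n ≠ 0) (hp : p.Prime) (h : p ∣ n) : p - 1 ∣ carmichael n := by
  have : NeZero n := ⟨hn⟩
  have : Fact p.Prime := ⟨hp⟩
  have h1 : Monoid.exponent (ZMod p)ˣ ∣ Monoid.exponent (ZMod n)ˣ :=
    MonoidHom.exponent_dvd (ZMod.unitsMap_surjective h)
  rw [IsCyclic.exponent_eq_card, Nat.card_eq_fintype_card, ZMod.card_units] at h1
  exact h1

lemma carmichael_pos {n : ℕ} (hn : n ≠ 0) : 0 < carmichael n := by
  have : NeZero n := ⟨hn⟩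
  exact Nat.pos_of_ne_zero Monoid.exponent_ne_zero_of_finite

lemma split (Y m : ℕ) : m ≠ 0 → ∃ s u : ℕ, m = s * u ∧ s ∈ Nat.smoothNumbers (Y + 1) ∧
    ∀ q : ℕ, q.Prime → q ∣ u → Y < q := by
  induction m using induction_on_primes with
  | zero => intro h; exact absurd rfl h
  | one =>
    intro _
    refine ⟨1, 1, rfl, ?_, ?_⟩
    · rw [Nat.mem_smoothNumbers]; simp
    · intro q hq h
      exact absurd (Nat.dvd_one.mp h) hq.one_lt.ne'
  | prime_mul p a hp ih =>
    intro h
    obtain ⟨s, u, rfl, hs, hu⟩ := ih (by rintro rfl; simp at h)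
    by_cases hpY : p ≤ Y
    · refine ⟨p * s, u, by ring, ?_, hu⟩
      apply Nat.mul_mem_smoothNumbers _ hs
      rw [Nat.mem_smoothNumbers']
      intro q hq hqp
      rw [(Nat.prime_dvd_prime_iff_eq hq hp).mp hqp]
      omega
    · refine ⟨s, p * u, by ring, hs, ?_⟩
      intro q hq hqp
      rcases (Nat.Prime.dvd_mul hq).mp hqp with h1 | h1
      · rw [(Nat.prime_dvd_prime_iff_eq hq hp).mp h1]; omega
      · exact hu q hq h1

/-- Deterministic part. -/
lemma determ (n Y B : ℕ) (z : ℝ) (hz : 1 ≤ z) (hn : n ≠ 0)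
    (h2 : ∀ p d : ℕ, p.Prime → p ∣ n → d ∣ p - 1 → d ∈ Nat.smoothNumbers (Y + 1) → (d : ℝ) ≤ z)
    (h3 : ∀ q p₁ p₂ : ℕ, Y < q → p₁.Prime → p₂.Prime → p₁ ≠ p₂ → p₁ ∣ n → p₂ ∣ n →
      q ∣ p₁ - 1 → q ∣ p₂ - 1 → False)
    (h4 : ∀ b : ℕ, b ^ 2 ∣ n → b ≤ B) :
    (n : ℝ) ≤ carmichael n * (B : ℝ) ^ 2 * (2 * z) ^ n.primeFactors.card := by
  obtain ⟨a, b, hab, hsq⟩ := Nat.sq_mul_squarefree n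
  have hb : b ≤ B := h4 b ⟨a, hab.symm⟩
  have han : a ∣ n := ⟨b ^ 2, by rw [← hab]; ring⟩
  have hsp : ∀ p : ℕ, ∃ s u : ℕ, p.Prime → (p - 1 = s * u ∧ s ∈ Nat.smoothNumbers (Y + 1) ∧
    ∀ q : ℕ, q.Prime → q ∣ u → Y < q) := by
    intro p
    by_cases hp : p.Prime
    · obtain ⟨s, u, h⟩ := split Y (p - 1) (by have := hp.two_le; omega)
      exact ⟨s, u, fun _ => h⟩
    · exact ⟨0, 0, fun h => absurd h hp⟩
  choose s u hsu using hsp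
  have hdvd : ∏ p ∈ a.primeFactors, u p ∣ carmichael n := by
    apply Finset.prod_dvd_of_isRelPrime
    · intro p hp r hr hpr
      have hp := Finset.mem_coe.mp hp
      have hr := Finset.mem_coe.mp hr
      have hpp := Nat.prime_of_mem_primeFactors hp
      have hrp := Nat.prime_of_mem_primeFactors hr
      have hpd := (Nat.dvd_of_mem_primeFactors hp).trans han
      have hrd := (Nat.dvd_of_mem_primeFactors hr).trans han
      show IsRelPrime (u p) (u r)
      rw [← Nat.coprime_iff_isRelPrime]
      apply Nat.Coprime.symm
      apply Nat.coprime_of_dvd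
      intro q hq h1 h2
      obtain ⟨e1, -, f1⟩ := hsu p hpp
      obtain ⟨e2, -, -⟩ := hsu r hrp
      exact h3 q p r (f1 q hq h2) hpp hrp hpr hpd hrd (e1 ▸ h2.mul_left _) (e2 ▸ h1.mul_left _)
    · intro p hp
      have hpp := Nat.prime_of_mem_primeFactors hp
      have hpd := (Nat.dvd_of_mem_primeFactors hp).trans han
      exact (Dvd.intro_left _ (hsu p hpp).1.symm).trans (sub_one_dvd hn hpp hpd)
  have hle : ((∏ p ∈ a.primeFactors, u p : ℕ) : ℝ) ≤ carmichael n := by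
    exact_mod_cast Nat.le_of_dvd (carmichael_pos hn) hdvd
  have ha : (a : ℝ) ≤ (2 * z) ^ n.primeFactors.card * carmichael n := by
    calc (a : ℝ) = ∏ p ∈ a.primeFactors, (p : ℝ) := by
          rw [← Nat.cast_prod, Nat.prod_primeFactors_of_squarefree hsq]
      _ ≤ ∏ p ∈ a.primeFactors, ((2 * z) * (u p : ℝ)) := by
          apply Finset.prod_le_prod
          · intros; positivity
          · intro p hp
            have hpp := Nat.prime_of_mem_primeFactors hp
            have hpd := (Nat.dvd_of_mem_primeFactors hp).trans han
            obtain ⟨e1, e2, -⟩ := hsu p hpp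
            have hs : (s p : ℝ) ≤ z := h2 p (s p) hpp hpd ⟨_, e1⟩ e2
            have h5 : p ≤ 2 * (s p * u p) := by rw [← e1]; have := hpp.two_le; omega
            have h6 : (p : ℝ) ≤ 2 * (s p * u p) := by exact_mod_cast h5
            have h7 : (s p : ℝ) * u p ≤ z * u p := by gcongr
            linarith
      _ = (2 * z) ^ a.primeFactors.card * ((∏ p ∈ a.primeFactors, u p : ℕ) : ℝ) := by
          rw [Finset.prod_mul_distrib, Finset.prod_const, Nat.cast_prod]
      _ ≤ _ := by
          gcongr
          · linarith
          · exact Nat.primeFactors_mono han hn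
  calc (n : ℝ) = (b : ℝ) ^ 2 * a := by rw [← hab]; push_cast; ring
    _ ≤ (B : ℝ) ^ 2 * ((2 * z) ^ n.primeFactors.card * carmichael n) := by gcongr
    _ = _ := by ring

lemma cnt {ι : Type*} (N : ℕ) (s : Finset ι) (f : ι → ℕ) (A : Finset ℕ)
    (hA : ∀ n ∈ A, 1 ≤ n ∧ n ≤ N ∧ ∃ i ∈ s, f i ∣ n) :
    (A.card : ℝ) ≤ ∑ i ∈ s, (N : ℝ) / f i := by
  classical
  have h1 : A ⊆ s.biUnion (fun i => {x ∈ Finset.Ioc 0 N | f i ∣ x}) := by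
    intro n hn
    obtain ⟨a, b, i, hi, h⟩ := hA n hn
    simp only [Finset.mem_biUnion, Finset.mem_filter, Finset.mem_Ioc]
    exact ⟨i, hi, ⟨a, b⟩, h⟩
  have h2 := (Finset.card_le_card h1).trans Finset.card_biUnion_le
  simp only [Nat.Ioc_filter_dvd_card_eq_div] at h2
  calc (A.card : ℝ) ≤ ((∑ i ∈ s, N / f i : ℕ) : ℝ) := by exact_mod_cast h2
    _ ≤ _ := by
      push_cast
      exact Finset.sum_le_sum fun i _ => Nat.cast_div_le

noncomputable def H (N : ℕ) : ℝ := ∑ k ∈ Finset.Ioc 0 N, (1 : ℝ) / k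

lemma H_nonneg (N : ℕ) : 0 ≤ H N := Finset.sum_nonneg fun _ _ => by positivity

lemma H_le (N : ℕ) : H N ≤ 1 + Real.log N := by
  refine le_trans (le_of_eq ?_) (harmonic_le_one_add_log N)
  rw [harmonic_eq_sum_Icc, H]
  push_cast
  simp only [one_div]
  rfl

lemma E1 (N : ℕ) (W : ℝ) (A : Finset ℕ)
    (hA : ∀ n ∈ A, 1 ≤ n ∧ n ≤ N ∧ W < 2 ^ n.primeFactors.card) :
    W * A.card ≤ N * H N := by
  have h1 : ∀ n : ℕ, n ≠ 0 → 2 ^ n.primeFactors.card ≤ n.divisors.card := by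
    intro n hn
    rw [Nat.card_divisors hn, ← Finset.prod_const]
    apply Finset.prod_le_prod'
    intro p hp
    have := (Nat.prime_of_mem_primeFactors hp).factorization_pos_of_dvd hn
      (Nat.dvd_of_mem_primeFactors hp)
    omega
  have h2 : ∑ n ∈ Finset.Ioc 0 N, n.divisors.card = ∑ d ∈ Finset.Ioc 0 N, N / d := by
    have := Finset.sum_card_bipartiteAbove_eq_sum_card_bipartiteBelow
      (fun a b : ℕ => b ∣ a) (s := Finset.Ioc 0 N) (t := Finset.Ioc 0 N)
    simp only [Finset.bipartiteBelow, Nat.Ioc_filter_dvd_card_eq_div] at this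
    rw [← this]
    apply Finset.sum_congr rfl
    intro n hn
    congr 1
    ext d
    simp only [Finset.mem_Ioc] at hn
    simp only [Finset.bipartiteAbove, Finset.mem_filter, Finset.mem_Ioc, Nat.mem_divisors]
    constructor
    · rintro ⟨h, h'⟩
      exact ⟨⟨Nat.pos_of_dvd_of_pos h hn.1, (Nat.le_of_dvd hn.1 h).trans hn.2⟩, h⟩
    · rintro ⟨h, h'⟩
      exact ⟨h', by omega⟩
  calc W * A.card = ∑ n ∈ A, W := by rw [Finset.sum_const, nsmul_eq_mul]; ring
    _ ≤ ∑ n ∈ A, (n.divisors.card : ℝ) := by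
      apply Finset.sum_le_sum
      intro n hn
      obtain ⟨a, b, c⟩ := hA n hn
      refine c.le.trans ?_
      exact_mod_cast h1 n (by omega)
    _ ≤ ∑ n ∈ Finset.Ioc 0 N, (n.divisors.card : ℝ) := by
      apply Finset.sum_le_sum_of_subset_of_nonneg
      · intro n hn
        obtain ⟨a, b, c⟩ := hA n hn
        simp only [Finset.mem_Ioc]; omega
      · intros; positivity
    _ = ((∑ d ∈ Finset.Ioc 0 N, N / d : ℕ) : ℝ) := by rw [← h2]; push_cast; rfl
    _ ≤ _ := by
      push_cast
      rw [H, Finset.mul_sum]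
      apply Finset.sum_le_sum
      intro i _
      rw [mul_one_div]
      exact Nat.cast_div_le

lemma sq_tail (B N : ℕ) (hB : B ≠ 0) : ∑ b ∈ Finset.Ioc B N, (1 : ℝ) / (b : ℝ) ^ 2 ≤ 1 / B := by
  rcases le_or_gt B N with h | h
  · have := sum_Ioc_inv_sq_le_sub (α := ℝ) hB h
    simp only [one_div]
    have h2 : (0 : ℝ) ≤ (N : ℝ)⁻¹ := by positivity
    linarith
  · rw [Finset.Ioc_eq_empty (by omega)]; simp

lemma E4 (N B : ℕ) (hB : B ≠ 0) (A : Finset ℕ)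
    (hA : ∀ n ∈ A, 1 ≤ n ∧ n ≤ N ∧ ∃ b : ℕ, B < b ∧ b ^ 2 ∣ n) :
    (A.card : ℝ) ≤ N * (1 / B) := by
  refine (cnt N (Finset.Ioc B N) (fun b => b ^ 2) A ?_).trans ?_
  · intro n hn
    obtain ⟨a, b, c, d, e⟩ := hA n hn
    refine ⟨a, b, c, ?_, e⟩
    rw [Finset.mem_Ioc]
    refine ⟨d, ?_⟩
    have := Nat.le_of_dvd (by omega) e
    nlinarith
  · refine le_trans (le_of_eq ?_) (mul_le_mul_of_nonneg_left (sq_tail B N hB) (Nat.cast_nonneg N))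
    rw [Finset.mul_sum]
    apply Finset.sum_congr rfl
    intro i _
    push_cast
    ring

lemma E3 (N Y : ℕ) (hY : Y ≠ 0) (A : Finset ℕ)
    (hA : ∀ n ∈ A, 1 ≤ n ∧ n ≤ N ∧ ∃ q p₁ p₂ : ℕ, Y < q ∧ p₁.Prime ∧ p₂.Prime ∧ p₁ ≠ p₂ ∧
      p₁ ∣ n ∧ p₂ ∣ n ∧ q ∣ p₁ - 1 ∧ q ∣ p₂ - 1) :
    (A.card : ℝ) ≤ N * (1 / Y) * H N ^ 2 := by
  refine (cnt N (Finset.Ioc Y N ×ˢ Finset.Ioc 0 N ×ˢ Finset.Ioc 0 N)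
    (fun t => (1 + t.1 * t.2.1) * (1 + t.1 * t.2.2)) A ?_).trans ?_
  · intro n hn
    obtain ⟨a, b, q, p, r, hq, hp, hr, hpr, hpn, hrn, ⟨k, hk⟩, ⟨l, hl⟩⟩ := hA n hn
    have hp2 := hp.two_le
    have hr2 := hr.two_le
    have e1 : p = 1 + q * k := by omega
    have e2 : r = 1 + q * l := by omega
    have hk0 : 0 < k := by rcases Nat.eq_zero_or_pos k with rfl | h; · simp at hk; omega
                           · exact h
    have hl0 : 0 < l := by rcases Nat.eq_zero_or_pos l with rfl | h; · simp at hl; omega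
                           · exact h
    have hpN := Nat.le_of_dvd (by omega) hpn
    have hrN := Nat.le_of_dvd (by omega) hrn
    refine ⟨a, b, (q, k, l), ?_, ?_⟩
    · simp only [Finset.mem_product, Finset.mem_Ioc]
      refine ⟨⟨hq, ?_⟩, ⟨hk0, ?_⟩, hl0, ?_⟩
      · nlinarith
      · nlinarith
      · nlinarith
    · show (1 + q * k) * (1 + q * l) ∣ n
      rw [← e1, ← e2]
      exact Nat.Coprime.mul_dvd_of_dvd_of_dvd ((Nat.coprime_primes hp hr).mpr hpr) hpn hrn
  · calc _ ≤ ∑ t ∈ Finset.Ioc Y N ×ˢ Finset.Ioc 0 N ×ˢ Finset.Ioc 0 N,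
          (N : ℝ) * ((1 / (t.1 : ℝ) ^ 2) * ((1 / (t.2.1 : ℝ)) * (1 / (t.2.2 : ℝ)))) := by
          apply Finset.sum_le_sum
          rintro ⟨q, k, l⟩ ht
          simp only [Finset.mem_product, Finset.mem_Ioc] at ht
          obtain ⟨⟨h1, -⟩, ⟨h2, -⟩, h3, -⟩ := ht
          have h1 : (0 : ℝ) < q := by exact_mod_cast (by omega : 0 < q)
          have h2 : (0 : ℝ) < k := by exact_mod_cast h2
          have h3 : (0 : ℝ) < l := by exact_mod_cast h3
          push_cast
          rw [div_eq_mul_one_div]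
          gcongr
          rw [show (1 / (q : ℝ) ^ 2) * ((1 / (k : ℝ)) * (1 / (l : ℝ))) =
              1 / ((q * k) * (q * l)) by field_simp]
          apply one_div_le_one_div_of_le (by positivity)
          gcongr <;> linarith
      _ = N * (∑ q ∈ Finset.Ioc Y N, 1 / (q : ℝ) ^ 2) * H N ^ 2 := by
          rw [← Finset.mul_sum, mul_assoc]
          congr 1
          rw [H, pow_two, Finset.sum_mul_sum, ← Finset.sum_product', Finset.sum_mul_sum,
            ← Finset.sum_product']
      _ ≤ _ := by
          gcongr
          exact sq_tail Y N hY

lemma E2 (N Y : ℕ) (z R : ℝ) (A : Finset ℕ)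
    (hR : ∀ s : Finset ℕ, (∀ d ∈ s, d ∈ Nat.smoothNumbers (Y + 1) ∧ z < d) →
      ∑ d ∈ s, (1 : ℝ) / d ≤ R)
    (hA : ∀ n ∈ A, 1 ≤ n ∧ n ≤ N ∧ ∃ p d : ℕ, p.Prime ∧ p ∣ n ∧ d ∣ p - 1 ∧
      d ∈ Nat.smoothNumbers (Y + 1) ∧ z < d) :
    (A.card : ℝ) ≤ N * R * H N := by
  classical
  set s : Finset ℕ := {d ∈ Finset.Ioc 0 N | d ∈ Nat.smoothNumbers (Y + 1) ∧ z < d} with hs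
  refine (cnt N (s ×ˢ Finset.Ioc 0 N) (fun t => (1 + t.1 * t.2)) A ?_).trans ?_
  · intro n hn
    obtain ⟨a, b, p, d, hp, hpn, ⟨k, hk⟩, hd, hzd⟩ := hA n hn
    have hp2 := hp.two_le
    have e1 : p = 1 + d * k := by omega
    have hk0 : 0 < k := by rcases Nat.eq_zero_or_pos k with rfl | h; · simp at hk; omega
                           · exact h
    have hd0 : 0 < d := Nat.pos_of_ne_zero (Nat.ne_zero_of_mem_smoothNumbers hd)
    have hpN := Nat.le_of_dvd (by omega) hpn
    refine ⟨a, b, (d, k), ?_, ?_⟩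
    · simp only [hs, Finset.mem_product, Finset.mem_Ioc, Finset.mem_filter]
      refine ⟨⟨⟨hd0, ?_⟩, hd, hzd⟩, ⟨hk0, ?_⟩⟩
      · nlinarith
      · nlinarith
    · show (1 + d * k) ∣ n
      rw [← e1]
      exact hpn
  · calc _ ≤ ∑ t ∈ s ×ˢ Finset.Ioc 0 N, (N : ℝ) * ((1 / (t.1 : ℝ)) * (1 / (t.2 : ℝ))) := by
          apply Finset.sum_le_sum
          rintro ⟨d, k⟩ ht
          simp only [hs, Finset.mem_product, Finset.mem_Ioc, Finset.mem_filter] at ht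
          obtain ⟨⟨⟨h1, -⟩, -⟩, h2, -⟩ := ht
          have h1 : (0 : ℝ) < d := by exact_mod_cast h1
          have h2 : (0 : ℝ) < k := by exact_mod_cast h2
          push_cast
          rw [div_eq_mul_one_div, one_div_mul_one_div]
          gcongr
          linarith
      _ = N * (∑ d ∈ s, 1 / (d : ℝ)) * H N := by
          rw [← Finset.mul_sum, mul_assoc]
          congr 1
          rw [H, Finset.sum_mul_sum, ← Finset.sum_product']
      _ ≤ _ := by
          have := H_nonneg N
          gcongr
          apply hR
          intro d hd
          simp only [hs, Finset.mem_filter] at hd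
          exact hd.2

end KP
namespace KP

lemma primesum_step (N : ℕ) (hN : 1 ≤ N) :
    ∑ p ∈ Nat.primesLE (2 ^ (N + 1)), (1 : ℝ) / p ≤
      ∑ p ∈ Nat.primesLE (2 ^ N), (1 : ℝ) / p + 4 * (1 / (N : ℝ)) := by
  have hN' : (0 : ℝ) < N := by exact_mod_cast hN
  have hl2 : 0 < Real.log 2 := Real.log_pos (by norm_num)
  have hsub : Nat.primesLE (2 ^ N) ⊆ Nat.primesLE (2 ^ (N + 1)) := by
    intro p hp
    rw [Nat.mem_primesLE] at *
    refine ⟨hp.1.trans ?_, hp.2⟩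
    exact Nat.pow_le_pow_right (by norm_num) (by omega)
  rw [← Finset.sum_sdiff hsub, add_comm]
  gcongr
  have hc : (0 : ℝ) < N * Real.log 2 * 2 ^ N := by positivity
  calc ∑ p ∈ Nat.primesLE (2 ^ (N + 1)) \ Nat.primesLE (2 ^ N), (1 : ℝ) / p
      ≤ ∑ p ∈ Nat.primesLE (2 ^ (N + 1)) \ Nat.primesLE (2 ^ N),
          Real.log p / (N * Real.log 2 * 2 ^ N) := by
        apply Finset.sum_le_sum
        intro p hp
        simp only [Finset.mem_sdiff, Nat.mem_primesLE, not_and] at hp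
        have h1 : 2 ^ N < p := by
          by_contra h
          exact hp.2 (not_lt.mp h) hp.1.2
        have h2 : (2 : ℝ) ^ N ≤ p := by exact_mod_cast h1.le
        have h3 : (N : ℝ) * Real.log 2 ≤ Real.log p := by
          rw [← Real.log_pow]
          exact Real.log_le_log (by positivity) h2
        have h4 : (0 : ℝ) < p := lt_of_lt_of_le (by positivity) h2
        rw [div_le_div_iff₀ h4 hc, one_mul]
        have := mul_le_mul h3 h2 (by positivity) (le_trans (by positivity) h3)
        linarith
    _ ≤ ∑ p ∈ Nat.primesLE (2 ^ (N + 1)), Real.log p / (N * Real.log 2 * 2 ^ N) := by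
        apply Finset.sum_le_sum_of_subset_of_nonneg Finset.sdiff_subset
        intro p _ _
        have : 0 ≤ Real.log p := Real.log_natCast_nonneg p
        positivity
    _ = Chebyshev.theta ((2 ^ (N + 1) : ℕ) : ℝ) / (N * Real.log 2 * 2 ^ N) := by
        rw [Chebyshev.theta_eq_sum_primesLE_log, Finset.sum_div]
    _ ≤ (Real.log 4 * ((2 ^ (N + 1) : ℕ) : ℝ)) / (N * Real.log 2 * 2 ^ N) := by
        gcongr
        exact Chebyshev.theta_le_log4_mul_x (by positivity)
    _ = _ := by
        have : Real.log 4 = 2 * Real.log 2 := by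
          rw [show (4 : ℝ) = 2 ^ 2 by norm_num, Real.log_pow]; norm_num
        rw [this]
        push_cast
        field_simp
        ring

lemma primesum (N : ℕ) :
    ∑ p ∈ Nat.primesLE (2 ^ (N + 1)), (1 : ℝ) / p ≤ 1 + 4 * H N := by
  induction N with
  | zero =>
    have : Nat.primesLE (2 ^ (0 + 1)) = {2} := by decide
    rw [this]
    simp [H]
    norm_num
  | succ N ih =>
    refine (primesum_step (N + 1) (by omega)).trans ?_
    have : H (N + 1) = H N + 1 / ((N + 1 : ℕ) : ℝ) := by
      rw [H, H, Finset.sum_Ioc_succ_top (by omega)]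
    rw [this]
    linarith

lemma primesum_ev (c : ℝ) (hc : 0 ≤ c) : ∀ᶠ L : ℝ in Filter.atTop, ∀ Y : ℕ,
    (Y : ℝ) ≤ Real.exp (13 * L) → c * ∑ p ∈ Nat.primesLE Y, (1 : ℝ) / p ≤ L := by
  have h1 : Filter.Tendsto (fun L : ℝ => Real.log (20 * L) / (20 * L)) Filter.atTop (nhds 0) := by
    have h := Real.isLittleO_log_id_atTop.tendsto_div_nhds_zero
    exact h.comp (Filter.tendsto_id.const_mul_atTop (by norm_num : (0 : ℝ) < 20))
  have h2 : ∀ᶠ L : ℝ in Filter.atTop, Real.log (20 * L) / (20 * L) < 1 / (160 * (c + 1)) :=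
    h1.eventually (gt_mem_nhds (by positivity))
  filter_upwards [h2, Filter.eventually_ge_atTop (1 : ℝ),
    Filter.eventually_ge_atTop (10 * c)] with L h3 h4 h5 Y hY
  set N := ⌊20 * L⌋₊ with hN
  have hNle : (N : ℝ) ≤ 20 * L := Nat.floor_le (by positivity)
  have hNlt : 20 * L < N + 1 := Nat.lt_floor_add_one _
  have hN1 : 1 ≤ N := Nat.le_floor (by push_cast; linarith)
  have hN0 : (0 : ℝ) < N := by exact_mod_cast hN1
  have hYN : Y ≤ 2 ^ (N + 1) := by
    have h6 : Real.exp (13 * L) ≤ (2 : ℝ) ^ (N + 1) := by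
      rw [← Real.exp_log (show (0 : ℝ) < 2 ^ (N + 1) by positivity), Real.log_pow]
      apply Real.exp_le_exp.mpr
      have := Real.log_two_gt_d9
      push_cast
      nlinarith
    exact_mod_cast hY.trans h6
  have h7 : ∑ p ∈ Nat.primesLE Y, (1 : ℝ) / p ≤ ∑ p ∈ Nat.primesLE (2 ^ (N + 1)), (1 : ℝ) / p := by
    apply Finset.sum_le_sum_of_subset_of_nonneg
    · intro p hp
      rw [Nat.mem_primesLE] at *
      exact ⟨hp.1.trans hYN, hp.2⟩
    · intros; positivity
  have h8 := primesum N
  have h9 := H_le N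
  have h10 : Real.log N ≤ Real.log (20 * L) := Real.log_le_log hN0 hNle
  have h11 : Real.log (20 * L) * (8 * (c + 1)) ≤ L := by
    rw [div_lt_div_iff₀ (by positivity) (by positivity)] at h3
    nlinarith
  have h12 : 0 ≤ Real.log (20 * L) := Real.log_nonneg (by linarith)
  calc c * ∑ p ∈ Nat.primesLE Y, (1 : ℝ) / p ≤ c * (5 + 4 * Real.log (20 * L)) := by
        gcongr
        linarith
    _ ≤ L := by nlinarith

lemma rankin (Y : ℕ) (σ M z : ℝ) (h0 : 0 < σ) (h1 : σ ≤ 1 / 2) (hM : (Y : ℝ) ^ σ ≤ M)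
    (hz : 0 < z) (s : Finset ℕ) (hs : ∀ d ∈ s, d ∈ Nat.smoothNumbers (Y + 1) ∧ z < d) :
    ∑ d ∈ s, (1 : ℝ) / d ≤
      z ^ (-σ) * Real.exp (4 * M * ∑ p ∈ Nat.primesLE Y, (1 : ℝ) / p) := by
  let f : ℕ →* ℝ :=
    { toFun := fun n => (n : ℝ) ^ (σ - 1)
      map_one' := by simp
      map_mul' := by
        intro a b
        push_cast
        exact Real.mul_rpow (Nat.cast_nonneg a) (Nat.cast_nonneg b) }
  have hf : ∀ n : ℕ, f n = (n : ℝ) ^ (σ - 1) := fun n => rfl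
  have hf0 : ∀ n : ℕ, 0 ≤ f n := fun n => by rw [hf]; positivity
  have hf34 : ∀ p : ℕ, p.Prime → f p ≤ 3 / 4 := by
    intro p hp
    have hp2 : (2 : ℝ) ≤ p := by exact_mod_cast hp.two_le
    rw [hf]
    calc (p : ℝ) ^ (σ - 1) ≤ (p : ℝ) ^ (-(1 / 2) : ℝ) :=
          Real.rpow_le_rpow_of_exponent_le (by linarith) (by linarith)
      _ ≤ (2 : ℝ) ^ (-(1 / 2) : ℝ) :=
          Real.rpow_le_rpow_of_nonpos (by norm_num) hp2 (by norm_num)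
      _ ≤ 3 / 4 := by
          rw [Real.rpow_neg (by norm_num), ← Real.sqrt_eq_rpow]
          rw [inv_le_comm₀ (by positivity) (by norm_num)]
          apply Real.le_sqrt_of_sq_le
          norm_num
  obtain ⟨hsum, hhs⟩ := EulerProduct.summable_and_hasSum_smoothNumbers_prod_primesBelow_geometric
    (f := f) (fun {p} hp => by
      rw [Real.norm_of_nonneg (hf0 p)]
      linarith [hf34 p hp]) (Y + 1)
  have hA : ∑ d ∈ s, f d ≤ ∏ p ∈ Nat.primesBelow (Y + 1), (1 - f p)⁻¹ := by
    have h2 : HasSum (fun m : ℕ => (Nat.smoothNumbers (Y + 1)).indicator f m)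
        (∏ p ∈ Nat.primesBelow (Y + 1), (1 - f p)⁻¹) :=
      hasSum_subtype_iff_indicator.mp hhs
    refine le_trans (le_of_eq ?_) (sum_le_hasSum s ?_ h2)
    · apply Finset.sum_congr rfl
      intro d hd
      rw [Set.indicator_of_mem (hs d hd).1]
    · intro i _
      exact Set.indicator_nonneg (fun a _ => hf0 a) i
  have hB : ∏ p ∈ Nat.primesBelow (Y + 1), (1 - f p)⁻¹ ≤
      Real.exp (4 * M * ∑ p ∈ Nat.primesLE Y, (1 : ℝ) / p) := by
    have hset : Nat.primesBelow (Y + 1) = Nat.primesLE Y := by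
      ext p
      rw [Nat.mem_primesBelow, Nat.mem_primesLE, Nat.lt_succ_iff]
    rw [hset, Finset.mul_sum, Real.exp_sum]
    apply Finset.prod_le_prod
    · intro p hp
      rw [Nat.mem_primesLE] at hp
      have := hf34 p hp.2
      exact inv_nonneg.mpr (by linarith)
    · intro p hp
      rw [Nat.mem_primesLE] at hp
      have h3 := hf34 p hp.2
      have h4 := hf0 p
      have hp0 : (0 : ℝ) < p := by exact_mod_cast hp.2.pos
      have h5 : f p ≤ M * (1 / p) := by
        rw [hf, Real.rpow_sub hp0, Real.rpow_one, div_eq_mul_one_div]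
        gcongr
        refine le_trans ?_ hM
        apply Real.rpow_le_rpow hp0.le _ h0.le
        exact_mod_cast hp.1
      have h6 : (1 - f p)⁻¹ ≤ 1 + 4 * f p := by
        rw [inv_le_iff_one_le_mul₀ (by linarith)]
        nlinarith
      have h7 := Real.add_one_le_exp (4 * M * (1 / (p : ℝ)))
      linarith
  calc ∑ d ∈ s, (1 : ℝ) / d ≤ ∑ d ∈ s, z ^ (-σ) * f d := by
        apply Finset.sum_le_sum
        intro d hd
        obtain ⟨h2, h3⟩ := hs d hd
        have hd0 : (0 : ℝ) < d := hz.trans h3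
        rw [hf, Real.rpow_sub hd0, Real.rpow_one, Real.rpow_neg hz.le, ← mul_div_assoc]
        gcongr
        rw [← div_eq_inv_mul, one_le_div (by positivity)]
        exact Real.rpow_le_rpow hz.le h3.le h0.le
    _ = z ^ (-σ) * ∑ d ∈ s, f d := by rw [Finset.mul_sum]
    _ ≤ _ := by
        gcongr
        exact hA.trans hB

end KP
namespace KP

/-- The bound outside the exceptional sets. -/
lemma final_ineq (x L : ℝ) (n B : ℕ) (lam : ℝ) (hlam : 0 < lam) (hx : 1 < x)
    (hL : L = Real.log (Real.log x)) (hL20 : 20 ≤ L) (hn : Real.sqrt x < n) (hnx : (n : ℝ) ≤ x)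
    (hB : (B : ℝ) ≤ Real.exp (11 * L)) (w : ℕ) (hw : (2 : ℝ) ^ w ≤ Real.exp (11 * L))
    (h : (n : ℝ) ≤ lam * (B : ℝ) ^ 2 * (2 * Real.exp (L ^ 2 / 32)) ^ w) :
    (n : ℝ) * Real.exp (-(Real.log (Real.log n)) ^ 3) < lam := by
  have hlx : 0 < Real.log x := Real.log_pos hx
  have hn0 : (0 : ℝ) < n := lt_of_le_of_lt (Real.sqrt_nonneg x) hn
  have h1 : Real.log x / 2 ≤ Real.log n := by
    rw [← Real.log_sqrt (by linarith)]
    exact Real.log_le_log (Real.sqrt_pos.mpr (by linarith)) hn.le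
  have h2 : L - 1 ≤ Real.log (Real.log n) := by
    have h3 := Real.log_le_log (by positivity) h1
    rw [Real.log_div hlx.ne' (by norm_num), ← hL] at h3
    have := Real.log_two_lt_d9
    linarith
  have h4 : (L - 1) ^ 3 ≤ (Real.log (Real.log n)) ^ 3 :=
    pow_le_pow_left₀ (by linarith) h2 3
  have hw16 : (w : ℝ) ≤ 16 * L := by
    have h5 := Real.log_le_log (by positivity) hw
    rw [Real.log_pow, Real.log_exp] at h5
    have := Real.log_two_gt_d9
    have hw0 : (0 : ℝ) ≤ w := Nat.cast_nonneg w
    nlinarith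
  have h6 : (2 * Real.exp (L ^ 2 / 32)) ^ w ≤ Real.exp (16 * L + L ^ 3 / 2) := by
    have h7 : 2 * Real.exp (L ^ 2 / 32) ≤ Real.exp (1 + L ^ 2 / 32) := by
      rw [Real.exp_add]
      gcongr
      have := Real.add_one_le_exp (1 : ℝ)
      linarith
    calc _ ≤ (Real.exp (1 + L ^ 2 / 32)) ^ w := by gcongr
      _ = Real.exp (w * (1 + L ^ 2 / 32)) := by rw [Real.exp_nat_mul]
      _ ≤ Real.exp (16 * L * (1 + L ^ 2 / 32)) := by gcongr
      _ = _ := by ring_nf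
  have h8 : (B : ℝ) ^ 2 ≤ Real.exp (22 * L) := by
    calc (B : ℝ) ^ 2 ≤ (Real.exp (11 * L)) ^ 2 := by gcongr
      _ = _ := by rw [← Real.exp_nat_mul]; push_cast; ring_nf
  have h9 : (n : ℝ) ≤ lam * Real.exp (38 * L + L ^ 3 / 2) := by
    refine h.trans ?_
    rw [mul_assoc, show 38 * L + L ^ 3 / 2 = 22 * L + (16 * L + L ^ 3 / 2) by ring, Real.exp_add]
    gcongr
  have h10 : 38 * L + L ^ 3 / 2 - Real.log (Real.log n) ^ 3 < 0 := by
    nlinarith [mul_nonneg (by linarith : 0 ≤ L - 20) (by linarith : (0:ℝ) ≤ L),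
      mul_nonneg (mul_nonneg (by linarith : 0 ≤ L - 20) (by linarith : (0:ℝ) ≤ L))
        (by linarith : (0:ℝ) ≤ L)]
  calc (n : ℝ) * Real.exp (-(Real.log (Real.log n)) ^ 3)
      ≤ lam * Real.exp (38 * L + L ^ 3 / 2) * Real.exp (-(Real.log (Real.log n)) ^ 3) := by gcongr
    _ = lam * Real.exp (38 * L + L ^ 3 / 2 - (Real.log (Real.log n)) ^ 3) := by
        rw [mul_assoc, ← Real.exp_add, sub_eq_add_neg]
    _ < lam * 1 := by
        gcongr
        rw [← Real.exp_zero]; exact Real.exp_lt_exp.mpr h10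
    _ = lam := mul_one _

lemma floor_inv (t : ℝ) (ht : 2 ≤ t) : (1 : ℝ) / (⌊t⌋₊ : ℝ) ≤ 2 / t := by
  have h1 := Nat.lt_floor_add_one t
  have h2 : (0 : ℝ) < ⌊t⌋₊ := by linarith
  rw [div_le_div_iff₀ h2 (by linarith)]
  have : (1 : ℝ) ≤ ⌊t⌋₊ := by exact_mod_cast (Nat.le_floor (by push_cast; linarith) : 1 ≤ ⌊t⌋₊)
  linarith

lemma main (x L : ℝ) (hx : 1 < x) (hL : L = Real.log (Real.log x)) (hL768 : 768 ≤ L)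
    (hroot : (Real.log x) ^ 10 ≤ Real.sqrt x)
    (hps : ∀ Y : ℕ, (Y : ℝ) ≤ Real.exp (13 * L) →
      (4 * Real.exp 4992) * ∑ p ∈ Nat.primesLE Y, (1 : ℝ) / p ≤ L) :
    (Nat.card {n : ℕ | 1 ≤ n ∧ (n : ℝ) ≤ x ∧
          (carmichael n : ℝ) ≤ (n : ℝ) * Real.exp (-(Real.log (Real.log n)) ^ 3)} : ℝ)
        ≤ 15 * x / (Real.log x) ^ 10 := by
  classical
  have hl0 : 0 < Real.log x := Real.log_pos hx
  set l := Real.log x with hl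
  have hlL : Real.exp L = l := by rw [hL, Real.exp_log hl0]
  have hl2 : 2 ≤ l := by
    rw [← hlL]; have := Real.add_one_le_exp L; linarith
  have hpow : ∀ k : ℕ, Real.exp (k * L) = l ^ k := by
    intro k; rw [Real.exp_nat_mul, hlL]
  have hp11 : Real.exp (11 * L) = l ^ 11 := by exact_mod_cast hpow 11
  have hp12 : Real.exp (12 * L) = l ^ 12 := by exact_mod_cast hpow 12
  have hp13 : Real.exp (13 * L) = l ^ 13 := by exact_mod_cast hpow 13
  set N := ⌊x⌋₊ with hN
  have hNx : (N : ℝ) ≤ x := Nat.floor_le (by linarith)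
  have hN1 : 1 ≤ N := Nat.le_floor (by push_cast; linarith)
  have hH : H N ≤ 2 * l := by
    have h1 := H_le N
    have h2 : Real.log N ≤ l := Real.log_le_log (by exact_mod_cast hN1) hNx
    linarith
  have hH0 := H_nonneg N
  set B := ⌊l ^ 11⌋₊ with hB
  set Y := ⌊l ^ 13⌋₊ with hY
  set z := Real.exp (L ^ 2 / 32) with hz
  have hz1 : 1 ≤ z := Real.one_le_exp (by positivity)
  have h11 : 2 ≤ l ^ 11 := hl2.trans (le_self_pow₀ (by linarith) (by norm_num))
  have h13 : 2 ≤ l ^ 13 := hl2.trans (le_self_pow₀ (by linarith) (by norm_num))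
  have hB0 : B ≠ 0 := by
    have : 1 ≤ B := Nat.le_floor (by push_cast; linarith)
    omega
  have hY0 : Y ≠ 0 := by
    have : 1 ≤ Y := Nat.le_floor (by push_cast; linarith)
    omega
  have hBle : (B : ℝ) ≤ l ^ 11 := Nat.floor_le (by positivity)
  have hYle : (Y : ℝ) ≤ l ^ 13 := Nat.floor_le (by positivity)
  -- exceptional sets
  set A0 : Finset ℕ := {n ∈ Finset.Ioc 0 N | (n : ℝ) ≤ Real.sqrt x} with hA0
  set A1 : Finset ℕ := {n ∈ Finset.Ioc 0 N | l ^ 11 < (2 : ℝ) ^ n.primeFactors.card} with hA1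
  set A2 : Finset ℕ := {n ∈ Finset.Ioc 0 N | ∃ p d : ℕ, p.Prime ∧ p ∣ n ∧ d ∣ p - 1 ∧
      d ∈ Nat.smoothNumbers (Y + 1) ∧ z < d} with hA2
  set A3 : Finset ℕ := {n ∈ Finset.Ioc 0 N | ∃ q p₁ p₂ : ℕ, Y < q ∧ p₁.Prime ∧ p₂.Prime ∧
      p₁ ≠ p₂ ∧ p₁ ∣ n ∧ p₂ ∣ n ∧ q ∣ p₁ - 1 ∧ q ∣ p₂ - 1} with hA3
  set A4 : Finset ℕ := {n ∈ Finset.Ioc 0 N | ∃ b : ℕ, B < b ∧ b ^ 2 ∣ n} with hA4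
  have c0 : (A0.card : ℝ) ≤ x / l ^ 10 := by
    have h1 : A0 ⊆ Finset.Ioc 0 ⌊Real.sqrt x⌋₊ := by
      intro n hn
      simp only [hA0, Finset.mem_filter, Finset.mem_Ioc] at hn
      rw [Finset.mem_Ioc]
      exact ⟨hn.1.1, Nat.le_floor hn.2⟩
    have h2 : (A0.card : ℝ) ≤ ⌊Real.sqrt x⌋₊ := by
      have := Finset.card_le_card h1
      rw [Nat.card_Ioc] at this
      exact_mod_cast this
    refine h2.trans ((Nat.floor_le (Real.sqrt_nonneg x)).trans ?_)
    rw [le_div_iff₀ (by positivity)]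
    calc Real.sqrt x * l ^ 10 ≤ Real.sqrt x * Real.sqrt x := by gcongr
      _ = x := Real.mul_self_sqrt (by linarith)
  have c1 : (A1.card : ℝ) ≤ 2 * (x / l ^ 10) := by
    have h1 := E1 N (l ^ 11) A1 (by
      intro n hn
      simp only [hA1, Finset.mem_filter, Finset.mem_Ioc] at hn
      exact ⟨hn.1.1, hn.1.2, hn.2⟩)
    have h2 : (N : ℝ) * H N ≤ x * (2 * l) := by gcongr
    have h3 : 2 * (x / l ^ 10) = x * (2 * l) / l ^ 11 := by field_simp
    rw [h3, le_div_iff₀ (by positivity)]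
    linarith
  have c4 : (A4.card : ℝ) ≤ 2 * (x / l ^ 10) := by
    have h1 := E4 N B hB0 A4 (by
      intro n hn
      simp only [hA4, Finset.mem_filter, Finset.mem_Ioc] at hn
      exact ⟨hn.1.1, hn.1.2, hn.2⟩)
    refine h1.trans ?_
    calc (N : ℝ) * (1 / B) ≤ x * (2 / l ^ 11) := by
          have hfl : (1 : ℝ) / (B : ℝ) ≤ 2 / l ^ 11 := floor_inv _ h11
          gcongr ?_ * ?_
      _ ≤ x * (2 / l ^ 10) := by
          gcongr
          · linarith
          · norm_num
      _ = _ := by ring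
  have c3 : (A3.card : ℝ) ≤ 8 * (x / l ^ 10) := by
    have h1 := E3 N Y hY0 A3 (by
      intro n hn
      simp only [hA3, Finset.mem_filter, Finset.mem_Ioc] at hn
      exact ⟨hn.1.1, hn.1.2, hn.2⟩)
    refine h1.trans ?_
    calc (N : ℝ) * (1 / Y) * H N ^ 2 ≤ x * (2 / l ^ 13) * (2 * l) ^ 2 := by
          have hfl : (1 : ℝ) / (Y : ℝ) ≤ 2 / l ^ 13 := floor_inv _ h13
          gcongr ?_ * ?_ * ?_ ^ 2
      _ = 8 * (x / l ^ 11) := by field_simp; ring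
      _ ≤ 8 * (x / l ^ 10) := by
          gcongr
          · linarith
          · norm_num
  have c2 : (A2.card : ℝ) ≤ 2 * (x / l ^ 10) := by
    have hL0 : 0 < L := by linarith
    have hM : (Y : ℝ) ^ (384 / L) ≤ Real.exp 4992 := by
      calc (Y : ℝ) ^ (384 / L) ≤ (Real.exp (13 * L)) ^ (384 / L) := by
            rw [hp13]
            gcongr
        _ = _ := by
            rw [← Real.exp_mul]
            congr 1
            field_simp
            norm_num
    have h1 := E2 N Y z (1 / l ^ 12 * l) A2 (by
      intro s hs
      refine (rankin Y (384 / L) (Real.exp 4992) z (by positivity) ?_ hM (by linarith) s hs).trans ?_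
      · rw [div_le_iff₀ hL0]; linarith
      · have h2 : z ^ (-(384 / L)) = 1 / l ^ 12 := by
          rw [hz, ← Real.exp_mul, ← hp12, one_div, ← Real.exp_neg]
          congr 1
          field_simp
          norm_num
        rw [h2]
        gcongr
        rw [← hlL]
        apply Real.exp_le_exp.mpr
        exact hps Y (by rw [hp13]; exact hYle)) (by
      intro n hn
      simp only [hA2, Finset.mem_filter, Finset.mem_Ioc] at hn
      exact ⟨hn.1.1, hn.1.2, hn.2⟩)
    refine h1.trans ?_
    calc (N : ℝ) * (1 / l ^ 12 * l) * H N ≤ x * (1 / l ^ 12 * l) * (2 * l) := by gcongr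
      _ = _ := by field_simp
  -- covering
  have hcov : {n : ℕ | 1 ≤ n ∧ (n : ℝ) ≤ x ∧
      (carmichael n : ℝ) ≤ (n : ℝ) * Real.exp (-(Real.log (Real.log n)) ^ 3)} ⊆
      ((A0 ∪ A1 ∪ A2 ∪ A3 ∪ A4 : Finset ℕ) : Set ℕ) := by
    rintro n ⟨hn1, hnx, hbad⟩
    have hnN : n ≤ N := Nat.le_floor hnx
    have hmem : n ∈ Finset.Ioc 0 N := Finset.mem_Ioc.mpr ⟨hn1, hnN⟩
    by_contra hcon
    rw [Finset.mem_coe] at hcon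
    simp only [Finset.mem_union, not_or] at hcon
    obtain ⟨⟨⟨⟨k0, k1⟩, k2⟩, k3⟩, k4⟩ := hcon
    simp only [hA0, hA1, hA2, hA3, hA4, Finset.mem_filter, hmem, true_and] at k0 k1 k2 k3 k4
    rw [not_le] at k0
    rw [not_lt] at k1
    have hn0 : n ≠ 0 := by omega
    have hd := determ n Y B z hz1 hn0
      (by
        intro p d hp hpn hdp hds
        by_contra hzd
        exact k2 ⟨p, d, hp, hpn, hdp, hds, not_le.mp hzd⟩)
      (by
        intro q p r h1 h2 h3 h4 h5 h6 h7 h8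
        exact k3 ⟨q, p, r, h1, h2, h3, h4, h5, h6, h7, h8⟩)
      (by
        intro b hb
        by_contra hbB
        exact k4 ⟨b, not_le.mp hbB, hb⟩)
    have := final_ineq x L n B (carmichael n) (by exact_mod_cast carmichael_pos hn0) hx hL
      (by linarith) k0 hnx (by rw [hp11]; exact hBle) n.primeFactors.card
      (by rw [hp11]; exact k1) hd
    linarith
  have hcard : (Nat.card {n : ℕ | 1 ≤ n ∧ (n : ℝ) ≤ x ∧
      (carmichael n : ℝ) ≤ (n : ℝ) * Real.exp (-(Real.log (Real.log n)) ^ 3)}) ≤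
      (A0 ∪ A1 ∪ A2 ∪ A3 ∪ A4).card := by
    rw [Nat.card_coe_set_eq, ← Set.ncard_coe_finset]
    exact Set.ncard_le_ncard hcov (Finset.finite_toSet _)
  have hun : (A0 ∪ A1 ∪ A2 ∪ A3 ∪ A4).card ≤
      A0.card + A1.card + A2.card + A3.card + A4.card := by
    have u1 := Finset.card_union_le (A0 ∪ A1 ∪ A2 ∪ A3) A4
    have u2 := Finset.card_union_le (A0 ∪ A1 ∪ A2) A3
    have u3 := Finset.card_union_le (A0 ∪ A1) A2
    have u4 := Finset.card_union_le A0 A1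
    omega
  have hfin : (Nat.card {n : ℕ | 1 ≤ n ∧ (n : ℝ) ≤ x ∧
      (carmichael n : ℝ) ≤ (n : ℝ) * Real.exp (-(Real.log (Real.log n)) ^ 3)} : ℝ) ≤
      A0.card + A1.card + A2.card + A3.card + A4.card := by
    exact_mod_cast hcard.trans hun
  rw [mul_div_assoc]
  linarith

end KP

/-- **Kurlberg–Pomerance.** For all large `x`, all but `O(x/(log x)^10)` of the
positive integers `n ≤ x` satisfy `λ(n) > n exp(-(log log n)³)`. -/
theorem stmt_17 :
    ∃ C : ℝ, 0 < C ∧ ∃ x₀ : ℝ, ∀ x : ℝ, x₀ ≤ x →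
      (Nat.card {n : ℕ | 1 ≤ n ∧ (n : ℝ) ≤ x ∧
          (carmichael n : ℝ) ≤ (n : ℝ) * Real.exp (-(Real.log (Real.log n)) ^ 3)} : ℝ)
        ≤ C * x / (Real.log x) ^ 10 := by
  have hLt : Filter.Tendsto (fun x : ℝ => Real.log (Real.log x)) Filter.atTop Filter.atTop :=
    Real.tendsto_log_atTop.comp Real.tendsto_log_atTop
  have h1 := hLt.eventually (KP.primesum_ev (4 * Real.exp 4992) (by positivity))
  have h2 := hLt.eventually (Filter.eventually_ge_atTop (768 : ℝ))
  have h3 : ∀ᶠ x : ℝ in Filter.atTop, (Real.log x) ^ 10 ≤ Real.sqrt x := by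
    have h := (isLittleO_log_rpow_rpow_atTop (10 : ℝ) (by norm_num : (0 : ℝ) < 1 / 2)).bound
      (by norm_num : (0 : ℝ) < 1)
    filter_upwards [h, Filter.eventually_ge_atTop (1 : ℝ)] with x hx hx1
    have hl : 0 ≤ Real.log x := Real.log_nonneg hx1
    rw [one_mul, Real.norm_of_nonneg (by positivity), Real.norm_of_nonneg (by positivity),
      ← Real.sqrt_eq_rpow] at hx
    exact_mod_cast hx
  obtain ⟨x₀, hx₀⟩ := Filter.eventually_atTop.mp
    (h1.and (h2.and (h3.and (Filter.eventually_gt_atTop (1 : ℝ)))))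
  refine ⟨15, by norm_num, x₀, fun x hx => ?_⟩
  obtain ⟨a, b, c, d⟩ := hx₀ x hx
  exact KP.main x _ d rfl b c a
end
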